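/- arXiv:0908.4024 — 2 statements merged into one kernel-verified Lean document; each statement's English description precedes it below -/
import Mathlib

section
/- Let d and n be integers with d > n ≥ 1, let K ⊆ ℂ be a number field, and let f_1, …, f_d be entire functions on ℂ^n which are algebraically independent over K and have finite order of growth. Assume that for each 1 ≤ ν ≤ n and 1 ≤ i ≤ d there is a polynomial P_{ν,i} ∈ K[X_1, …, X_d] such that (∂/∂z_ν) f_i = P_{ν,i}(f_1, …, f_d) identically on ℂ^n. Then there exists a nonzero polynomial Q ∈ ℂ[X_1, …, X_n] such that every point w ∈ ℂ^n for which f_i(w) ∈ K for all 1 ≤ i ≤ d satisfies Q(w) = 0; that is, the set of such points is contained in an algebraic hypersurface. -/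
/-- `|f|_R`: supremum of `|f z|` over the polydisc `max_i |z_i| ≤ R`. -/
noncomputable def PolydiscSup (n : ℕ) (f : (Fin n → ℂ) → ℂ) (R : ℝ) : ℝ :=
  sSup ((fun z => ‖f z‖) '' {z : Fin n → ℂ | ∀ i, ‖z i‖ ≤ R})

/-- `f : ℂ^n → ℂ` has finite order of growth. -/
def HasFiniteOrderGrowthN (n : ℕ) (f : (Fin n → ℂ) → ℂ) : Prop :=
  ∃ ρ : ℝ, 0 ≤ ρ ∧ ∀ ε > (0 : ℝ), ∃ R₀ : ℝ, ∀ R ≥ R₀,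
    PolydiscSup n f R ≤ Real.exp (R ^ (ρ + ε))

namespace Bombieri

open MvPolynomial

section CoeffNorm

variable {σ : Type*}

/-- The weighted `ℓ¹` norm `∑ |c_α| r ^ |α|` of a polynomial `∑ c_α X ^ α`. -/
noncomputable def coeffNorm (r : ℝ) (P : MvPolynomial σ ℂ) : ℝ :=
  ∑ a ∈ P.support, ‖coeff a P‖ * r ^ a.degree

theorem coeffNorm_eq_sum_of_subset {r : ℝ} {P : MvPolynomial σ ℂ} {s : Finset (σ →₀ ℕ)}
    (hs : P.support ⊆ s) : coeffNorm r P = ∑ a ∈ s, ‖coeff a P‖ * r ^ a.degree := by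
  refine Finset.sum_subset hs fun a _ ha => ?_
  rw [notMem_support_iff.1 ha]; simp

theorem coeffNorm_nonneg {r : ℝ} (hr : 0 ≤ r) (P : MvPolynomial σ ℂ) : 0 ≤ coeffNorm r P :=
  Finset.sum_nonneg fun _ _ => by positivity

@[simp] theorem coeffNorm_zero (r : ℝ) : coeffNorm r (0 : MvPolynomial σ ℂ) = 0 := by
  simp [coeffNorm]

theorem coeffNorm_monomial (r : ℝ) (a : σ →₀ ℕ) (c : ℂ) :
    coeffNorm r (monomial a c) = ‖c‖ * r ^ a.degree := by
  classical
  rw [coeffNorm_eq_sum_of_subset (support_monomial_subset (s := a) (a := c))]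
  simp

theorem coeffNorm_C (r : ℝ) (c : ℂ) : coeffNorm r (C c : MvPolynomial σ ℂ) = ‖c‖ := by
  rw [C_apply, coeffNorm_monomial]; simp

theorem coeffNorm_X (r : ℝ) (i : σ) : coeffNorm r (X i : MvPolynomial σ ℂ) = r := by
  rw [X, coeffNorm_monomial]; simp

theorem coeffNorm_add_le {r : ℝ} (hr : 0 ≤ r) (P Q : MvPolynomial σ ℂ) :
    coeffNorm r (P + Q) ≤ coeffNorm r P + coeffNorm r Q := by
  classical
  rw [coeffNorm_eq_sum_of_subset (support_add (p := P) (q := Q)),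
    coeffNorm_eq_sum_of_subset (Finset.subset_union_left (s₁ := P.support) (s₂ := Q.support)),
    coeffNorm_eq_sum_of_subset (Finset.subset_union_right (s₁ := P.support) (s₂ := Q.support)),
    ← Finset.sum_add_distrib]
  refine Finset.sum_le_sum fun a _ => ?_
  rw [← add_mul, coeff_add]
  gcongr
  exact norm_add_le _ _

theorem coeffNorm_sum_le {r : ℝ} (hr : 0 ≤ r) {ι : Type*} (s : Finset ι)
    (P : ι → MvPolynomial σ ℂ) :
    coeffNorm r (∑ i ∈ s, P i) ≤ ∑ i ∈ s, coeffNorm r (P i) := by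
  classical
  induction s using Finset.induction_on with
  | empty => simp
  | insert i s hi ih =>
    rw [Finset.sum_insert hi, Finset.sum_insert hi]
    exact (coeffNorm_add_le hr _ _).trans (by gcongr)

theorem coeffNorm_smul (r : ℝ) (c : ℂ) (P : MvPolynomial σ ℂ) :
    coeffNorm r (c • P) = ‖c‖ * coeffNorm r P := by
  rw [coeffNorm_eq_sum_of_subset (support_smul (a := c) (f := P)), coeffNorm, Finset.mul_sum]
  simp [mul_assoc]

theorem coeffNorm_neg (r : ℝ) (P : MvPolynomial σ ℂ) : coeffNorm r (-P) = coeffNorm r P := by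
  have := coeffNorm_smul r (-1) P
  simpa using this

theorem coeffNorm_sub_le {r : ℝ} (hr : 0 ≤ r) (P Q : MvPolynomial σ ℂ) :
    coeffNorm r (P - Q) ≤ coeffNorm r P + coeffNorm r Q := by
  rw [sub_eq_add_neg]
  exact (coeffNorm_add_le hr _ _).trans (by rw [coeffNorm_neg])

/-- A linear map bounded on monomials is bounded for the coefficient norms. -/
theorem coeffNorm_linearMap_le {τ : Type*} {r r' B : ℝ} (hr' : 0 ≤ r')
    (T : MvPolynomial σ ℂ →ₗ[ℂ] MvPolynomial τ ℂ) (P : MvPolynomial σ ℂ)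
    (hT : ∀ a ∈ P.support, coeffNorm r' (T (monomial a 1)) ≤ B * r ^ a.degree) :
    coeffNorm r' (T P) ≤ B * coeffNorm r P := by
  have hP : T P = ∑ a ∈ P.support, coeff a P • T (monomial a 1) := by
    conv_lhs => rw [P.as_sum, map_sum]
    refine Finset.sum_congr rfl fun a _ => ?_
    rw [← map_smul, smul_monomial, smul_eq_mul, mul_one]
  rw [hP, show B * coeffNorm r P = ∑ a ∈ P.support, B * (‖coeff a P‖ * r ^ a.degree) from
    Finset.mul_sum ..]
  refine (coeffNorm_sum_le hr' _ _).trans (Finset.sum_le_sum fun a ha => ?_)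
  rw [coeffNorm_smul]
  calc _ ≤ ‖coeff a P‖ * (B * r ^ a.degree) := by gcongr; exact hT a ha
    _ = _ := by ring

theorem coeffNorm_monomial_mul (r : ℝ) (a : σ →₀ ℕ) (P : MvPolynomial σ ℂ) :
    coeffNorm r (monomial a 1 * P) = r ^ a.degree * coeffNorm r P := by
  classical
  have : (monomial a (1 : ℂ) * P).support ⊆ P.support.image (a + ·) := by
    intro b hb
    have := support_mul _ _ hb
    obtain ⟨c, hc, e, he, rfl⟩ := Finset.mem_add.1 this
    have := support_monomial_subset hc
    simp only [Finset.mem_singleton] at this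
    subst this
    exact Finset.mem_image_of_mem _ he
  rw [coeffNorm_eq_sum_of_subset this, Finset.sum_image (fun _ _ _ _ h => add_left_cancel h),
    coeffNorm, Finset.mul_sum]
  refine Finset.sum_congr rfl fun b _ => ?_
  rw [coeff_monomial_mul, map_add, pow_add, one_mul]; ring

theorem coeffNorm_mul_le {r : ℝ} (hr : 0 ≤ r) (P Q : MvPolynomial σ ℂ) :
    coeffNorm r (P * Q) ≤ coeffNorm r P * coeffNorm r Q := by
  have := coeffNorm_linearMap_le (r := r) (B := coeffNorm r Q) hr
    (LinearMap.mulRight ℂ Q) P (fun a _ => by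
      rw [LinearMap.mulRight_apply, coeffNorm_monomial_mul, mul_comm])
  rw [mul_comm (coeffNorm r P)]
  simpa using this

theorem coeffNorm_pow_le {r : ℝ} (hr : 0 ≤ r) (P : MvPolynomial σ ℂ) (k : ℕ) :
    coeffNorm r (P ^ k) ≤ coeffNorm r P ^ k := by
  induction k with
  | zero =>
    rw [pow_zero, pow_zero, ← C_1, coeffNorm_C]; simp
  | succ k ih =>
    rw [pow_succ, pow_succ]
    exact (coeffNorm_mul_le hr _ _).trans
      (mul_le_mul_of_nonneg_right ih (coeffNorm_nonneg hr _))

theorem coeffNorm_prod_le {r : ℝ} (hr : 0 ≤ r) {ι : Type*} (s : Finset ι)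
    (P : ι → MvPolynomial σ ℂ) :
    coeffNorm r (∏ i ∈ s, P i) ≤ ∏ i ∈ s, coeffNorm r (P i) := by
  classical
  induction s using Finset.induction_on with
  | empty => rw [Finset.prod_empty, Finset.prod_empty, ← C_1, coeffNorm_C]; simp
  | insert i s hi ih =>
    rw [Finset.prod_insert hi, Finset.prod_insert hi]
    exact (coeffNorm_mul_le hr _ _).trans
      (mul_le_mul_of_nonneg_left ih (coeffNorm_nonneg hr _))

theorem degree_le_totalDegree {P : MvPolynomial σ ℂ} {a : σ →₀ ℕ} (ha : a ∈ P.support) :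
    a.degree ≤ P.totalDegree := by
  simpa [Finsupp.degree_apply, Finsupp.sum] using le_totalDegree ha

theorem coeffNorm_le_pow_mul {r : ℝ} (hr : 1 ≤ r) {P : MvPolynomial σ ℂ} {D : ℕ}
    (hD : P.totalDegree ≤ D) : coeffNorm r P ≤ r ^ D * coeffNorm 1 P := by
  rw [coeffNorm, coeffNorm, Finset.mul_sum]
  refine Finset.sum_le_sum fun a ha => ?_
  rw [one_pow, mul_one, mul_comm]
  gcongr
  exact (degree_le_totalDegree ha).trans hD

theorem norm_eval_le_coeffNorm {r : ℝ} {z : σ → ℂ} (hz : ∀ i, ‖z i‖ ≤ r)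
    (P : MvPolynomial σ ℂ) : ‖eval z P‖ ≤ coeffNorm r P := by
  rw [eval_eq, coeffNorm]
  refine (norm_sum_le _ _).trans (Finset.sum_le_sum fun a _ => ?_)
  rw [norm_mul, norm_prod, Finsupp.degree_apply, ← Finset.prod_pow_eq_pow_sum]
  gcongr with i _
  rw [norm_pow]
  gcongr
  exact hz i

theorem coeffNorm_pderiv_le {P : MvPolynomial σ ℂ} {D : ℕ} (hD : P.totalDegree ≤ D) (i : σ) :
    coeffNorm 1 (pderiv i P) ≤ D * coeffNorm 1 P := by
  refine coeffNorm_linearMap_le (r := 1) zero_le_one (pderiv i).toLinearMap P fun a ha => ?_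
  have h1 : a i ≤ D :=
    (Finsupp.le_degree i a).trans ((degree_le_totalDegree ha).trans hD)
  simp only [Derivation.coeFn_coe, pderiv_monomial, coeffNorm_monomial, one_pow, mul_one, one_mul]
  simpa using h1

theorem totalDegree_pderiv_le {R : Type*} [CommSemiring R] (P : MvPolynomial σ R) (i : σ) :
    (pderiv i P).totalDegree ≤ P.totalDegree := by
  classical
  conv_lhs => rw [P.as_sum, map_sum]
  refine totalDegree_finsetSum_le fun a ha => ?_
  rw [pderiv_monomial]
  refine (totalDegree_monomial_le _ _).trans ?_
  refine le_trans ?_ (le_totalDegree ha)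
  exact Finsupp.degree_mono (tsub_le_self)

end CoeffNorm

end Bombieri

namespace Bombieri

open MvPolynomial

section Division

variable {n : ℕ} {m : ℕ} {q : Fin n → MvPolynomial (Fin n) ℂ}

/-- All monomials of `P` have degree `< D`. -/
def DegreeLT (D : ℕ) (P : MvPolynomial (Fin n) ℂ) : Prop :=
  ∀ a : Fin n →₀ ℕ, D ≤ a.degree → coeff a P = 0

theorem DegreeLT.add {D : ℕ} {P Q : MvPolynomial (Fin n) ℂ} (hP : DegreeLT D P)
    (hQ : DegreeLT D Q) : DegreeLT D (P + Q) := fun a ha => by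
  rw [coeff_add, hP a ha, hQ a ha, add_zero]

theorem DegreeLT.neg {D : ℕ} {P : MvPolynomial (Fin n) ℂ} (hP : DegreeLT D P) :
    DegreeLT D (-P) := fun a ha => by
  rw [coeff_neg, hP a ha, neg_zero]

theorem DegreeLT.sub {D : ℕ} {P Q : MvPolynomial (Fin n) ℂ} (hP : DegreeLT D P)
    (hQ : DegreeLT D Q) : DegreeLT D (P - Q) := fun a ha => by
  rw [coeff_sub, hP a ha, hQ a ha, sub_zero]

theorem DegreeLT.smul {D : ℕ} {P : MvPolynomial (Fin n) ℂ} (hP : DegreeLT D P) (c : ℂ) :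
    DegreeLT D (c • P) := fun a ha => by
  rw [coeff_smul, hP a ha, smul_zero]

theorem DegreeLT.sum {D : ℕ} {ι : Type*} {s : Finset ι} {P : ι → MvPolynomial (Fin n) ℂ}
    (hP : ∀ i ∈ s, DegreeLT D (P i)) : DegreeLT D (∑ i ∈ s, P i) := fun a ha => by
  rw [coeff_sum]
  exact Finset.sum_eq_zero fun i hi => hP i hi a ha

theorem DegreeLT.mono {D D' : ℕ} (h : D ≤ D') {P : MvPolynomial (Fin n) ℂ}
    (hP : DegreeLT D P) : DegreeLT D' P := fun a ha => hP a (h.trans ha)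

theorem DegreeLT.of_totalDegree_lt {D : ℕ} {P : MvPolynomial (Fin n) ℂ}
    (h : P.totalDegree < D) : DegreeLT D P := fun a ha => by
  by_contra hne
  have := degree_le_totalDegree (mem_support_iff.2 hne)
  omega

theorem DegreeLT.mul_totalDegree_le {D e : ℕ} {P Q : MvPolynomial (Fin n) ℂ}
    (hP : DegreeLT D P) (hQ : Q.totalDegree ≤ e) : DegreeLT (D + e) (P * Q) := by
  classical
  intro a ha
  rw [coeff_mul]
  refine Finset.sum_eq_zero fun x hx => ?_
  rw [Finset.HasAntidiagonal.mem_antidiagonal] at hx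
  by_cases hD : D ≤ x.1.degree
  · rw [hP _ hD, zero_mul]
  · have : coeff x.2 Q = 0 := by
      by_contra hne
      have h1 := degree_le_totalDegree (mem_support_iff.2 hne)
      rw [← hx, map_add] at ha
      omega
    rw [this, mul_zero]

/-- Products of polynomials with prescribed leading forms. -/
theorem DegreeLT.mul_sub_mul {d e : ℕ} {P P' Q Q' : MvPolynomial (Fin n) ℂ}
    (hP : DegreeLT d (P - P')) (hP' : P'.totalDegree ≤ d)
    (hQ : DegreeLT e (Q - Q')) (hQd : Q.totalDegree ≤ e) :
    DegreeLT (d + e) (P * Q - P' * Q') := by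
  have : P * Q - P' * Q' = (P - P') * Q + (Q - Q') * P' := by ring
  rw [this]
  exact (hP.mul_totalDegree_le hQd).add (add_comm e d ▸ hQ.mul_totalDegree_le hP')

theorem totalDegree_monic_le (hq : ∀ i, (q i).totalDegree < m) (i : Fin n) :
    (X i ^ m - q i).totalDegree ≤ m := by
  refine (totalDegree_sub _ _).trans (max_le ?_ (hq i).le)
  simp [totalDegree_X_pow]

theorem degreeLT_monic_pow (hq : ∀ i, (q i).totalDegree < m) (i : Fin n) (j : ℕ) :
    DegreeLT (m * j) ((X i ^ m - q i) ^ j - X i ^ (m * j)) := by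
  induction j with
  | zero => simp [DegreeLT]
  | succ j ih =>
    rw [mul_add, mul_one, pow_succ, pow_add]
    refine ih.mul_sub_mul (by simp [totalDegree_X_pow]) ?_ (totalDegree_monic_le hq i)
    have : X i ^ m - q i - X i ^ m = -(q i) := by ring
    rw [this]
    exact (DegreeLT.of_totalDegree_lt (hq i)).neg

/-- The product `∏ X_i ^ (α_i mod m) h_i ^ (α_i / m)` with `h_i = X_i ^ m - q_i`. -/
noncomputable def digitProd (m : ℕ) (q : Fin n → MvPolynomial (Fin n) ℂ) (a : Fin n →₀ ℕ) :
    MvPolynomial (Fin n) ℂ :=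
  ∏ i, (X i ^ (a i % m) * (X i ^ m - q i) ^ (a i / m))

theorem totalDegree_digit_le (hq : ∀ i, (q i).totalDegree < m) (i : Fin n) (j : ℕ) :
    (X i ^ (j % m) * (X i ^ m - q i) ^ (j / m)).totalDegree ≤ j := by
  refine (totalDegree_mul _ _).trans ?_
  have h1 : ((X i : MvPolynomial (Fin n) ℂ) ^ (j % m)).totalDegree ≤ j % m := by
    simp [totalDegree_X_pow]
  have h2 : ((X i ^ m - q i) ^ (j / m)).totalDegree ≤ (j / m) * m :=
    (totalDegree_pow _ _).trans (Nat.mul_le_mul_left _ (totalDegree_monic_le hq i))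
  have := Nat.mod_add_div' j m
  omega

theorem degreeLT_digitProd (hq : ∀ i, (q i).totalDegree < m) (a : Fin n →₀ ℕ) :
    DegreeLT a.degree (digitProd m q a - monomial a 1) := by
  classical
  have key : ∀ s : Finset (Fin n), DegreeLT (∑ i ∈ s, a i)
      ((∏ i ∈ s, (X i ^ (a i % m) * (X i ^ m - q i) ^ (a i / m))) -
        ∏ i ∈ s, X i ^ (a i)) := by
    intro s
    induction s using Finset.induction_on with
    | empty => simp [DegreeLT]
    | insert i s hi ih =>
      rw [Finset.prod_insert hi, Finset.prod_insert hi, Finset.sum_insert hi]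
      refine DegreeLT.mul_sub_mul ?_ (by simp [totalDegree_X_pow]) ih ?_
      · have h1 := Nat.mod_add_div (a i) m
        have h2 : (X i : MvPolynomial (Fin n) ℂ) ^ (a i) =
            X i ^ (a i % m) * X i ^ (m * (a i / m)) := by rw [← pow_add, h1]
        rw [h2, ← mul_sub, mul_comm]
        have := (degreeLT_monic_pow hq i (a i / m)).mul_totalDegree_le
          (Q := X i ^ (a i % m)) (e := a i % m) (by simp [totalDegree_X_pow])
        rwa [add_comm, h1] at this
      · exact (totalDegree_finsetProd _ _).trans
          (Finset.sum_le_sum fun i _ => totalDegree_digit_le hq i _)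
  have := key Finset.univ
  rw [Finsupp.degree_eq_sum, digitProd]
  rwa [monomial_eq, C_1, one_mul, Finsupp.prod_fintype _ _ (by simp)]

/-- The linear endomorphism replacing `X ^ (b + m a)`, `b_i < m`, by `X ^ b h ^ a`. -/
noncomputable def digitMap (m : ℕ) (q : Fin n → MvPolynomial (Fin n) ℂ) :
    MvPolynomial (Fin n) ℂ →ₗ[ℂ] MvPolynomial (Fin n) ℂ :=
  (basisMonomials (Fin n) ℂ).constr ℂ (digitProd m q)

theorem digitMap_monomial (a : Fin n →₀ ℕ) :
    digitMap m q (monomial a 1) = digitProd m q a := by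
  have := (basisMonomials (Fin n) ℂ).constr_basis ℂ (digitProd m q) a
  simpa [digitMap] using this

theorem linearMap_apply_eq_sum {M : Type*} [AddCommGroup M] [Module ℂ M]
    (T : MvPolynomial (Fin n) ℂ →ₗ[ℂ] M) (P : MvPolynomial (Fin n) ℂ) :
    T P = ∑ a ∈ P.support, coeff a P • T (monomial a 1) := by
  conv_lhs => rw [P.as_sum, map_sum]
  refine Finset.sum_congr rfl fun a _ => ?_
  rw [← map_smul, smul_monomial, smul_eq_mul, mul_one]

theorem degreeLT_digitMap_sub (hq : ∀ i, (q i).totalDegree < m) {D : ℕ}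
    {P : MvPolynomial (Fin n) ℂ} (hP : DegreeLT (D + 1) P) :
    DegreeLT D (digitMap m q P - P) := by
  have : digitMap m q P - P =
      (digitMap m q - LinearMap.id : MvPolynomial (Fin n) ℂ →ₗ[ℂ] MvPolynomial (Fin n) ℂ) P := rfl
  rw [this, linearMap_apply_eq_sum]
  refine DegreeLT.sum fun a ha => DegreeLT.smul ?_ _
  rw [LinearMap.sub_apply, digitMap_monomial]
  refine (degreeLT_digitProd hq a).mono ?_
  by_contra h
  exact mem_support_iff.1 ha (hP a (by omega))

theorem digitMap_surjOn (hq : ∀ i, (q i).totalDegree < m) (D : ℕ) :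
    ∀ P : MvPolynomial (Fin n) ℂ, DegreeLT D P → ∃ Q, DegreeLT D Q ∧ digitMap m q Q = P := by
  induction D with
  | zero =>
    intro P hP
    exact ⟨0, fun a _ => by simp, by ext a; simp [hP a (Nat.zero_le _)]⟩
  | succ D ih =>
    intro P hP
    obtain ⟨Q, hQ, hQP⟩ := ih _ (degreeLT_digitMap_sub hq hP)
    exact ⟨P - Q, hP.sub (hQ.mono D.le_succ), by rw [map_sub, hQP]; ring⟩

theorem digitMap_bijective (hq : ∀ i, (q i).totalDegree < m) :
    Function.Bijective (digitMap m q) := by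
  constructor
  · rw [injective_iff_map_eq_zero]
    intro P hP
    have : ∀ D, DegreeLT D P → P = 0 := by
      intro D
      induction D with
      | zero => intro h; ext a; simp [h a (Nat.zero_le _)]
      | succ D ih =>
        intro h
        have h1 := degreeLT_digitMap_sub hq h
        rw [hP, zero_sub] at h1
        exact ih (by simpa using h1.neg)
    exact this _ (DegreeLT.of_totalDegree_lt (Nat.lt_succ_self _))
  · intro P
    obtain ⟨Q, -, h⟩ := digitMap_surjOn hq _ P (DegreeLT.of_totalDegree_lt (Nat.lt_succ_self _))
    exact ⟨Q, h⟩

/-- `digitMap` as a linear equivalence. -/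
noncomputable def digitEquiv (hq : ∀ i, (q i).totalDegree < m) :
    MvPolynomial (Fin n) ℂ ≃ₗ[ℂ] MvPolynomial (Fin n) ℂ :=
  LinearEquiv.ofBijective (digitMap m q) (digitMap_bijective hq)

theorem digitEquiv_monomial (hq : ∀ i, (q i).totalDegree < m) (a : Fin n →₀ ℕ) :
    digitEquiv hq (monomial a 1) = digitProd m q a := digitMap_monomial a

theorem degreeLT_digitEquiv_symm (hq : ∀ i, (q i).totalDegree < m) {D : ℕ}
    {P : MvPolynomial (Fin n) ℂ} (hP : DegreeLT D P) : DegreeLT D ((digitEquiv hq).symm P) := by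
  obtain ⟨Q, hQ, h⟩ := digitMap_surjOn hq D P hP
  have : (digitEquiv hq).symm P = Q := by
    rw [LinearEquiv.symm_apply_eq]; exact h.symm
  rwa [this]

theorem digitProd_add (hm : 0 < m) (a b : Fin n →₀ ℕ) :
    digitProd m q (m • a + b) = (∏ i, (X i ^ m - q i) ^ a i) * digitProd m q b := by
  rw [digitProd, digitProd, ← Finset.prod_mul_distrib]
  refine Finset.prod_congr rfl fun i _ => ?_
  have h1 : (m • a + b) i % m = b i % m := by simp
  have h2 : (m • a + b) i / m = a i + b i / m := by
    simp [Nat.add_div_of_dvd_right, hm]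
  rw [h1, h2, pow_add]; ring

theorem digitEquiv_monomial_mul (hm : 0 < m) (hq : ∀ i, (q i).totalDegree < m)
    (a : Fin n →₀ ℕ) (P : MvPolynomial (Fin n) ℂ) :
    digitEquiv hq (monomial (m • a) 1 * P) =
      (∏ i, (X i ^ m - q i) ^ a i) * digitEquiv hq P := by
  have : (digitEquiv hq).toLinearMap ∘ₗ LinearMap.mulLeft ℂ (monomial (m • a) 1) =
      LinearMap.mulLeft ℂ (∏ i, (X i ^ m - q i) ^ a i) ∘ₗ (digitEquiv hq).toLinearMap := by
    refine (basisMonomials (Fin n) ℂ).ext fun b => ?_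
    simp only [coe_basisMonomials, LinearMap.comp_apply, LinearMap.mulLeft_apply,
      LinearEquiv.coe_coe, monomial_mul, mul_one, digitEquiv_monomial, digitProd_add hm]
  exact LinearMap.congr_fun this P

theorem digitEquiv_symm_mul (hm : 0 < m) (hq : ∀ i, (q i).totalDegree < m)
    (a : Fin n →₀ ℕ) (P : MvPolynomial (Fin n) ℂ) :
    (digitEquiv hq).symm ((∏ i, (X i ^ m - q i) ^ a i) * P) =
      monomial (m • a) 1 * (digitEquiv hq).symm P := by
  rw [LinearEquiv.symm_apply_eq, digitEquiv_monomial_mul hm, LinearEquiv.apply_symm_apply]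

end Division

end Bombieri

namespace Bombieri

open MvPolynomial

section Projection

variable {n : ℕ} {m : ℕ} {q : Fin n → MvPolynomial (Fin n) ℂ}

/-- The projection onto the monomials `X ^ a` with `∑ a_i / m < k`. -/
noncomputable def digitTrunc (n m k : ℕ) : MvPolynomial (Fin n) ℂ →ₗ[ℂ] MvPolynomial (Fin n) ℂ :=
  (basisMonomials (Fin n) ℂ).constr ℂ
    fun a => if ∑ i, a i / m < k then monomial a 1 else 0

theorem digitTrunc_monomial (k : ℕ) (a : Fin n →₀ ℕ) :
    digitTrunc n m k (monomial a 1) = if ∑ i, a i / m < k then monomial a 1 else 0 := by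
  have := (basisMonomials (Fin n) ℂ).constr_basis ℂ
    (fun a => if ∑ i, a i / m < k then monomial a (1 : ℂ) else 0) a
  simpa [digitTrunc] using this

theorem coeff_digitTrunc (k : ℕ) (a : Fin n →₀ ℕ) (P : MvPolynomial (Fin n) ℂ) :
    coeff a (digitTrunc n m k P) = if ∑ i, a i / m < k then coeff a P else 0 := by
  classical
  have : lcoeff ℂ a ∘ₗ digitTrunc n m k =
      (if ∑ i, a i / m < k then (1 : ℂ) else 0) • lcoeff ℂ a := by
    refine (basisMonomials (Fin n) ℂ).ext fun b => ?_
    simp only [coe_basisMonomials, LinearMap.comp_apply, digitTrunc_monomial, lcoeff_apply,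
      LinearMap.smul_apply]
    by_cases h : b = a
    · subst h; split_ifs <;> simp
    · split_ifs <;> simp [coeff_monomial, h]
  have := LinearMap.congr_fun this P
  rw [LinearMap.smul_apply, LinearMap.comp_apply, lcoeff_apply, lcoeff_apply] at this
  simpa using this

theorem coeffNorm_digitTrunc_le {r : ℝ} (hr : 0 ≤ r) (k : ℕ) (P : MvPolynomial (Fin n) ℂ) :
    coeffNorm r (digitTrunc n m k P) ≤ coeffNorm r P := by
  have := coeffNorm_linearMap_le (r := r) (B := 1) hr (digitTrunc n m k) P fun a _ => by
    rw [digitTrunc_monomial, one_mul]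
    split_ifs
    · rw [coeffNorm_monomial]; simp
    · rw [coeffNorm_zero]; positivity
  simpa using this

theorem exists_coeffNorm_digitEquiv_le (hm : 0 < m) (hq : ∀ i, (q i).totalDegree < m)
    {r : ℝ} (hr : 1 ≤ r) : ∃ B ≥ r, ∀ P, coeffNorm r (digitEquiv hq P) ≤ coeffNorm B P := by
  have hr0 : 0 ≤ r := zero_le_one.trans hr
  have hnn : ∀ i, 0 ≤ coeffNorm r (X i ^ m - q i) := fun i => coeffNorm_nonneg hr0 _
  set B : ℝ := r + ∑ i, coeffNorm r (X i ^ m - q i) with hB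
  have hBi : ∀ i, coeffNorm r (X i ^ m - q i) ≤ B := fun i => by
    have := Finset.single_le_sum (f := fun i => coeffNorm r (X i ^ m - q i))
      (fun i _ => hnn i) (Finset.mem_univ i)
    linarith
  have hrB : r ≤ B := by
    have := Finset.sum_nonneg fun i (_ : i ∈ Finset.univ) => hnn i
    linarith
  have hB1 : 1 ≤ B := hr.trans hrB
  refine ⟨B, hrB, fun P => ?_⟩
  have := coeffNorm_linearMap_le (r := B) (B := 1) hr0 (digitEquiv hq).toLinearMap P fun a _ => by
    rw [LinearEquiv.coe_coe, digitEquiv_monomial, one_mul, digitProd, Finsupp.degree_eq_sum,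
      ← Finset.prod_pow_eq_pow_sum]
    refine (coeffNorm_prod_le hr0 _ _).trans ?_
    refine Finset.prod_le_prod (fun i _ => coeffNorm_nonneg hr0 _) fun i _ => ?_
    calc _ ≤ coeffNorm r (X i) ^ (a i % m) * coeffNorm r (X i ^ m - q i) ^ (a i / m) :=
          (coeffNorm_mul_le hr0 _ _).trans (mul_le_mul (coeffNorm_pow_le hr0 _ _)
            (coeffNorm_pow_le hr0 _ _) (coeffNorm_nonneg hr0 _)
            (pow_nonneg (coeffNorm_nonneg hr0 _) _))
      _ ≤ B ^ (a i % m) * B ^ (a i / m) := by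
          rw [coeffNorm_X]
          gcongr
          · exact pow_nonneg (hnn i) _
          · exact hnn i
          · exact hBi i
      _ = B ^ (a i % m + a i / m) := (pow_add _ _ _).symm
      _ ≤ B ^ a i := by
          refine pow_le_pow_right₀ hB1 ?_
          have h1 := Nat.mod_add_div (a i) m
          have h2 : a i / m ≤ m * (a i / m) := Nat.le_mul_of_pos_left _ hm
          omega
  simpa using this

theorem digitEquiv_symm_X_mul (hm : 0 < m) (hq : ∀ i, (q i).totalDegree < m) (i : Fin n)
    (a : Fin n →₀ ℕ) : (digitEquiv hq).symm (X i * digitProd m q a) =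
      monomial (m • a.mapRange (· / m) (Nat.zero_div m)) 1 *
        (digitEquiv hq).symm (X i * monomial (a.mapRange (· % m) (Nat.zero_mod m)) 1) := by
  rw [← digitEquiv_symm_mul hm]
  congr 1
  rw [digitProd, Finset.prod_mul_distrib, monomial_eq, C_1, one_mul,
    Finsupp.prod_fintype _ _ (by simp)]
  simp only [Finsupp.mapRange_apply]
  ring

theorem exists_coeffNorm_digitEquiv_symm_le (hm : 0 < m) (hq : ∀ i, (q i).totalDegree < m) :
    ∃ C : ℝ, 1 ≤ C ∧ ∀ a : Fin n →₀ ℕ,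
      coeffNorm 1 ((digitEquiv hq).symm (monomial a 1)) ≤ C ^ a.degree := by
  classical
  set v : Fin n → (Fin n → Fin m) → ℝ := fun i b => coeffNorm 1
    ((digitEquiv hq).symm (X i * monomial (Finsupp.equivFunOnFinite.symm fun j => (b j : ℕ)) 1))
    with hv
  have hv0 : ∀ i b, 0 ≤ v i b := fun i b => coeffNorm_nonneg zero_le_one _
  have hle : ∀ i b, v i b ≤ 1 + ∑ i, ∑ b, v i b := fun i b => by
    have h1 := Finset.single_le_sum (f := fun b => v i b)
      (fun b _ => hv0 i b) (Finset.mem_univ b)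
    have h2 := Finset.single_le_sum (f := fun i => ∑ b, v i b)
      (fun i _ => Finset.sum_nonneg fun b _ => hv0 i b) (Finset.mem_univ i)
    linarith
  refine ⟨1 + ∑ i, ∑ b, v i b, ?_, ?_⟩
  · have := Finset.sum_nonneg fun i (_ : i ∈ Finset.univ) =>
      Finset.sum_nonneg fun b (_ : b ∈ Finset.univ) => hv0 i b
    linarith
  set C := 1 + ∑ i, ∑ b, v i b
  have hT : ∀ i P, coeffNorm 1 ((digitEquiv hq).symm (X i * P)) ≤
      C * coeffNorm 1 ((digitEquiv hq).symm P) := by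
    intro i P
    have := coeffNorm_linearMap_le (r := 1) (B := C) zero_le_one
      ((digitEquiv hq).symm.toLinearMap ∘ₗ LinearMap.mulLeft ℂ (X i) ∘ₗ
        (digitEquiv hq).toLinearMap) ((digitEquiv hq).symm P) fun a _ => by
      simp only [LinearMap.comp_apply, LinearEquiv.coe_coe, LinearMap.mulLeft_apply,
        digitEquiv_monomial, digitEquiv_symm_X_mul hm, coeffNorm_monomial_mul, one_pow, one_mul,
        mul_one]
      refine le_trans (le_of_eq ?_) (hle i fun j => ⟨a j % m, Nat.mod_lt _ hm⟩)
      simp only [hv]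
      congr
      ext j
      simp
    simpa using this
  intro a
  induction hD : a.degree generalizing a with
  | zero =>
    have : a = 0 := (Finsupp.degree_eq_zero_iff a).1 hD
    subst this
    have h1 : (digitEquiv hq).symm (monomial 0 1) = monomial 0 1 := by
      rw [LinearEquiv.symm_apply_eq, digitEquiv_monomial, digitProd]
      simp
    rw [h1, coeffNorm_monomial]; simp
  | succ D ih =>
    have hne : a ≠ 0 := by rintro rfl; simp at hD
    obtain ⟨i, hi⟩ := Finsupp.ne_iff.1 hne
    have hle : Finsupp.single i 1 ≤ a := by
      rw [Finsupp.single_le_iff]; exact Nat.one_le_iff_ne_zero.2 (by simpa using hi)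
    obtain ⟨b, rfl⟩ := exists_add_of_le hle
    rw [map_add, Finsupp.degree_single] at hD
    have : monomial (Finsupp.single i 1 + b) (1 : ℂ) = X i * monomial b 1 := by
      rw [X, monomial_mul, one_mul]
    rw [this, pow_succ']
    refine (hT i _).trans ?_
    have hC : 0 ≤ C := (hv0 i fun _ => ⟨0, hm⟩).trans (by apply_assumption)
    exact mul_le_mul_of_nonneg_left (ih b (by omega)) hC

theorem digitProd_mem_pow (k : ℕ) (a : Fin n →₀ ℕ) (ha : k ≤ ∑ i, a i / m) :
    digitProd m q a ∈ Ideal.span (Set.range fun i => X i ^ m - q i) ^ k := by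
  rw [digitProd, Finset.prod_mul_distrib]
  refine Ideal.mul_mem_left _ _ (Ideal.pow_le_pow_right ha ?_)
  rw [← Finset.prod_pow_eq_pow_sum]
  exact Ideal.prod_mem_prod fun i _ =>
    Ideal.pow_mem_pow (Ideal.subset_span (Set.mem_range_self i)) _

theorem digitTrunc_digitEquiv_symm_eq_zero (hm : 0 < m) (hq : ∀ i, (q i).totalDegree < m)
    (k : ℕ) {P : MvPolynomial (Fin n) ℂ}
    (hP : P ∈ Ideal.span (Set.range fun i => X i ^ m - q i) ^ k) :
    digitTrunc n m k ((digitEquiv hq).symm P) = 0 := by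
  classical
  induction k generalizing P with
  | zero => ext a; rw [coeff_digitTrunc]; simp
  | succ k ih =>
    rw [pow_succ] at hP
    refine Submodule.mul_induction_on hP ?_ ?_
    · intro x hx y hy
      induction hy using Submodule.span_induction generalizing x with
      | mem y hy =>
        obtain ⟨i, rfl⟩ := hy
        have h1 : x * (X i ^ m - q i) =
            (∏ j, (X j ^ m - q j) ^ (Finsupp.single i 1 : Fin n →₀ ℕ) j) * x := by
          rw [mul_comm, Finset.prod_eq_single i]
          · simp
          · intro j _ hj
            rw [Finsupp.single_eq_of_ne hj, pow_zero]
          · simp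
        have hx' := ih hx
        simp only at h1 ⊢
        rw [h1, digitEquiv_symm_mul hm]
        ext a
        rw [coeff_digitTrunc, coeff_zero]
        split_ifs with h
        · rw [coeff_monomial_mul']
          split_ifs with h2
          · rw [one_mul]
            have h3 := congrArg (coeff (a - m • Finsupp.single i 1)) hx'
            rw [coeff_digitTrunc, coeff_zero] at h3
            rwa [if_pos] at h3
            obtain ⟨b, rfl⟩ := exists_add_of_le h2
            rw [add_tsub_cancel_left]
            have h4 : ∑ j, (m • Finsupp.single i 1 + b : Fin n →₀ ℕ) j / m = 1 + ∑ j, b j / m := by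
              have : ∀ j, (m • Finsupp.single i 1 + b : Fin n →₀ ℕ) j / m =
                  (Finsupp.single i 1 : Fin n →₀ ℕ) j + b j / m := fun j => by
                rw [Finsupp.add_apply, Finsupp.smul_apply, smul_eq_mul, Nat.mul_add_div hm]
              simp only [this, Finset.sum_add_distrib]
              congr 1
              rw [← Finsupp.degree_eq_sum, Finsupp.degree_single]
            omega
          · rfl
        · rfl
      | zero => simp
      | add y z _ _ hy hz => rw [mul_add, map_add, map_add, hy x hx, hz x hx, add_zero]
      | smul c y _ hy =>
        have : x * c • y = (c * x) * y := by rw [smul_eq_mul]; ring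
        rw [this]
        exact hy _ (Ideal.mul_mem_left _ _ hx)
    · intro x y hx hy
      rw [map_add, map_add, hx, hy, add_zero]

/-- Division by the `k`-th power of the ideal `(h_1, …, h_n)`, with estimates. -/
theorem exists_projection (hm : 0 < m) (hq : ∀ i, (q i).totalDegree < m) {r : ℝ} (hr : 1 ≤ r) :
    ∃ C ≥ r, ∀ k, ∃ π : MvPolynomial (Fin n) ℂ →ₗ[ℂ] MvPolynomial (Fin n) ℂ,
      FiniteDimensional ℂ (LinearMap.range π) ∧
      (∀ P, P - π P ∈ Ideal.span (Set.range fun i => X i ^ m - q i) ^ k) ∧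
      (∀ P ∈ Ideal.span (Set.range fun i => X i ^ m - q i) ^ k, π P = 0) ∧
      ∀ ρ ≥ C, ∀ P, coeffNorm r (P - π P) ≤ 2 * (C / ρ) ^ (m * k) * coeffNorm ρ P := by
  classical
  obtain ⟨B, hB, hBle⟩ := exists_coeffNorm_digitEquiv_le hm hq hr
  obtain ⟨C, hC, hCle⟩ := exists_coeffNorm_digitEquiv_symm_le hm hq
  have hr0 : 0 ≤ r := zero_le_one.trans hr
  have hB1 : 1 ≤ B := hr.trans hB
  have hBC : B ≤ B * C := le_mul_of_one_le_right (by linarith) hC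
  refine ⟨B * C, hB.le.trans hBC, fun k => ?_⟩
  set π : MvPolynomial (Fin n) ℂ →ₗ[ℂ] MvPolynomial (Fin n) ℂ :=
    (digitEquiv hq).toLinearMap ∘ₗ digitTrunc n m k ∘ₗ (digitEquiv hq).symm.toLinearMap with hπ
  have hπ' : ∀ P, π P = digitEquiv hq (digitTrunc n m k ((digitEquiv hq).symm P)) := fun P => rfl
  have hpos : 0 < B * C := by positivity
  have hπnorm : ∀ P, coeffNorm r (π P) ≤ coeffNorm (B * C) P := by
    intro P
    have := coeffNorm_linearMap_le (r := B * C) (B := 1) hr0 π P fun a _ => by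
      rw [hπ', one_mul]
      refine (hBle _).trans ((coeffNorm_digitTrunc_le (by linarith) _ _).trans ?_)
      have hdeg : ((digitEquiv hq).symm (monomial a 1)).totalDegree ≤ a.degree := by
        have : DegreeLT (a.degree + 1) ((digitEquiv hq).symm (monomial a 1)) := by
          refine degreeLT_digitEquiv_symm hq fun b hb => ?_
          rw [coeff_monomial, if_neg]
          rintro rfl
          omega
        refine Finset.sup_le fun b hb => ?_
        by_contra hlt
        exact mem_support_iff.1 hb (this b (not_le.1 hlt))
      refine (coeffNorm_le_pow_mul hB1 hdeg).trans ?_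
      rw [mul_pow]
      gcongr
      exact hCle a
    simpa using this
  refine ⟨π, ?_, ?_, ?_, ?_⟩
  · have hfin : {a : Fin n →₀ ℕ | ∑ i, a i / m < k}.Finite := by
      refine (Set.finite_Iic (Finsupp.equivFunOnFinite.symm fun _ : Fin n => m * k)).subset ?_
      intro a ha i
      have h1 := Finset.single_le_sum (f := fun i => a i / m) (fun _ _ => Nat.zero_le _)
        (Finset.mem_univ i)
      have h2 : a i / m < k := lt_of_le_of_lt h1 ha
      rw [Nat.div_lt_iff_lt_mul hm] at h2
      simp only [Finsupp.equivFunOnFinite_symm_apply_apply]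
      rw [mul_comm]; exact h2.le
    have : FiniteDimensional ℂ (Submodule.span ℂ
        ((fun a => digitProd m q a) '' {a : Fin n →₀ ℕ | ∑ i, a i / m < k})) :=
      FiniteDimensional.span_of_finite ℂ (hfin.image _)
    refine Submodule.finiteDimensional_of_le (S₂ := Submodule.span ℂ
        ((fun a => digitProd m q a) '' {a : Fin n →₀ ℕ | ∑ i, a i / m < k})) ?_
    rintro _ ⟨P, rfl⟩
    rw [hπ', linearMap_apply_eq_sum (digitTrunc n m k), map_sum]
    refine Submodule.sum_mem _ fun a _ => ?_
    rw [map_smul, digitTrunc_monomial]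
    refine Submodule.smul_mem _ _ ?_
    split_ifs with h
    · rw [digitEquiv_monomial]
      exact Submodule.subset_span ⟨a, h, rfl⟩
    · simp
  · intro P
    have h1 : P - π P = digitEquiv hq ((digitEquiv hq).symm P -
        digitTrunc n m k ((digitEquiv hq).symm P)) := by
      rw [map_sub, hπ', LinearEquiv.apply_symm_apply]
    rw [h1]
    set Q := (digitEquiv hq).symm P
    have h2 := linearMap_apply_eq_sum ((digitEquiv hq).toLinearMap ∘ₗ
      (LinearMap.id - digitTrunc n m k)) Q
    have h3 : digitEquiv hq (Q - digitTrunc n m k Q) = ((digitEquiv hq).toLinearMap ∘ₗ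
      (LinearMap.id - digitTrunc n m k)) Q := rfl
    rw [h3, h2]
    refine Ideal.sum_mem _ fun a _ => ?_
    rw [smul_eq_C_mul]
    refine Ideal.mul_mem_left _ _ ?_
    simp only [LinearMap.comp_apply, LinearMap.sub_apply, LinearMap.id_apply, digitTrunc_monomial,
      LinearEquiv.coe_coe]
    split_ifs with h
    · simp
    · rw [sub_zero, digitEquiv_monomial]
      exact digitProd_mem_pow k a (not_lt.1 h)
  · intro P hP
    rw [hπ', digitTrunc_digitEquiv_symm_eq_zero hm hq k hP, map_zero]
  · intro ρ hρ P
    have hρ0 : 0 < ρ := hpos.trans_le hρ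
    set T : MvPolynomial (Fin n) ℂ →ₗ[ℂ] MvPolynomial (Fin n) ℂ := LinearMap.id - π
    have hT : ∀ a : Fin n →₀ ℕ, coeffNorm r (T (monomial a 1)) ≤
        2 * (B * C / ρ) ^ (m * k) * ρ ^ a.degree := by
      intro a
      by_cases ha : a.degree < m * k
      · have : T (monomial a 1) = 0 := by
          have hd : DegreeLT (m * k) ((digitEquiv hq).symm (monomial a 1)) := by
            refine degreeLT_digitEquiv_symm hq fun b hb => ?_
            rw [coeff_monomial, if_neg]
            rintro rfl
            omega
          have h4 : digitTrunc n m k ((digitEquiv hq).symm (monomial a 1)) =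
              (digitEquiv hq).symm (monomial a 1) := by
            ext b
            rw [coeff_digitTrunc]
            split_ifs with hb
            · rfl
            · refine (hd b ?_).symm
              rw [Finsupp.degree_eq_sum]
              calc m * k ≤ m * ∑ i, b i / m := Nat.mul_le_mul_left _ (not_lt.1 hb)
                _ = ∑ i, m * (b i / m) := Finset.mul_sum ..
                _ ≤ ∑ i, b i := Finset.sum_le_sum fun i _ => Nat.mul_div_le _ _
          change monomial a 1 - π (monomial a 1) = 0
          rw [hπ', h4, LinearEquiv.apply_symm_apply, sub_self]
        rw [this, coeffNorm_zero]
        positivity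
      · have h5 : coeffNorm r (T (monomial a 1)) ≤ 2 * (B * C) ^ a.degree := by
          refine (coeffNorm_sub_le hr0 _ _).trans ?_
          have h6 := hπnorm (monomial a 1)
          rw [coeffNorm_monomial, norm_one, one_mul] at h6
          have h7 : coeffNorm r (LinearMap.id (R := ℂ) (monomial a (1 : ℂ))) ≤
              (B * C) ^ a.degree := by
            rw [LinearMap.id_apply, coeffNorm_monomial, norm_one, one_mul]
            gcongr
            exact hB.le.trans hBC
          linarith
        refine h5.trans ?_
        have h8 : (B * C) ^ a.degree = (B * C / ρ) ^ a.degree * ρ ^ a.degree := by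
          rw [← mul_pow, div_mul_cancel₀ _ hρ0.ne']
        rw [h8, ← mul_assoc]
        gcongr 2 * ?_ * _
        exact pow_le_pow_of_le_one (by positivity) ((div_le_one hρ0).2 hρ) (not_lt.1 ha)
    exact coeffNorm_linearMap_le (r := ρ) hr0 T P fun a _ => hT a

/-- The monomials `X ^ b`, `b_i < m`, span modulo `(h_1, …, h_n)`. -/
theorem exists_sub_sum_mem_span (hm : 0 < m) (hq : ∀ i, (q i).totalDegree < m)
    (P : MvPolynomial (Fin n) ℂ) : ∃ c : (Fin n → Fin m) → ℂ,
      P - ∑ b, c b • monomial (Finsupp.equivFunOnFinite.symm fun j => (b j : ℕ)) 1 ∈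
        Ideal.span (Set.range fun i => X i ^ m - q i) := by
  classical
  obtain ⟨Q, rfl⟩ := (digitEquiv hq).surjective P
  induction Q using MvPolynomial.induction_on' with
  | monomial a x =>
    by_cases h : 1 ≤ ∑ i, a i / m
    · refine ⟨0, ?_⟩
      have h1 := digitProd_mem_pow (q := q) 1 a h
      rw [pow_one] at h1
      have h2 : monomial a x = x • monomial a (1 : ℂ) := by rw [smul_monomial, smul_eq_mul, mul_one]
      rw [h2, map_smul, digitEquiv_monomial, smul_eq_C_mul]
      simpa using Ideal.mul_mem_left _ _ h1
    · have h0 : ∀ i, a i / m = 0 := by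
        have : ∑ i, a i / m = 0 := by omega
        simpa using this
      have hlt : ∀ i, a i < m := fun i => by
        have := h0 i
        rw [Nat.div_eq_zero_iff] at this
        omega
      refine ⟨Pi.single (fun i => ⟨a i, hlt i⟩) x, ?_⟩
      have h2 : monomial a x = x • monomial a (1 : ℂ) := by rw [smul_monomial, smul_eq_mul, mul_one]
      rw [Finset.sum_eq_single (fun i => (⟨a i, hlt i⟩ : Fin m))]
      · rw [h2, map_smul, digitEquiv_monomial, Pi.single_eq_same]
        have h3 : (Finsupp.equivFunOnFinite.symm fun j => a j) = a := by ext; simp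
        have h4 : digitProd m q a = monomial a 1 := by
          rw [digitProd, monomial_eq, C_1, one_mul, Finsupp.prod_fintype _ _ (by simp)]
          refine Finset.prod_congr rfl fun i _ => ?_
          rw [h0, Nat.mod_eq_of_lt (hlt i)]; simp
        simp only [h3, h4, sub_self]
        exact Ideal.zero_mem _
      · intro b _ hb
        rw [Pi.single_eq_of_ne hb, zero_smul]
      · simp
  | add P Q hP hQ =>
    obtain ⟨c, hc⟩ := hP
    obtain ⟨c', hc'⟩ := hQ
    refine ⟨c + c', ?_⟩
    have := Ideal.add_mem _ hc hc'
    convert this using 1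
    simp only [map_add, Pi.add_apply, add_smul, Finset.sum_add_distrib]
    ring

end Projection

end Bombieri

namespace Bombieri

open MvPolynomial

section Lines

variable {n : ℕ}

/-- Restriction of a polynomial to the line `t ↦ s + t ζ`. -/
noncomputable def lineHom (s ζ : Fin n → ℂ) : MvPolynomial (Fin n) ℂ →ₐ[ℂ] Polynomial ℂ :=
  aeval fun i => Polynomial.C (s i) + Polynomial.C (ζ i) * Polynomial.X

theorem eval_lineHom (s ζ : Fin n → ℂ) (P : MvPolynomial (Fin n) ℂ) (t : ℂ) :
    (lineHom s ζ P).eval t = eval (fun i => s i + t * ζ i) P := by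
  induction P using MvPolynomial.induction_on with
  | C a => simp [lineHom]
  | add p q hp hq => simp [hp, hq]
  | mul_X p i hp =>
    rw [map_mul, Polynomial.eval_mul, hp, map_mul]
    have h : (lineHom s ζ (X i)).eval t = s i + t * ζ i := by
      simp only [lineHom, aeval_X, Polynomial.eval_add, Polynomial.eval_C, Polynomial.eval_mul,
        Polynomial.eval_X]
      ring
    rw [h, eval_X]

theorem coeff_zero_lineHom (s ζ : Fin n → ℂ) (P : MvPolynomial (Fin n) ℂ) :
    (lineHom s ζ P).coeff 0 = eval s P := by
  rw [Polynomial.coeff_zero_eq_eval_zero, eval_lineHom]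
  simp

theorem coeff_one_lineHom (s ζ : Fin n → ℂ) (P : MvPolynomial (Fin n) ℂ) :
    (lineHom s ζ P).coeff 1 = ∑ i, ζ i * eval s (pderiv i P) := by
  classical
  induction P using MvPolynomial.induction_on with
  | C a => simp [lineHom]
  | add p q hp hq => simp [hp, hq, mul_add, Finset.sum_add_distrib]
  | mul_X p i hp =>
    have h1 : lineHom s ζ (X i) = Polynomial.C (s i) + Polynomial.C (ζ i) * Polynomial.X := by
      simp [lineHom]
    rw [map_mul, h1, mul_add, Polynomial.coeff_add, ← mul_assoc, Polynomial.coeff_mul_C, hp,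
      ← Polynomial.X_mul, Polynomial.coeff_X_mul, Polynomial.coeff_mul_C, coeff_zero_lineHom]
    simp only [Derivation.leibniz, smul_eq_mul, map_add, map_mul, eval_X, pderiv_X, mul_add,
      Finset.sum_add_distrib, Finset.sum_mul]
    rw [add_comm]
    congr 1
    · rw [Finset.sum_eq_single i]
      · simp [mul_comm]
      · intro j _ hj; simp [Pi.single_eq_of_ne hj.symm]
      · simp
    · exact Finset.sum_congr rfl fun j _ => by ring

theorem lineHom_coeff_eq_zero_of_mem_pow (s ζ : Fin n → ℂ) {k : ℕ} {P : MvPolynomial (Fin n) ℂ}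
    (hP : P ∈ RingHom.ker (eval s) ^ k) {j : ℕ} (hj : j < k) : (lineHom s ζ P).coeff j = 0 := by
  have h1 : RingHom.ker (eval s) ≤
      (Ideal.span {(Polynomial.X : Polynomial ℂ)}).comap (lineHom s ζ) := by
    intro Q hQ
    rw [Ideal.mem_comap, Ideal.mem_span_singleton, Polynomial.X_dvd_iff]
    exact (coeff_zero_lineHom s ζ Q).trans hQ
  have h2 := (Ideal.pow_right_mono h1 k).trans (Ideal.le_comap_pow _ k) hP
  rw [Ideal.mem_comap, Ideal.span_singleton_pow, Ideal.mem_span_singleton,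
    Polynomial.X_pow_dvd_iff] at h2
  exact h2 j hj

theorem coeff_lineHom_zero (ζ : Fin n → ℂ) (P : MvPolynomial (Fin n) ℂ) (j : ℕ) :
    (lineHom 0 ζ P).coeff j = eval ζ (homogeneousComponent j P) := by
  classical
  induction P using MvPolynomial.induction_on' with
  | monomial a c =>
    have h1 : lineHom 0 ζ (monomial a c) =
        Polynomial.C (c * ∏ i, ζ i ^ a i) * Polynomial.X ^ a.degree := by
      rw [lineHom, aeval_monomial, Finsupp.prod_fintype _ _ (by simp), Finsupp.degree_eq_sum]
      simp [mul_pow, Finset.prod_mul_distrib, Finset.prod_pow_eq_pow_sum, mul_assoc]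
    rw [h1, Polynomial.coeff_C_mul_X_pow]
    by_cases h : j = a.degree
    · rw [if_pos h, homogeneousComponent_of_mem (isHomogeneous_monomial c h.symm), if_pos rfl,
        eval_monomial, Finsupp.prod_fintype _ _ (by simp)]
    · rw [if_neg h, homogeneousComponent_of_mem (isHomogeneous_monomial c rfl), if_neg h,
        map_zero]
  | add p q hp hq => simp [hp, hq]

theorem mem_ker_pow_of_lineHom {s : Fin n → ℂ} {k : ℕ} {P : MvPolynomial (Fin n) ℂ}
    (hP : ∀ ζ, ∀ j < k, (lineHom s ζ P).coeff j = 0) : P ∈ RingHom.ker (eval s) ^ k := by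
  set T : MvPolynomial (Fin n) ℂ →ₐ[ℂ] MvPolynomial (Fin n) ℂ := aeval fun i => X i + C (s i)
    with hT
  set T' : MvPolynomial (Fin n) ℂ →ₐ[ℂ] MvPolynomial (Fin n) ℂ := aeval fun i => X i - C (s i)
    with hT'
  have h1 : T' (T P) = P := by
    have : T'.comp T = AlgHom.id ℂ _ := by
      ext i
      simp [hT, hT', algHom_C]
    exact DFunLike.congr_fun this P
  have h2 : ∀ ζ, lineHom 0 ζ (T P) = lineHom s ζ P := by
    intro ζ
    have : (lineHom 0 ζ).comp T = lineHom s ζ := by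
      ext i
      simp [hT, lineHom, algHom_C, add_comm]
    exact DFunLike.congr_fun this P
  have h3 : T P ∈ idealOfVars (Fin n) ℂ ^ k := by
    rw [mem_pow_idealOfVars_iff']
    intro a ha
    have h4 : homogeneousComponent a.degree (T P) = 0 := by
      refine MvPolynomial.funext fun ζ => ?_
      rw [← coeff_lineHom_zero, h2, map_zero]
      exact hP ζ _ ha
    have := congrArg (coeff a) h4
    rwa [coeff_homogeneousComponent, if_pos rfl, coeff_zero] at this
  have h4 : idealOfVars (Fin n) ℂ ≤ (RingHom.ker (eval s)).comap T' := by
    rw [idealOfVars, Ideal.span_le]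
    rintro _ ⟨i, rfl⟩
    simp [hT', RingHom.mem_ker]
  have h5 := (Ideal.pow_right_mono h4 k).trans (Ideal.le_comap_pow _ k) h3
  rw [Ideal.mem_comap] at h5
  rwa [h1] at h5

theorem mem_ker_sq {s : Fin n → ℂ} {P : MvPolynomial (Fin n) ℂ} (h0 : eval s P = 0)
    (h1 : ∀ i, eval s (pderiv i P) = 0) : P ∈ RingHom.ker (eval s) ^ 2 := by
  refine mem_ker_pow_of_lineHom fun ζ j hj => ?_
  interval_cases j
  · rw [coeff_zero_lineHom, h0]
  · rw [coeff_one_lineHom]; simp [h1]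

end Lines

section Hermite

variable {n : ℕ} {ι : Type*} [Fintype ι] [DecidableEq ι] {s : ι → Fin n → ℂ}
  {e : ι → MvPolynomial (Fin n) ℂ} {D : ℕ}

/-- Hermite interpolation of values and first derivatives. -/
theorem exists_hermite (he : ∀ i j, eval (s i) (e j) = if i = j then 1 else 0)
    (hD : ∀ i, (e i).totalDegree ≤ D) (α : ι → ℂ) (β : ι → Fin n → ℂ) :
    ∃ P : MvPolynomial (Fin n) ℂ, P.totalDegree ≤ 2 * D + 1 ∧ (∀ i, eval (s i) P = α i) ∧
      ∀ i j, eval (s i) (pderiv j P) = β i j := by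
  classical
  set L : ι → MvPolynomial (Fin n) ℂ := fun i => C (α i) +
    ∑ j, C (β i j - 2 * eval (s i) (pderiv j (e i)) * α i) * (X j - C (s i j)) with hL
  have hL0 : ∀ i, eval (s i) (L i) = α i := fun i => by simp [hL]
  have hL1 : ∀ i j, eval (s i) (pderiv j (L i)) =
      β i j - 2 * eval (s i) (pderiv j (e i)) * α i := fun i j => by
    simp only [hL, map_add, map_sum, pderiv_C, map_sub]
    rw [Finset.sum_eq_single j]
    · simp
    · intro k _ hk; simp [pderiv_X, Pi.single_eq_of_ne hk]
    · simp
  refine ⟨∑ i, e i ^ 2 * L i, ?_, ?_, ?_⟩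
  · refine totalDegree_finsetSum_le fun i _ => ?_
    refine (totalDegree_mul _ _).trans (add_le_add ?_ ?_)
    · exact (totalDegree_pow _ _).trans (Nat.mul_le_mul_left _ (hD i))
    · refine (totalDegree_add _ _).trans (max_le (by simp) ?_)
      refine totalDegree_finsetSum_le fun j _ => ?_
      refine (totalDegree_mul _ _).trans ?_
      rw [totalDegree_C, zero_add]
      refine (totalDegree_sub _ _).trans (max_le (by simp) (by simp))
  · intro i
    rw [map_sum, Finset.sum_eq_single i]
    · simp [he, hL0]
    · intro j _ hj; simp [he, hj.symm]
    · simp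
  · intro i j
    rw [map_sum, map_sum, Finset.sum_eq_single i]
    · simp only [Derivation.leibniz, Derivation.leibniz_pow, smul_eq_mul, map_add, map_mul,
        map_pow, he, hL0, hL1, nsmul_eq_mul]
      simp
      ring
    · intro k _ hk
      simp [Derivation.leibniz, Derivation.leibniz_pow, he, hk.symm]
    · simp

end Hermite

end Bombieri

namespace Bombieri

open MvPolynomial

section Residual

variable {n : ℕ} {ι : Type*} [Fintype ι] [DecidableEq ι] {s : ι → Fin n → ℂ}
  {e : ι → MvPolynomial (Fin n) ℂ}

theorem iInf_ker_pow (he : ∀ i j, eval (s i) (e j) = if i = j then 1 else 0) (k : ℕ) :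
    ⨅ i, RingHom.ker (eval (s i)) ^ k = (∏ i, RingHom.ker (eval (s i))) ^ k := by
  have hcop : ∀ i j, i ≠ j → IsCoprime (RingHom.ker (eval (s i))) (RingHom.ker (eval (s j))) := by
    intro i j hij
    refine Ideal.isCoprime_iff_exists.2 ⟨1 - e i, ?_, e i, ?_, by ring⟩
    · simp [RingHom.mem_ker, he]
    · simp [RingHom.mem_ker, he, hij.symm]
  rw [← Finset.prod_pow, Ideal.prod_eq_iInf_of_pairwise_isCoprime]
  · simp
  · intro i _ j _ hij
    exact (hcop i j hij).pow

/-- An element `r`, equal to `1` at the given points, that multiplies the ideal of these points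
into an ideal generated by functions with simple intersection there. -/
theorem exists_residual (he : ∀ i j, eval (s i) (e j) = if i = j then 1 else 0)
    {h : Fin n → MvPolynomial (Fin n) ℂ} (h0 : ∀ i j, eval (s i) (h j) = 0)
    (h1 : ∀ i j k, eval (s i) (pderiv k (h j)) = if j = k then 1 else 0) :
    ∃ r : MvPolynomial (Fin n) ℂ, (∀ i, eval (s i) r = 1) ∧
      ∀ x ∈ ∏ i, RingHom.ker (eval (s i)), r * x ∈ Ideal.span (Set.range h) := by
  classical
  set J : Ideal (MvPolynomial (Fin n) ℂ) := ∏ i, RingHom.ker (eval (s i)) with hJ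
  set I := Ideal.span (Set.range h) with hI
  have hJmem : ∀ x, x ∈ J ↔ ∀ i, eval (s i) x = 0 := fun x => by
    have := iInf_ker_pow he 1
    simp only [pow_one] at this
    rw [hJ, ← this, Ideal.mem_iInf]
    rfl
  have hJI : J ≤ I ⊔ J • J := by
    intro x hx
    set y := ∑ i, ∑ j, C (eval (s i) (pderiv j x)) * e i * h j with hy
    have hyI : y ∈ I := Ideal.sum_mem _ fun i _ => Ideal.sum_mem _ fun j _ =>
      Ideal.mul_mem_left _ _ (Ideal.subset_span ⟨j, rfl⟩)
    have hxy : x - y ∈ J • J := by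
      rw [smul_eq_mul, ← pow_two, hJ, ← iInf_ker_pow he, Ideal.mem_iInf]
      intro k
      refine mem_ker_sq ?_ fun l => ?_
      · rw [map_sub, (hJmem x).1 hx k, hy]
        simp [h0]
      · rw [map_sub, map_sub, sub_eq_zero, hy]
        simp only [map_sum, Derivation.leibniz, smul_eq_mul, map_add, map_mul, h0, h1, he, eval_C,
          pderiv_C, map_zero]
        rw [Finset.sum_eq_single k]
        · simp
        · intro i _ hi
          simp [hi.symm]
        · simp
    have : x = y + (x - y) := by ring
    rw [this]
    exact Submodule.add_mem_sup hyI hxy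
  obtain ⟨r, hr1, hr2⟩ := Submodule.exists_sub_one_mem_and_smul_eq_zero_of_fg_of_le_smul J
    (Submodule.map (Submodule.mkQ I) J) ((IsNoetherian.noetherian J).map _) (by
      rw [← Submodule.map_smul'']
      refine (Submodule.map_mono hJI).trans ?_
      rw [Submodule.map_sup]
      refine sup_le ?_ le_rfl
      rintro _ ⟨x, hx, rfl⟩
      have : Submodule.mkQ I x = 0 := (Submodule.Quotient.mk_eq_zero I).2 hx
      rw [this]
      exact Submodule.zero_mem _)
  refine ⟨r, fun i => ?_, fun x hx => ?_⟩
  · have := (hJmem _).1 hr1 i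
    rw [map_sub, map_one, sub_eq_zero] at this
    exact this
  · have := hr2 _ (Submodule.mem_map_of_mem hx)
    rw [← map_smul, Submodule.mkQ_apply, Submodule.Quotient.mk_eq_zero] at this
    exact this

theorem mem_span_prod_pow_mul {h : Fin n → MvPolynomial (Fin n) ℂ} {l : ℕ}
    {P : MvPolynomial (Fin n) ℂ} (hP : P ∈ Ideal.span (Set.range h) ^ l) :
    P ∈ Submodule.span ℂ {y | ∃ (a : Fin n → ℕ) (g : MvPolynomial (Fin n) ℂ),
      ∑ i, a i = l ∧ y = (∏ i, h i ^ a i) * g} := by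
  classical
  induction l generalizing P with
  | zero => exact Submodule.subset_span ⟨0, P, by simp, by simp⟩
  | succ l ih =>
    rw [pow_succ] at hP
    refine Submodule.mul_induction_on hP ?_ fun x y hx hy => Submodule.add_mem _ hx hy
    intro x hx y hy
    induction hy using Submodule.span_induction generalizing x with
    | mem y hy =>
      obtain ⟨i, rfl⟩ := hy
      have hx' := ih hx
      clear hx
      induction hx' using Submodule.span_induction with
      | mem z hz =>
        obtain ⟨a, g, ha, rfl⟩ := hz
        refine Submodule.subset_span ⟨a + Pi.single i 1, g, ?_, ?_⟩
        · simp [Finset.sum_add_distrib, ha]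
        · simp only [Pi.add_apply, pow_add, Finset.prod_mul_distrib]
          have : ∏ j, h j ^ (Pi.single i 1 : Fin n → ℕ) j = h i := by
            rw [Finset.prod_eq_single i]
            · simp
            · intro j _ hj; simp [Pi.single_eq_of_ne hj]
            · simp
          rw [this]; ring
      | zero => simp
      | add z w _ _ hz hw => rw [add_mul]; exact Submodule.add_mem _ hz hw
      | smul c z _ hz => rw [smul_mul_assoc]; exact Submodule.smul_mem _ _ hz
    | zero => simp
    | add y z _ _ hy hz => rw [mul_add]; exact Submodule.add_mem _ (hy x hx) (hz x hx)
    | smul c y _ hy =>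
      have : x * c • y = (c * x) * y := by rw [smul_eq_mul]; ring
      rw [this]
      exact hy _ (Ideal.mul_mem_left _ _ hx)

theorem pow_le_sup_of_le_sup_sq {A : Type*} [CommRing A] {I Q : Ideal A} (hIQ : I ≤ Q)
    (h : Q ≤ I ⊔ Q ^ 2) (l : ℕ) : Q ^ l ≤ I ^ l ⊔ Q ^ (l + 1) := by
  induction l with
  | zero => simp
  | succ l ih =>
    calc Q ^ (l + 1) = Q ^ l * Q := pow_succ _ _
      _ ≤ Q ^ l * (I ⊔ Q ^ 2) := Ideal.mul_mono_right h
      _ = Q ^ l * I ⊔ Q ^ (l + 2) := by rw [Ideal.mul_sup, ← pow_add]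
      _ ≤ (I ^ l ⊔ Q ^ (l + 1)) * I ⊔ Q ^ (l + 2) := sup_le_sup_right (Ideal.mul_mono_left ih) _
      _ = I ^ (l + 1) ⊔ Q ^ (l + 1) * I ⊔ Q ^ (l + 2) := by rw [Ideal.sup_mul, ← pow_succ]
      _ ≤ I ^ (l + 1) ⊔ Q ^ (l + 1 + 1) := by
        refine sup_le (sup_le le_sup_left ?_) le_sup_right
        rw [pow_succ Q (l + 1)]
        exact (Ideal.mul_mono_right hIQ).trans le_sup_right

theorem mem_span_sup_pow {h : Fin n → MvPolynomial (Fin n) ℂ}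
    {Q : Ideal (MvPolynomial (Fin n) ℂ)} (hIQ : Ideal.span (Set.range h) ≤ Q)
    (hQ : Q ≤ Ideal.span (Set.range h) ⊔ Q ^ 2) {t : ℕ} {β : Fin t → MvPolynomial (Fin n) ℂ}
    (hβ : ∀ P, ∃ c : Fin t → ℂ, P - ∑ j, c j • β j ∈ Q) (l : ℕ) (P : MvPolynomial (Fin n) ℂ) :
    P ∈ Submodule.span ℂ {y | ∃ (a : Fin n → ℕ) (j : Fin t), ∑ i, a i < l ∧
      y = (∏ i, h i ^ a i) * β j} ⊔ (Q ^ l).restrictScalars ℂ := by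
  induction l with
  | zero => simp
  | succ l ih =>
    have hmono : Submodule.span ℂ {y | ∃ (a : Fin n → ℕ) (j : Fin t), ∑ i, a i < l ∧
        y = (∏ i, h i ^ a i) * β j} ≤ Submodule.span ℂ {y | ∃ (a : Fin n → ℕ) (j : Fin t),
          ∑ i, a i < l + 1 ∧ y = (∏ i, h i ^ a i) * β j} :=
      Submodule.span_mono fun y ⟨a, j, ha, hy⟩ => ⟨a, j, by omega, hy⟩
    obtain ⟨x, hx, y, hy, rfl⟩ := Submodule.mem_sup.1 ih
    refine Submodule.add_mem _ (Submodule.mem_sup_left (hmono hx)) ?_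
    obtain ⟨y₁, hy₁, y₂, hy₂, rfl⟩ := Submodule.mem_sup.1 (pow_le_sup_of_le_sup_sq hIQ hQ l hy)
    refine Submodule.add_mem _ ?_ (Submodule.mem_sup_right hy₂)
    refine Submodule.span_le.2 ?_ (mem_span_prod_pow_mul hy₁)
    rintro _ ⟨a, g, ha, rfl⟩
    obtain ⟨c, hc⟩ := hβ g
    have h1 : (∏ i, h i ^ a i) * g = ∑ j, c j • ((∏ i, h i ^ a i) * β j) +
        (∏ i, h i ^ a i) * (g - ∑ j, c j • β j) := by
      rw [mul_sub, Finset.mul_sum]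
      simp only [mul_smul_comm]
      ring
    rw [SetLike.mem_coe, h1]
    refine Submodule.add_mem _ (Submodule.mem_sup_left (Submodule.sum_mem _ fun j _ =>
      Submodule.smul_mem _ _ (Submodule.subset_span ⟨a, j, by omega, rfl⟩)))
      (Submodule.mem_sup_right ?_)
    rw [Submodule.restrictScalars_mem, pow_succ]
    refine Ideal.mul_mem_mul ?_ hc
    rw [← ha, ← Finset.prod_pow_eq_pow_sum]
    exact Ideal.prod_mem_prod fun i _ =>
      Ideal.pow_mem_pow (hIQ (Ideal.subset_span (Set.mem_range_self i))) _

theorem exists_ne_zero_mem_pow {h : Fin n → MvPolynomial (Fin n) ℂ}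
    {Q : Ideal (MvPolynomial (Fin n) ℂ)} (hIQ : Ideal.span (Set.range h) ≤ Q)
    (hQ : Q ≤ Ideal.span (Set.range h) ⊔ Q ^ 2) {t : ℕ} {β : Fin t → MvPolynomial (Fin n) ℂ}
    (hβ : ∀ P, ∃ c : Fin t → ℂ, P - ∑ j, c j • β j ∈ Q) {u l : ℕ} (hl : 0 < l)
    (htu : t < u ^ n) :
    ∃ G ∈ Q ^ l, G ≠ 0 ∧ G.totalDegree ≤ u * l + n * u := by
  classical
  let S := {a : Fin n → Fin l // ∑ i, (a i : ℕ) < l}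
  let v : S × Fin t → MvPolynomial (Fin n) ℂ ⧸ Q ^ l := fun x =>
    Ideal.Quotient.mk _ ((∏ i, h i ^ (x.1.1 i : ℕ)) * β x.2)
  have hspan : Submodule.span ℂ (Set.range v) = ⊤ := by
    rw [eq_top_iff]
    rintro x -
    obtain ⟨P, rfl⟩ := Ideal.Quotient.mk_surjective x
    obtain ⟨y, hy, z, hz, rfl⟩ := Submodule.mem_sup.1 (mem_span_sup_pow hIQ hQ hβ l P)
    have hz' : Ideal.Quotient.mk (Q ^ l) z = 0 := Ideal.Quotient.eq_zero_iff_mem.2 hz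
    rw [map_add, hz', add_zero]
    have : Submodule.map (Ideal.Quotient.mkₐ ℂ (Q ^ l)).toLinearMap (Submodule.span ℂ
        {y | ∃ (a : Fin n → ℕ) (j : Fin t), ∑ i, a i < l ∧ y = (∏ i, h i ^ a i) * β j}) ≤
        Submodule.span ℂ (Set.range v) := by
      rw [Submodule.map_span, Submodule.span_le]
      rintro _ ⟨_, ⟨a, j, ha, rfl⟩, rfl⟩
      refine Submodule.subset_span ⟨(⟨fun i => ⟨a i, ?_⟩, ha⟩, j), rfl⟩
      exact (Finset.single_le_sum (f := a) (fun _ _ => Nat.zero_le _)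
        (Finset.mem_univ i)).trans_lt ha
    exact this (Submodule.mem_map_of_mem hy)
  have hfin : Module.Finite ℂ (MvPolynomial (Fin n) ℂ ⧸ Q ^ l) :=
    ⟨⟨(Set.finite_range v).toFinset, by simpa using hspan⟩⟩
  have hrank : Module.finrank ℂ (MvPolynomial (Fin n) ℂ ⧸ Q ^ l) ≤ Fintype.card S * t := by
    have := finrank_range_le_card (R := ℂ) v
    rw [Set.finrank, hspan, finrank_top, Fintype.card_prod, Fintype.card_fin] at this
    exact this
  let ex : S × (Fin n → Fin u) → (Fin n →₀ ℕ) := fun x =>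
    Finsupp.equivFunOnFinite.symm fun i => u * (x.1.1 i : ℕ) + (x.2 i : ℕ)
  have hex : Function.Injective ex := by
    rintro ⟨⟨a, ha⟩, b⟩ ⟨⟨a', ha'⟩, b'⟩ hab
    have h1 : ∀ i, u * (a i : ℕ) + (b i : ℕ) = u * (a' i : ℕ) + (b' i : ℕ) := fun i => by
      have := DFunLike.congr_fun hab i
      simpa [ex] using this
    have h2 : a = a' := funext fun i => Fin.ext (by
      have hu : 0 < u := (Nat.zero_le _).trans_lt (b i).2
      have := congrArg (· / u) (h1 i)
      simpa [Nat.mul_add_div hu, Nat.div_eq_of_lt (b i).2, Nat.div_eq_of_lt (b' i).2] using this)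
    subst h2
    have h3 : b = b' := funext fun i => Fin.ext (by have := h1 i; omega)
    subst h3
    rfl
  let φ : (S × (Fin n → Fin u) → ℂ) →ₗ[ℂ] MvPolynomial (Fin n) ℂ :=
    Fintype.linearCombination ℂ fun x => monomial (ex x) (1 : ℂ)
  have hφ : ∀ c, φ c = ∑ x, c x • monomial (ex x) (1 : ℂ) := fun c =>
    Fintype.linearCombination_apply _ _ _
  have hφcoeff : ∀ c x, coeff (ex x) (φ c) = c x := fun c x => by
    rw [hφ, coeff_sum, Finset.sum_eq_single x]
    · simp
    · intro y _ hy
      rw [coeff_smul, coeff_monomial, if_neg (fun h => hy (hex h)), smul_zero]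
    · simp
  have hS : 0 < Fintype.card S := Fintype.card_pos_iff.2 ⟨⟨fun _ => ⟨0, hl⟩, by simpa using hl⟩⟩
  have hker := LinearMap.ker_ne_bot_of_finrank_lt
    (f := (Ideal.Quotient.mkₐ ℂ (Q ^ l)).toLinearMap ∘ₗ φ) (by
      rw [Module.finrank_fintype_fun_eq_card, Fintype.card_prod, Fintype.card_fun,
        Fintype.card_fin, Fintype.card_fin]
      exact hrank.trans_lt (Nat.mul_lt_mul_of_pos_left htu hS))
  obtain ⟨c, hc, hc0⟩ := (Submodule.ne_bot_iff _).1 hker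
  refine ⟨φ c, ?_, ?_, ?_⟩
  · exact Ideal.Quotient.eq_zero_iff_mem.1 hc
  · intro h0
    refine hc0 (funext fun x => ?_)
    rw [← hφcoeff c x, h0, coeff_zero, Pi.zero_apply]
  · rw [hφ]
    refine totalDegree_finsetSum_le fun x _ => ?_
    refine (totalDegree_smul_le _ _).trans ((totalDegree_monomial_le _ _).trans ?_)
    change (ex x).degree ≤ _
    rw [Finsupp.degree_eq_sum]
    simp only [ex, Finsupp.equivFunOnFinite_symm_apply_apply, Finset.sum_add_distrib,
      ← Finset.mul_sum]
    refine add_le_add (Nat.mul_le_mul_left _ x.1.2.le) ?_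
    calc ∑ i, (x.2 i : ℕ) ≤ ∑ _i : Fin n, u := Finset.sum_le_sum fun i _ => (x.2 i).2.le
      _ = n * u := by simp

theorem exists_lagrange_multiplier (hn : 0 < n)
    (he : ∀ i j, eval (s i) (e j) = if i = j then 1 else 0) {D m u : ℕ}
    (hD : ∀ i, (e i).totalDegree ≤ D) (hm : 2 * D + 2 ≤ m) (hu : 0 < u)
    (hcount : m ^ n < u ^ n + Fintype.card ι) :
    ∃ q : Fin n → MvPolynomial (Fin n) ℂ, (∀ i, (q i).totalDegree < m) ∧
      (∀ i j, X j ^ m - q j ∈ RingHom.ker (eval (s i))) ∧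
      ∃ (G : MvPolynomial (Fin n) ℂ) (l : ℕ), G ≠ 0 ∧ 0 < l ∧ G.totalDegree ≤ (u + 1) * l ∧
        ∀ (k : ℕ) (P : MvPolynomial (Fin n) ℂ),
          (∀ i ζ, ∀ j < l * k, (lineHom (s i) ζ P).coeff j = 0) →
          G ^ k * P ∈ Ideal.span (Set.range fun i => X i ^ m - q i) ^ (l * k) := by
  classical
  choose q hq1 hq2 hq3 using fun j : Fin n => exists_hermite he hD
    (fun i => s i j ^ m) (fun i k => eval (s i) (pderiv k (X j ^ m)) - if j = k then 1 else 0)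
  have hqm : ∀ i, (q i).totalDegree < m := fun i => by have := hq1 i; omega
  have hm0 : 0 < m := by omega
  set h : Fin n → MvPolynomial (Fin n) ℂ := fun j => X j ^ m - q j with hh
  have h0 : ∀ i j, eval (s i) (h j) = 0 := fun i j => by simp [hh, hq2]
  have h1 : ∀ i j k, eval (s i) (pderiv k (h j)) = if j = k then 1 else 0 := fun i j k => by
    rw [hh, map_sub, map_sub, hq3]; ring
  refine ⟨q, hqm, fun i j => h0 i j, ?_⟩
  obtain ⟨r, hr1, hr2⟩ := exists_residual he h0 h1
  set J : Ideal (MvPolynomial (Fin n) ℂ) := ∏ i, RingHom.ker (eval (s i)) with hJ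
  have hJmem : ∀ x, x ∈ J ↔ ∀ i, eval (s i) x = 0 := fun x => by
    have := iInf_ker_pow he 1
    simp only [pow_one] at this
    rw [hJ, ← this, Ideal.mem_iInf]
    rfl
  set I := Ideal.span (Set.range h) with hI
  set Q := I ⊔ Ideal.span {r} with hQ
  have hIQ : I ≤ Q := le_sup_left
  have hrQ : r ∈ Q := Submodule.mem_sup_right (Ideal.subset_span rfl)
  have hQJ : Q * J ≤ I := by
    rw [hQ, Ideal.sup_mul]
    refine sup_le Ideal.mul_le_left ?_
    rw [Ideal.span_singleton_mul_le_iff]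
    exact hr2
  have hQQ : Q ≤ I ⊔ Q ^ 2 := by
    refine sup_le le_sup_left ?_
    rw [Ideal.span_singleton_le_iff_mem]
    have : r = r * (1 - r) + r ^ 2 := by ring
    rw [this]
    refine Submodule.add_mem_sup (hr2 _ ((hJmem _).2 fun i => by simp [hr1])) ?_
    exact Ideal.pow_mem_pow hrQ 2
  let M := MvPolynomial (Fin n) ℂ
  let φ : ((Fin n → Fin m) → ℂ) →ₗ[ℂ] M :=
    Fintype.linearCombination ℂ fun b =>
      monomial (Finsupp.equivFunOnFinite.symm fun j => (b j : ℕ)) (1 : ℂ)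
  let ψ : M →ₗ[ℂ] (M ⧸ Q) × (ι → ℂ) :=
    (Ideal.Quotient.mkₐ ℂ Q).toLinearMap.prod (LinearMap.pi fun i => (aeval (s i)).toLinearMap)
  have hψ2 : ∀ P i, (ψ P).2 i = eval (s i) P := fun P i => rfl
  have hψI : ∀ P ∈ I, ψ P = 0 := fun P hP => by
    refine Prod.ext (Ideal.Quotient.eq_zero_iff_mem.2 (hIQ hP)) (funext fun i => ?_)
    rw [hψ2]
    have : I ≤ RingHom.ker (eval (s i)) := by
      rw [hI, Ideal.span_le]
      rintro _ ⟨j, rfl⟩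
      exact h0 i j
    exact this hP
  have hsurj : Function.Surjective (ψ ∘ₗ φ) := by
    rintro ⟨x, w⟩
    obtain ⟨P, rfl⟩ := Ideal.Quotient.mk_surjective x
    set P' : M := (1 - r) * P + r * ∑ i, C (w i) * e i with hP'
    obtain ⟨c, hc⟩ := exists_sub_sum_mem_span hm0 hqm P'
    refine ⟨c, ?_⟩
    have h2 := hψI _ hc
    rw [map_sub, sub_eq_zero] at h2
    have h3 : φ c = ∑ b, c b • monomial (Finsupp.equivFunOnFinite.symm fun j => (b j : ℕ)) 1 :=
      Fintype.linearCombination_apply _ _ _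
    rw [LinearMap.comp_apply, h3, ← h2]
    refine Prod.ext ?_ (funext fun i => ?_)
    · refine Ideal.Quotient.eq.2 ?_
      have : P' - P = r * (∑ i, C (w i) * e i - P) := by rw [hP']; ring
      rw [this]
      exact Ideal.mul_mem_right _ _ hrQ
    · rw [hψ2, hP']
      simp [hr1, he]
  have hfin : Module.Finite ℂ ((M ⧸ Q) × (ι → ℂ)) := Module.Finite.of_surjective _ hsurj
  have hfinQ : Module.Finite ℂ (M ⧸ Q) :=
    Module.Finite.of_surjective (LinearMap.fst ℂ (M ⧸ Q) (ι → ℂ)) LinearMap.fst_surjective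
  have hrank := LinearMap.finrank_le_finrank_of_surjective hsurj
  rw [Module.finrank_prod, Module.finrank_fintype_fun_eq_card, Module.finrank_fintype_fun_eq_card,
    Fintype.card_fun, Fintype.card_fin, Fintype.card_fin] at hrank
  set t := Module.finrank ℂ (M ⧸ Q) with ht
  let bas := Module.finBasis ℂ (M ⧸ Q)
  choose β hβ using fun j => Ideal.Quotient.mk_surjective (bas j)
  have hspan : ∀ P : M, ∃ c : Fin t → ℂ, P - ∑ j, c j • β j ∈ Q := by
    intro P
    refine ⟨fun j => bas.repr (Ideal.Quotient.mk Q P) j, ?_⟩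
    rw [← Ideal.Quotient.eq_zero_iff_mem, map_sub, map_sum]
    have h4 : ∀ (c : ℂ) (p : M), Ideal.Quotient.mk Q (c • p) = c • Ideal.Quotient.mk Q p :=
      fun c p => map_smul (Ideal.Quotient.mkₐ ℂ Q) c p
    simp only [h4, hβ]
    rw [bas.sum_repr, sub_self]
  obtain ⟨G, hGQ, hG0, hGd⟩ := exists_ne_zero_mem_pow hIQ hQQ hspan (u := u) (l := n * u)
    (Nat.mul_pos hn hu) (by omega)
  refine ⟨G, n * u, hG0, Nat.mul_pos hn hu, hGd.trans (by rw [add_mul, one_mul]), ?_⟩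
  intro k P hP
  have hPJ : P ∈ J ^ (n * u * k) := by
    rw [hJ, ← iInf_ker_pow he, Ideal.mem_iInf]
    exact fun i => mem_ker_pow_of_lineHom fun ζ j hj => hP i ζ j hj
  have hGk : G ^ k ∈ Q ^ (n * u * k) := by
    rw [pow_mul]; exact Ideal.pow_mem_pow hGQ k
  have := Ideal.mul_mem_mul hGk hPJ
  rw [← mul_pow] at this
  exact Ideal.pow_right_mono hQJ _ this

end Residual

end Bombieri

namespace Bombieri

open MvPolynomial

section Points

variable {n : ℕ}

theorem exists_lagrange_points {S : Set (Fin n → ℂ)}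
    (hS : ∀ Q : MvPolynomial (Fin n) ℂ, (∀ w ∈ S, eval w Q = 0) → Q = 0) (v : ℕ) :
    ∃ (s : (Fin n → Fin (v + 1)) → Fin n → ℂ)
      (e : (Fin n → Fin (v + 1)) → MvPolynomial (Fin n) ℂ),
      (∀ i, s i ∈ S) ∧ (∀ i j, eval (s i) (e j) = if i = j then 1 else 0) ∧
      ∀ i, (e i).totalDegree ≤ n * v := by
  classical
  let ι := Fin n → Fin (v + 1)
  let W := ι → ℂ
  let ex : ι → (Fin n →₀ ℕ) := fun b => Finsupp.equivFunOnFinite.symm fun j => (b j : ℕ)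
  have hex : Function.Injective ex := fun b b' h => funext fun j => Fin.ext (by
    have := DFunLike.congr_fun h j
    simpa [ex] using this)
  let φ : W →ₗ[ℂ] MvPolynomial (Fin n) ℂ :=
    Fintype.linearCombination ℂ fun b => monomial (ex b) (1 : ℂ)
  have hφ : ∀ c, φ c = ∑ b, c b • monomial (ex b) (1 : ℂ) := fun c =>
    Fintype.linearCombination_apply _ _ _
  have hφcoeff : ∀ c x, coeff (ex x) (φ c) = c x := fun c x => by
    rw [hφ, coeff_sum, Finset.sum_eq_single x]
    · simp
    · intro y _ hy
      rw [coeff_smul, coeff_monomial, if_neg (fun h => hy (hex h)), smul_zero]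
    · simp
  have hφdeg : ∀ c, (φ c).totalDegree ≤ n * v := fun c => by
    rw [hφ]
    refine totalDegree_finsetSum_le fun x _ => ?_
    refine (totalDegree_smul_le _ _).trans ((totalDegree_monomial_le _ _).trans ?_)
    change (ex x).degree ≤ _
    rw [Finsupp.degree_eq_sum]
    simp only [ex, Finsupp.equivFunOnFinite_symm_apply_apply]
    calc ∑ i, (x i : ℕ) ≤ ∑ _i : Fin n, v :=
          Finset.sum_le_sum fun i _ => Nat.lt_succ_iff.1 (x i).2
      _ = n * v := by simp
  let ev : (Fin n → ℂ) → Module.Dual ℂ W := fun w => (aeval w).toLinearMap ∘ₗ φ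
  have hev : ∀ w c, ev w c = eval w (φ c) := fun w c => rfl
  have htop : Submodule.span ℂ (ev '' S) = ⊤ := by
    have h1 : (Submodule.span ℂ (ev '' S)).dualCoannihilator = ⊥ := by
      rw [eq_bot_iff]
      intro c hc
      rw [Submodule.mem_dualCoannihilator] at hc
      have h2 : φ c = 0 := hS _ fun w hw => hc (ev w) (Submodule.subset_span ⟨w, hw, rfl⟩)
      rw [Submodule.mem_bot]
      funext x
      rw [← hφcoeff c x, h2, coeff_zero, Pi.zero_apply]
    rw [← Subspace.dualCoannihilator_dualAnnihilator_eq (W := Submodule.span ℂ (ev '' S)), h1,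
      Submodule.dualAnnihilator_bot]
  obtain ⟨b, hbS, hbspan, hbli⟩ := exists_linearIndependent ℂ (ev '' S)
  rw [htop] at hbspan
  let B₀ : Module.Basis b ℂ (Module.Dual ℂ W) :=
    Module.Basis.mk hbli (by rw [Subtype.range_coe, hbspan])
  have hfinb : Finite b := Module.Finite.finite_basis B₀
  have := Fintype.ofFinite b
  have hcard : Fintype.card b = Fintype.card ι := by
    rw [← Module.finrank_eq_card_basis B₀, Subspace.dual_finrank_eq,
      Module.finrank_fintype_fun_eq_card]
  let B : Module.Basis ι ℂ (Module.Dual ℂ W) := B₀.reindex (Fintype.equivOfCardEq hcard)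
  have hB : ∀ i, ∃ w ∈ S, ev w = B i := fun i => by
    have h3 : B i ∈ b := by
      simp [B, B₀]
    exact hbS h3
  choose s hsS hs using hB
  refine ⟨s, fun i => φ ((Module.evalEquiv ℂ W).symm (B.dualBasis i)), hsS, fun i j => ?_,
    fun i => hφdeg _⟩
  rw [← hev, hs, Module.apply_evalEquiv_symm_apply, Module.Basis.dualBasis_apply_self]

theorem pow_le_pow_add (u c n : ℕ) : (u + c) ^ n ≤ u ^ n + n * c * (u + c) ^ (n - 1) := by
  induction n with
  | zero => simp
  | succ n ih =>
    have h1 : u ^ n ≤ (u + c) ^ n := Nat.pow_le_pow_left (Nat.le_add_right _ _) _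
    have h2 : n * c * (u + c) ^ (n - 1) * (u + c) = n * c * (u + c) ^ n := by
      cases n with
      | zero => simp
      | succ n => rw [Nat.add_sub_cancel, pow_succ]; ring
    calc (u + c) ^ (n + 1) = (u + c) ^ n * (u + c) := pow_succ _ _
      _ ≤ (u ^ n + n * c * (u + c) ^ (n - 1)) * (u + c) := Nat.mul_le_mul_right _ ih
      _ = u ^ (n + 1) + (c * u ^ n + n * c * (u + c) ^ n) := by rw [add_mul, h2]; ring
      _ ≤ u ^ (n + 1) + (c * (u + c) ^ n + n * c * (u + c) ^ n) := by gcongr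
      _ = _ := by rw [Nat.add_sub_cancel]; ring

/-- Finitely many points of a Zariski dense set, a complete intersection of degree `m` through
them and a multiplier `G` of small degree. -/
theorem exists_points_multiplier (hn : 0 < n) {S : Set (Fin n → ℂ)}
    (hS : ∀ Q : MvPolynomial (Fin n) ℂ, (∀ w ∈ S, eval w Q = 0) → Q = 0) (c : ℕ) :
    ∃ (N : ℕ) (s : Fin N → Fin n → ℂ) (m u l : ℕ) (q : Fin n → MvPolynomial (Fin n) ℂ)
      (G : MvPolynomial (Fin n) ℂ), 0 < N ∧ (∀ i, s i ∈ S) ∧ m = u + 1 + c ∧ 0 < l ∧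
      (∀ i, (q i).totalDegree < m) ∧ (∀ i j, X j ^ m - q j ∈ RingHom.ker (eval (s i))) ∧
      G ≠ 0 ∧ G.totalDegree ≤ (u + 1) * l ∧
      ∀ (k : ℕ) (P : MvPolynomial (Fin n) ℂ),
        (∀ i ζ, ∀ j < l * k, (lineHom (s i) ζ P).coeff j = 0) →
        G ^ k * P ∈ Ideal.span (Set.range fun i => X i ^ m - q i) ^ (l * k) := by
  classical
  set v := n * (c + 1) * (2 * n) ^ (n - 1) with hv
  obtain ⟨s, e, hs, he, hdeg⟩ := exists_lagrange_points hS v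
  have hpow : 0 < (2 * n) ^ (n - 1) := by positivity
  have hcv : c + 1 ≤ v := by
    rw [hv]
    calc c + 1 ≤ n * (c + 1) := Nat.le_mul_of_pos_left _ hn
      _ ≤ _ := Nat.le_mul_of_pos_right _ hpow
  have hnv : v ≤ n * v := Nat.le_mul_of_pos_left _ hn
  obtain ⟨u, hu⟩ : ∃ u, 2 * (n * v) + 2 = u + 1 + c := ⟨2 * (n * v) + 2 - 1 - c, by omega⟩
  have hm : 2 * (n * v) + 2 ≤ 2 * n * (v + 1) := by
    have : 2 * n * (v + 1) = 2 * (n * v) + 2 * n := by ring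
    omega
  have hcount : (2 * (n * v) + 2) ^ n < u ^ n + Fintype.card (Fin n → Fin (v + 1)) := by
    have h1 := pow_le_pow_add u (c + 1) n
    have h2 : u + (c + 1) = 2 * (n * v) + 2 := by omega
    rw [h2] at h1
    refine h1.trans_lt (Nat.add_lt_add_left ?_ _)
    rw [Fintype.card_fun, Fintype.card_fin, Fintype.card_fin]
    calc n * (c + 1) * (2 * (n * v) + 2) ^ (n - 1)
        ≤ n * (c + 1) * (2 * n * (v + 1)) ^ (n - 1) := by gcongr
      _ = v * (v + 1) ^ (n - 1) := by rw [mul_pow, ← mul_assoc]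
      _ < (v + 1) * (v + 1) ^ (n - 1) := by
        exact Nat.mul_lt_mul_of_pos_right (Nat.lt_succ_self _) (by positivity)
      _ = (v + 1) ^ n := by rw [← pow_succ', Nat.sub_add_cancel hn]
  obtain ⟨q, hq, hker, G, l, hG, hl, hGd, hmul⟩ := exists_lagrange_multiplier hn he hdeg le_rfl
    (u := u) (by omega) hcount
  let E := (Fintype.equivFin (Fin n → Fin (v + 1))).symm
  refine ⟨_, fun i => s (E i), 2 * (n * v) + 2, u, l, q, G, Fintype.card_pos, fun i => hs _, hu, hl,
    hq, fun i j => hker _ j, hG, hGd, fun k P hP => hmul k P fun i ζ j hj => ?_⟩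
  have := hP (E.symm i) ζ j hj
  simpa using this

end Points

end Bombieri

namespace Bombieri

open MvPolynomial

section Approximation

/-- The `L¹`-size of the fundamental interpolation polynomials at roots of unity. -/
theorem norm_inv_mul_geom_sum_le {N : ℕ} {x : ℂ} (hx : ‖x‖ ≤ 1 / 2) :
    ‖(N : ℂ)⁻¹ * ∑ k ∈ Finset.range N, x ^ k‖ ≤ 2 / N := by
  have h : ‖∑ k ∈ Finset.range N, x ^ k‖ ≤ 2 := by
    refine (norm_sum_le _ _).trans ?_
    calc ∑ k ∈ Finset.range N, ‖x ^ k‖ ≤ ∑ k ∈ Finset.range N, (1 / 2 : ℝ) ^ k := by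
          gcongr with k _
          rw [norm_pow]; gcongr
      _ ≤ 2 := sum_geometric_two_le N
  rw [norm_mul, norm_inv, Complex.norm_natCast, div_eq_inv_mul]
  gcongr

theorem interpolation_pow {N : ℕ} (hN : 0 < N) {ζ : ℂ} (hζ : IsPrimitiveRoot ζ N) {R : ℂ}
    (hR : R ≠ 0) (t : ℂ) {j : ℕ} (hj : j < N) :
    ∑ i : Fin N, (N : ℂ)⁻¹ * (∑ k ∈ Finset.range N, (t / (R * ζ ^ (i : ℕ))) ^ k) *
      (R * ζ ^ (i : ℕ)) ^ j = t ^ j := by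
  have hζ0 : ζ ≠ 0 := hζ.ne_zero hN.ne'
  have hN0 : (N : ℂ) ≠ 0 := by exact_mod_cast hN.ne'
  have key : ∀ k < N, ∑ i : Fin N, (ζ ^ j / ζ ^ k) ^ (i : ℕ) = if k = j then (N : ℂ) else 0 := by
    intro k hk
    split_ifs with h
    · subst h
      rw [div_self (pow_ne_zero _ hζ0)]; simp
    · rw [Fin.sum_univ_eq_sum_range fun i => (ζ ^ j / ζ ^ k) ^ i]
      have h1 : ζ ^ j / ζ ^ k ≠ 1 := fun h2 => by
        rw [div_eq_one_iff_eq (pow_ne_zero _ hζ0)] at h2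
        exact h (hζ.pow_inj hj hk h2).symm
      rw [geom_sum_eq h1, div_pow, ← pow_mul, ← pow_mul, mul_comm j, mul_comm k, pow_mul, pow_mul,
        hζ.pow_eq_one]
      simp
  calc _ = ∑ k ∈ Finset.range N, ((N : ℂ)⁻¹ * (t / R) ^ k * R ^ j) *
        ∑ i : Fin N, (ζ ^ j / ζ ^ k) ^ (i : ℕ) := by
        simp_rw [Finset.mul_sum, Finset.sum_mul]
        rw [Finset.sum_comm]
        refine Finset.sum_congr rfl fun k _ => Finset.sum_congr rfl fun i _ => ?_
        rw [div_pow, div_pow, div_pow, mul_pow, mul_pow, ← pow_mul, ← pow_mul, ← pow_mul,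
          ← pow_mul, mul_comm j, mul_comm k]
        field_simp
    _ = ∑ k ∈ Finset.range N, if k = j then t ^ j else 0 := by
        refine Finset.sum_congr rfl fun k hk => ?_
        rw [key k (Finset.mem_range.1 hk)]
        split_ifs with h
        · subst h; rw [div_pow]; field_simp
        · simp
    _ = t ^ j := by
        rw [Finset.sum_ite_eq' (Finset.range N) j fun _ => t ^ j]
        simp [hj]

theorem norm_sub_taylor_le {r M : ℝ} (hr : 0 < r) {g : ℂ → ℂ} (hg : Differentiable ℂ g)
    (hM : ∀ t, ‖t‖ ≤ 2 * r → ‖g t‖ ≤ M) (N : ℕ) {t : ℂ} (ht : ‖t‖ ≤ r) :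
    ‖(∑ j ∈ Finset.range N, (j.factorial : ℂ)⁻¹ * iteratedDeriv j g 0 * t ^ j) - g t‖ ≤
      M * (1 / 2) ^ N * 2 := by
  have h1 : HasSum (fun j : ℕ => (j.factorial : ℂ)⁻¹ * iteratedDeriv j g 0 * t ^ j) (g t) := by
    have := Complex.hasSum_taylorSeries_of_entire hg 0 t
    simpa [mul_assoc, mul_comm, mul_left_comm] using this
  have h2 : ∀ j : ℕ, ‖(j.factorial : ℂ)⁻¹ * iteratedDeriv j g 0 * t ^ j‖ ≤ M * (1 / 2) ^ j := by
    intro j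
    have h3 := Complex.norm_iteratedDeriv_le_of_forall_mem_sphere_norm_le (c := 0) (f := g) j
      (show 0 < 2 * r by positivity) hg.diffContOnCl
      (fun z hz => hM z (by simpa using (mem_sphere_iff_norm.1 hz).le))
    have hj : (0 : ℝ) < j.factorial := by exact_mod_cast j.factorial_pos
    rw [norm_mul, norm_mul, norm_inv, Complex.norm_natCast, norm_pow]
    calc (j.factorial : ℝ)⁻¹ * ‖iteratedDeriv j g 0‖ * ‖t‖ ^ j
        ≤ (j.factorial : ℝ)⁻¹ * (j.factorial * M / (2 * r) ^ j) * r ^ j := by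
          have h0 : 0 ≤ j.factorial * M / (2 * r) ^ j := (norm_nonneg _).trans h3
          gcongr
      _ = M * (1 / 2) ^ j := by rw [mul_pow, one_div, inv_pow]; field_simp
  refine (norm_sub_le_of_geometric_bound_of_hasSum (by norm_num) h2 h1 N).trans (le_of_eq ?_)
  norm_num
  ring

/-- Interpolation at suitably many roots of unity is uniformly accurate on bounded families of
entire functions. -/
theorem exists_interpolation {ρ M ε : ℝ} (hρ : 0 < ρ) (hM : 0 ≤ M) (hε : 0 < ε) :
    ∃ (N : ℕ) (a : Fin N → ℂ), 0 < N ∧ (∀ i, ‖a i‖ = 2 * ρ) ∧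
      ∀ g : ℂ → ℂ, Differentiable ℂ g → (∀ t, ‖t‖ ≤ 4 * ρ → ‖g t‖ ≤ M) → ∀ t, ‖t‖ ≤ ρ →
        ‖g t - ∑ i, (N : ℂ)⁻¹ * (∑ k ∈ Finset.range N, (t / a i) ^ k) * g (a i)‖ ≤ ε := by
  obtain ⟨N, hN⟩ := exists_pow_lt_of_lt_one (show 0 < ε / (6 * (M + 1)) by positivity)
    (show (1 / 2 : ℝ) < 1 by norm_num)
  replace hN : (1 / 2 : ℝ) ^ (N + 1) < ε / (6 * (M + 1)) :=
    (pow_le_pow_of_le_one (by norm_num) (by norm_num) (Nat.le_succ N)).trans_lt hN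
  generalize hN' : N + 1 = N' at hN
  have hN0 : 0 < N' := by omega
  have hζ := Complex.isPrimitiveRoot_exp N' hN0.ne'
  set ζ := Complex.exp (2 * Real.pi * Complex.I / N')
  have hζ1 : ‖ζ‖ = 1 := hζ.norm'_eq_one hN0.ne'
  have ha : ∀ i : Fin N', ‖((2 * ρ : ℝ) : ℂ) * ζ ^ (i : ℕ)‖ = 2 * ρ := fun i => by
    rw [norm_mul, norm_pow, hζ1, one_pow, mul_one, Complex.norm_real, Real.norm_of_nonneg]
    positivity
  refine ⟨N', fun i => ((2 * ρ : ℝ) : ℂ) * ζ ^ (i : ℕ), hN0, ha, fun g hg hgM t ht => ?_⟩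
  set a : Fin N' → ℂ := fun i => ((2 * ρ : ℝ) : ℂ) * ζ ^ (i : ℕ)
  set T : ℂ → ℂ := fun t => ∑ j ∈ Finset.range N', (j.factorial : ℂ)⁻¹ * iteratedDeriv j g 0 * t ^ j
  set η := M * (1 / 2) ^ N' * 2
  have hT : ∀ t, ‖t‖ ≤ 2 * ρ → ‖T t - g t‖ ≤ η := fun t ht =>
    norm_sub_taylor_le (by positivity) hg (fun t ht => hgM t (by linarith)) N' ht
  set L : Fin N' → ℂ := fun i => (N' : ℂ)⁻¹ * (∑ k ∈ Finset.range N', (t / a i) ^ k)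
  have hL : ∀ i, ‖L i‖ ≤ 2 / N' := fun i => norm_inv_mul_geom_sum_le (by
    rw [norm_div, ha, div_le_iff₀ (by positivity)]; linarith)
  have hexact : ∑ i, L i * T (a i) = T t := by
    simp only [T, Finset.mul_sum]
    rw [Finset.sum_comm]
    refine Finset.sum_congr rfl fun j hj => ?_
    rw [← interpolation_pow hN0 hζ (R := ((2 * ρ : ℝ) : ℂ)) (by
      rw [Complex.ofReal_ne_zero]; positivity) t (Finset.mem_range.1 hj), Finset.mul_sum]
    refine Finset.sum_congr rfl fun i _ => ?_
    simp only [L, a]; ring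
  have h1 : g t - ∑ i, L i * g (a i) = -(T t - g t) + ∑ i, L i * (T (a i) - g (a i)) := by
    simp only [mul_sub, Finset.sum_sub_distrib, hexact]; ring
  have hη : 0 ≤ η := by positivity
  have hN1 : (0 : ℝ) < N' := by exact_mod_cast hN0
  have h2 : ‖∑ i, L i * (T (a i) - g (a i))‖ ≤ 2 * η := by
    refine (norm_sum_le _ _).trans ?_
    calc ∑ i, ‖L i * (T (a i) - g (a i))‖ ≤ ∑ i : Fin N', 2 / (N' : ℝ) * η := by
          gcongr with i _
          rw [norm_mul]
          exact mul_le_mul (hL i) (hT _ (ha i).le) (norm_nonneg _) (by positivity)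
      _ = 2 * η := by simp; field_simp
  have h3 : 3 * η ≤ ε := by
    have h4 : M * (1 / 2) ^ N' ≤ (M + 1) * (ε / (6 * (M + 1))) := by gcongr; linarith
    have h5 : (M + 1) * (ε / (6 * (M + 1))) = ε / 6 := by field_simp
    simp only [η]; linarith
  change ‖g t - ∑ i, L i * g (a i)‖ ≤ ε
  rw [h1]
  refine (norm_add_le _ _).trans ?_
  rw [norm_neg]
  have := hT t (by linarith)
  linarith

theorem coeffNorm_rename_le {σ τ : Type*} {r : ℝ} (hr : 0 ≤ r) (e : σ → τ)
    (P : MvPolynomial σ ℂ) : coeffNorm r (rename e P) ≤ coeffNorm r P := by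
  have := coeffNorm_linearMap_le (r := r) (B := 1) hr (rename e : _ →ₐ[ℂ] _).toLinearMap P
    fun a _ => by
      rw [AlgHom.toLinearMap_apply, rename_monomial, coeffNorm_monomial, Finsupp.degree_mapDomain]
      simp
  simpa using this

/-- An entire function is approximated on polydiscs by polynomials of controlled size. -/
theorem exists_polynomial_approx {ρ : ℝ} (hρ : 0 < ρ) {M : ℝ} (hM : 0 ≤ M) :
    ∀ (n : ℕ) {F : (Fin n → ℂ) → ℂ}, Differentiable ℂ F →
      (∀ z, ‖z‖ ≤ 4 * ρ → ‖F z‖ ≤ M) → ∀ ε > 0, ∃ P : MvPolynomial (Fin n) ℂ,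
        coeffNorm ρ P ≤ 2 ^ n * M ∧ ∀ z, ‖z‖ ≤ ρ → ‖F z - eval z P‖ ≤ ε := by
  intro n
  induction n with
  | zero =>
    intro F _ hFM ε hε
    refine ⟨C (F 0), ?_, fun z _ => ?_⟩
    · rw [coeffNorm_C]; simpa using hFM 0 (by simp; positivity)
    · rw [Subsingleton.elim z 0]; simpa using hε.le
  | succ n ih =>
    intro F hF hFM ε hε
    obtain ⟨N, a, hN, ha, hinterp⟩ := exists_interpolation hρ hM (show 0 < ε / 2 by positivity)
    have hcons : ∀ (t : ℂ) (z : Fin n → ℂ) (b : ℝ), 0 ≤ b → ‖t‖ ≤ b → ‖z‖ ≤ b →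
        ‖(Fin.cons t z : Fin (n + 1) → ℂ)‖ ≤ b := fun t z b hb h1 h2 => by
      rw [pi_norm_le_iff_of_nonneg hb] at h2 ⊢
      exact fun i => Fin.cases h1 h2 i
    have hdc : ∀ t : ℂ, Differentiable ℂ fun z : Fin n → ℂ => (Fin.cons t z : Fin (n + 1) → ℂ) :=
      fun t => differentiable_pi.2 fun i => Fin.cases (by simp) (fun i => by
        simpa using differentiable_apply i) i
    have hdc' : ∀ z : Fin n → ℂ, Differentiable ℂ fun t : ℂ => (Fin.cons t z : Fin (n + 1) → ℂ) :=
      fun z => differentiable_pi.2 fun i => Fin.cases (by simp) (fun i => by simp) i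
    have h1 : ∀ i, ∃ P : MvPolynomial (Fin n) ℂ, coeffNorm ρ P ≤ 2 ^ n * M ∧
        ∀ z, ‖z‖ ≤ ρ → ‖F (Fin.cons (a i) z) - eval z P‖ ≤ ε / 4 := fun i =>
      ih (hF.comp (hdc (a i))) (fun z hz => hFM _ (hcons _ _ _ (by positivity)
        (by rw [ha]; linarith) hz)) _ (by positivity)
    choose P hP hPa using h1
    have hN1 : (0 : ℝ) < N := by exact_mod_cast hN
    have ha0 : ∀ i, a i ≠ 0 := fun i h => by
      have := ha i
      rw [h, norm_zero] at this
      linarith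
    let Λ : Fin N → MvPolynomial (Fin (n + 1)) ℂ := fun i =>
      (N : ℂ)⁻¹ • ∑ k ∈ Finset.range N, ((a i)⁻¹ • X 0) ^ k
    have hΛ : ∀ i, coeffNorm ρ (Λ i) ≤ 2 / N := fun i => by
      rw [coeffNorm_smul, norm_inv, Complex.norm_natCast, div_eq_inv_mul]
      gcongr
      refine (coeffNorm_sum_le hρ.le _ _).trans (le_trans ?_ (sum_geometric_two_le N))
      refine Finset.sum_le_sum fun k _ => (coeffNorm_pow_le hρ.le _ _).trans ?_
      rw [coeffNorm_smul, coeffNorm_X, norm_inv, ha]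
      refine le_of_eq ?_
      congr 1
      field_simp
    have hΛe : ∀ i z, eval z (Λ i) = (N : ℂ)⁻¹ * ∑ k ∈ Finset.range N, (z 0 / a i) ^ k := by
      intro i z
      simp [Λ, smul_eval, div_eq_inv_mul]
    refine ⟨∑ i, Λ i * rename Fin.succ (P i), ?_, fun z hz => ?_⟩
    · refine (coeffNorm_sum_le hρ.le _ _).trans ?_
      calc ∑ i, coeffNorm ρ (Λ i * rename Fin.succ (P i)) ≤ ∑ i : Fin N, 2 / N * (2 ^ n * M) := by
            refine Finset.sum_le_sum fun i _ => (coeffNorm_mul_le hρ.le _ _).trans ?_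
            exact mul_le_mul (hΛ i) ((coeffNorm_rename_le hρ.le _ _).trans (hP i))
              (coeffNorm_nonneg hρ.le _) (by positivity)
        _ = 2 ^ (n + 1) * M := by simp; field_simp; ring
    · have hz0 : ‖z 0‖ ≤ ρ := (norm_le_pi_norm z 0).trans hz
      have hzt : ‖Fin.tail z‖ ≤ ρ := (pi_norm_le_iff_of_nonneg hρ.le).2 fun i =>
        (norm_le_pi_norm z i.succ).trans hz
      have h2 := hinterp (fun t => F (Fin.cons t (Fin.tail z))) (hF.comp (hdc' _))
        (fun t ht => hFM _ (hcons _ _ _ (by positivity) ht (by linarith))) (z 0) hz0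
      rw [Fin.cons_self_tail] at h2
      have h3 : F z - eval z (∑ i, Λ i * rename Fin.succ (P i)) =
          (F z - ∑ i, (N : ℂ)⁻¹ * (∑ k ∈ Finset.range N, (z 0 / a i) ^ k) *
            F (Fin.cons (a i) (Fin.tail z))) +
          ∑ i, (N : ℂ)⁻¹ * (∑ k ∈ Finset.range N, (z 0 / a i) ^ k) *
            (F (Fin.cons (a i) (Fin.tail z)) - eval (Fin.tail z) (P i)) := by
        simp only [map_sum, map_mul, hΛe, eval_rename, mul_sub, Finset.sum_sub_distrib]
        rw [sub_add_sub_cancel]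
        rfl
      rw [h3]
      refine (norm_add_le _ _).trans ?_
      have h4 : ‖∑ i, (N : ℂ)⁻¹ * (∑ k ∈ Finset.range N, (z 0 / a i) ^ k) *
            (F (Fin.cons (a i) (Fin.tail z)) - eval (Fin.tail z) (P i))‖ ≤ ε / 2 := by
        refine (norm_sum_le _ _).trans ?_
        calc _ ≤ ∑ i : Fin N, 2 / (N : ℝ) * (ε / 4) := by
              refine Finset.sum_le_sum fun i _ => ?_
              rw [norm_mul]
              refine mul_le_mul (norm_inv_mul_geom_sum_le ?_) (hPa i _ hzt) (norm_nonneg _)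
                (by positivity)
              rw [norm_div, ha, div_le_iff₀ (by positivity)]; linarith
          _ = ε / 2 := by simp; field_simp; norm_num
      linarith

end Approximation

end Bombieri

namespace Bombieri

open MvPolynomial

section Schwarz

variable {n : ℕ}

theorem iteratedDeriv_polynomial_eval (p : Polynomial ℂ) (j : ℕ) :
    iteratedDeriv j (fun t => p.eval t) 0 = j.factorial * p.coeff j := by
  have h : ∀ (j : ℕ) (p : Polynomial ℂ), iteratedDeriv j (fun t => p.eval t) =
      fun t => (Polynomial.derivative^[j] p).eval t := by
    intro j
    induction j with
    | zero => intro p; simp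
    | succ j ih =>
      intro p
      have h1 : deriv (fun t => p.eval t) = fun t => (Polynomial.derivative p).eval t := by
        funext t; exact p.deriv
      rw [iteratedDeriv_succ', h1, ih]
      rfl
  rw [h]
  beta_reduce
  rw [← Polynomial.coeff_zero_eq_eval_zero, Polynomial.coeff_iterate_derivative, zero_add,
    Nat.descFactorial_self, nsmul_eq_mul]

theorem differentiable_line (s ζ : Fin n → ℂ) : Differentiable ℂ fun t : ℂ => s + t • ζ := by
  fun_prop

theorem differentiable_eval (P : MvPolynomial (Fin n) ℂ) :
    Differentiable ℂ fun z => eval z P := by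
  induction P using MvPolynomial.induction_on with
  | C a => simp
  | add p q hp hq => simp only [map_add]; exact hp.add hq
  | mul_X p i hp => simp only [map_mul, eval_X]; exact hp.mul (differentiable_apply i)

theorem norm_coeff_lineHom_le {s : Fin n → ℂ} {ρ : ℝ} (hs : ‖s‖ + 1 ≤ ρ) (ζ : Fin n → ℂ)
    {F : (Fin n → ℂ) → ℂ} (hF : Differentiable ℂ F) {j : ℕ}
    (hFj : iteratedDeriv j (fun t : ℂ => F (s + t • ζ)) 0 = 0) {P : MvPolynomial (Fin n) ℂ} {ε : ℝ}
    (hP : ∀ z, ‖z‖ ≤ ρ → ‖F z - eval z P‖ ≤ ε) :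
    ‖(lineHom s ζ P).coeff j‖ ≤ (‖ζ‖ + 1) ^ j * ε := by
  have hd : Differentiable ℂ fun t : ℂ => F (s + t • ζ) - (lineHom s ζ P).eval t :=
    (hF.comp (differentiable_line s ζ)).sub (lineHom s ζ P).differentiable
  have hδ : (0 : ℝ) < (‖ζ‖ + 1)⁻¹ := by positivity
  have h1 := Complex.norm_iteratedDeriv_le_of_forall_mem_sphere_norm_le (c := 0) (C := ε) j hδ
    hd.diffContOnCl fun t ht => by
      have ht' : ‖t‖ = (‖ζ‖ + 1)⁻¹ := by simpa using ht
      rw [eval_lineHom]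
      refine hP (s + t • ζ) ((norm_add_le _ _).trans (le_trans ?_ hs))
      rw [norm_smul, ht']
      gcongr
      rw [inv_mul_le_iff₀ (by positivity)]
      linarith
  have h2 : iteratedDeriv j (fun t : ℂ => F (s + t • ζ) - (lineHom s ζ P).eval t) 0 =
      -(j.factorial * (lineHom s ζ P).coeff j) := by
    have := iteratedDeriv_sub (n := j) (x := (0 : ℂ)) (f := fun t : ℂ => F (s + t • ζ))
      (g := fun t : ℂ => (lineHom s ζ P).eval t)
      (hF.comp (differentiable_line s ζ)).contDiff.contDiffAt
      (lineHom s ζ P).differentiable.contDiff.contDiffAt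
    rw [hFj, iteratedDeriv_polynomial_eval, zero_sub] at this
    exact this
  have hj : (0 : ℝ) < j.factorial := by exact_mod_cast j.factorial_pos
  rw [h2, norm_neg, norm_mul, Complex.norm_natCast, mul_div_assoc, inv_pow, div_inv_eq_mul] at h1
  rw [mul_comm]
  exact le_of_mul_le_mul_left h1 hj

/-- A Schwarz lemma for an entire function multiplied by a polynomial of small degree. -/
theorem exists_norm_eval_pow_mul_le {N m l : ℕ} {s : Fin N → Fin n → ℂ}
    {q : Fin n → MvPolynomial (Fin n) ℂ} {G : MvPolynomial (Fin n) ℂ} (hm : 0 < m)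
    (hq : ∀ i, (q i).totalDegree < m) (hs : ∀ i j, X j ^ m - q j ∈ RingHom.ker (eval (s i)))
    (hG : ∀ k P, (∀ i ζ, ∀ j < l * k, (lineHom (s i) ζ P).coeff j = 0) →
      G ^ k * P ∈ Ideal.span (Set.range fun i => X i ^ m - q i) ^ (l * k))
    {r : ℝ} (hr : 1 ≤ r) :
    ∃ C ≥ r, ∀ (k : ℕ) (F : (Fin n → ℂ) → ℂ), Differentiable ℂ F →
      (∀ i ζ, ∀ j < l * k, iteratedDeriv j (fun t : ℂ => F (s i + t • ζ)) 0 = 0) →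
      ∀ ρ ≥ C, ∀ M, 0 ≤ M → (∀ z, ‖z‖ ≤ 4 * ρ → ‖F z‖ ≤ M) → ∀ z, ‖z‖ ≤ r →
        ‖eval z G ^ k * F z‖ ≤
          2 * (C / ρ) ^ (m * (l * k)) * (coeffNorm ρ G ^ k * (2 ^ n * M)) := by
  obtain ⟨C₀, hC₀, hproj⟩ := exists_projection hm hq hr
  set S : ℝ := ∑ i, (‖s i‖ + 1)
  have hS0 : 0 ≤ S := Finset.sum_nonneg fun i _ => by positivity
  have hS : ∀ i, ‖s i‖ + 1 ≤ S := fun i =>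
    Finset.single_le_sum (f := fun i => ‖s i‖ + 1) (fun i _ => by positivity) (Finset.mem_univ i)
  refine ⟨C₀ + S, by linarith, fun k F hF hFj ρ hρ M hM hFM z hz => ?_⟩
  obtain ⟨π, hfin, hπ1, hπ2, hπ3⟩ := hproj (l * k)
  have hρ0 : 0 < ρ := by linarith
  set I := Ideal.span (Set.range fun i => X i ^ m - q i)
  have hI : ∀ i, I ≤ RingHom.ker (eval (s i)) := fun i => by
    rw [Ideal.span_le]
    rintro _ ⟨j, rfl⟩
    exact hs i j
  have hjet : ∀ P i ζ, ∀ j < l * k,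
      (lineHom (s i) ζ (π P)).coeff j = (lineHom (s i) ζ P).coeff j := fun P i ζ j hj => by
    have := lineHom_coeff_eq_zero_of_mem_pow (s i) ζ (Ideal.pow_right_mono (hI i) _ (hπ1 P)) hj
    rw [map_sub, Polynomial.coeff_sub, sub_eq_zero] at this
    exact this.symm
  let V := LinearMap.range π
  let θ : V →ₗ[ℂ] ℂ := (aeval z).toLinearMap ∘ₗ π ∘ₗ LinearMap.mulLeft ℂ (G ^ k) ∘ₗ V.subtype
  let J : (Fin N × (Fin n → ℂ) × Fin (l * k)) → V →ₗ[ℂ] ℂ := fun a =>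
    Polynomial.lcoeff ℂ (a.2.2 : ℕ) ∘ₗ (lineHom (s a.1) a.2.1).toLinearMap ∘ₗ V.subtype
  have hθ : θ ∈ Submodule.span ℂ (Set.range J) := by
    refine FiniteDimensional.mem_span_of_iInf_ker_le_ker fun v hv => ?_
    rw [Submodule.mem_iInf] at hv
    have h1 : G ^ k * (v : MvPolynomial (Fin n) ℂ) ∈ I ^ (l * k) :=
      hG k v fun i ζ j hj => hv (i, ζ, ⟨j, hj⟩)
    change aeval z (π (G ^ k * (v : MvPolynomial (Fin n) ℂ))) = 0
    rw [hπ2 _ h1, map_zero]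
  have hsmall : ∀ θ' ∈ Submodule.span ℂ (Set.range J), ∃ B, 0 ≤ B ∧ ∀ P ε, 0 ≤ ε →
      (∀ z, ‖z‖ ≤ ρ → ‖F z - eval z P‖ ≤ ε) → ‖θ' (π.rangeRestrict P)‖ ≤ B * ε := by
    intro θ' hθ'
    induction hθ' using Submodule.span_induction with
    | mem x hx =>
      obtain ⟨⟨i, ζ, j⟩, rfl⟩ := hx
      refine ⟨(‖ζ‖ + 1) ^ (j : ℕ), by positivity, fun P ε _ hP => ?_⟩
      change ‖(lineHom (s i) ζ (π P)).coeff j‖ ≤ _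
      rw [hjet P i ζ j j.2]
      exact norm_coeff_lineHom_le ((hS i).trans (by linarith)) ζ hF (hFj i ζ j j.2) hP
    | zero => exact ⟨0, le_rfl, fun P ε _ _ => by simp⟩
    | add x y _ _ hx hy =>
      obtain ⟨B, hB, hx⟩ := hx
      obtain ⟨B', hB', hy⟩ := hy
      refine ⟨B + B', by positivity, fun P ε hε hP => ?_⟩
      rw [LinearMap.add_apply, add_mul]
      exact (norm_add_le _ _).trans (add_le_add (hx P ε hε hP) (hy P ε hε hP))
    | smul a x _ hx =>
      obtain ⟨B, hB, hx⟩ := hx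
      refine ⟨‖a‖ * B, by positivity, fun P ε hε hP => ?_⟩
      rw [LinearMap.smul_apply, smul_eq_mul, norm_mul, mul_assoc]
      exact mul_le_mul_of_nonneg_left (hx P ε hε hP) (norm_nonneg _)
  obtain ⟨B, hB, hBle⟩ := hsmall θ hθ
  have hC0 : 0 < C₀ := by linarith
  refine le_of_forall_pos_le_add fun δ hδ => ?_
  set A := ‖eval z G ^ k‖ + B + 1
  have hA : 0 < A := by positivity
  obtain ⟨P, hPn, hPa⟩ := exists_polynomial_approx hρ0 hM n hF hFM (δ / A) (by positivity)
  have h1 : eval z G ^ k * F z = eval z G ^ k * (F z - eval z P) +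
      eval z (G ^ k * P - π (G ^ k * P)) + eval z (π (G ^ k * P)) := by
    simp only [map_sub, map_mul, map_pow]; ring
  have h2 : eval z (π (G ^ k * P)) = θ (π.rangeRestrict P) := by
    change _ = aeval z (π (G ^ k * π P))
    have : π (G ^ k * P - G ^ k * π P) = 0 := by
      rw [← mul_sub]
      exact hπ2 _ (Ideal.mul_mem_left _ _ (hπ1 P))
    rw [map_sub, sub_eq_zero] at this
    rw [← this]
    rfl
  have h3 : ‖eval z (G ^ k * P - π (G ^ k * P))‖ ≤
      2 * ((C₀ + S) / ρ) ^ (m * (l * k)) * (coeffNorm ρ G ^ k * (2 ^ n * M)) := by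
    refine (norm_eval_le_coeffNorm (fun i => (norm_le_pi_norm z i).trans hz) _).trans
      ((hπ3 ρ (by linarith) _).trans ?_)
    have h4 : coeffNorm ρ (G ^ k * P) ≤ coeffNorm ρ G ^ k * (2 ^ n * M) :=
      (coeffNorm_mul_le hρ0.le _ _).trans (mul_le_mul (coeffNorm_pow_le hρ0.le _ _) hPn
        (coeffNorm_nonneg hρ0.le _) (pow_nonneg (coeffNorm_nonneg hρ0.le _) _))
    have h5 : C₀ ≤ C₀ + S := by linarith
    have := coeffNorm_nonneg hρ0.le (G ^ k * P)
    gcongr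
  have h4 : ‖eval z G ^ k * (F z - eval z P)‖ ≤ ‖eval z G ^ k‖ * (δ / A) := by
    rw [norm_mul]
    exact mul_le_mul_of_nonneg_left (hPa z (by linarith)) (norm_nonneg _)
  have h5 : ‖eval z (π (G ^ k * P))‖ ≤ B * (δ / A) := by
    rw [h2]
    exact hBle P _ (by positivity) hPa
  have h6 : ‖eval z G ^ k‖ * (δ / A) + B * (δ / A) ≤ δ := by
    rw [← add_mul, mul_div_assoc', div_le_iff₀ hA, mul_comm]
    gcongr
    simp only [A]; linarith
  rw [h1]
  have h7 := norm_add₃_le (a := eval z G ^ k * (F z - eval z P))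
    (b := eval z (G ^ k * P - π (G ^ k * P))) (c := eval z (π (G ^ k * P)))
  linarith

end Schwarz

end Bombieri

namespace Bombieri

open MvPolynomial

section Schwarz

variable {n : ℕ}

/-- On a suitable circle around any point, a nonzero polynomial is bounded away from zero,
locally uniformly in the point. -/
theorem exists_eventually_le_norm_eval {G : MvPolynomial (Fin n) ℂ} {z₁ : Fin n → ℂ}
    (hz₁ : eval z₁ G ≠ 0) (z₀ : Fin n → ℂ) :
    ∃ δ > 0, δ ≤ 1 ∧ ∃ η > 0, ∀ᶠ z in nhds z₀, ∀ t ∈ Metric.sphere (0 : ℂ) δ,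
      η ≤ ‖eval (z + t • (z₁ - z)) G‖ := by
  set p := lineHom z₀ (z₁ - z₀) G
  have hp : ∀ t : ℂ, p.eval t = eval (z₀ + t • (z₁ - z₀)) G := fun t => eval_lineHom _ _ _ _
  have hp0 : p ≠ 0 := fun h => by
    have := hp 1
    rw [h, Polynomial.eval_zero, one_smul, add_sub_cancel] at this
    exact hz₁ this.symm
  obtain ⟨δ, hδ, hδr⟩ := ((Set.Ioo_infinite (zero_lt_one' ℝ)).sdiff
    (((p.roots.toFinset).finite_toSet).image fun t : ℂ => ‖t‖)).nonempty
  have hcont : Continuous fun x : (Fin n → ℂ) × ℂ => ‖eval (x.1 + x.2 • (z₁ - x.1)) G‖ :=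
    ((differentiable_eval G).continuous.comp (by fun_prop)).norm
  have hne : ∀ t ∈ Metric.sphere (0 : ℂ) δ, 0 < ‖eval (z₀ + t • (z₁ - z₀)) G‖ := fun t ht => by
    rw [norm_pos_iff, ← hp]
    intro h
    exact hδr ⟨t, by simpa [hp0] using h, by simpa using ht⟩
  obtain ⟨t₀, ht₀, hmin⟩ := (isCompact_sphere (0 : ℂ) δ).exists_isMinOn
    ((NormedSpace.sphere_nonempty).2 hδ.1.le)
    (f := fun t => ‖eval (z₀ + t • (z₁ - z₀)) G‖)
    (hcont.comp (Continuous.prodMk_right z₀)).continuousOn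
  have hη := hne t₀ ht₀
  refine ⟨δ, hδ.1, hδ.2.le, ‖eval (z₀ + t₀ • (z₁ - z₀)) G‖ / 2, by positivity, ?_⟩
  refine (isCompact_sphere (0 : ℂ) δ).eventually_forall_of_forall_eventually fun t ht => ?_
  have h1 : ‖eval (z₀ + t₀ • (z₁ - z₀)) G‖ / 2 < ‖eval (z₀ + t • (z₁ - z₀)) G‖ :=
    lt_of_lt_of_le (half_lt_self hη) (hmin ht)
  exact (hcont.continuousAt (x := (z₀, t))).eventually (lt_mem_nhds h1) |>.mono fun x hx => hx.le

/-- Division of an entire function by powers of a polynomial, with estimates. -/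
theorem exists_norm_le_of_norm_pow_mul_le {G : MvPolynomial (Fin n) ℂ} (hG : G ≠ 0) (r : ℝ) :
    ∃ r' ≥ r, ∃ C ≥ (1 : ℝ), ∀ (k : ℕ) (F : (Fin n → ℂ) → ℂ), Differentiable ℂ F → ∀ B,
      (∀ z, ‖z‖ ≤ r' → ‖eval z G ^ k * F z‖ ≤ B) → ∀ z, ‖z‖ ≤ r → ‖F z‖ ≤ C ^ k * B := by
  obtain ⟨z₁, hz₁⟩ : ∃ z₁, eval z₁ G ≠ 0 := by
    by_contra! h
    exact hG (MvPolynomial.funext fun x => by simpa using h x)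
  set r' := 2 * |r| + ‖z₁‖
  have key : ∃ C ≥ (1 : ℝ), ∀ z ∈ Metric.closedBall (0 : Fin n → ℂ) r, ‖z‖ ≤ r →
      ∀ (k : ℕ) (F : (Fin n → ℂ) → ℂ), Differentiable ℂ F → ∀ B,
      (∀ z, ‖z‖ ≤ r' → ‖eval z G ^ k * F z‖ ≤ B) → ‖F z‖ ≤ C ^ k * B := by
    refine (isCompact_closedBall (0 : Fin n → ℂ) r).induction_on
      (p := fun U => ∃ C ≥ (1 : ℝ), ∀ z ∈ U, ‖z‖ ≤ r →
        ∀ (k : ℕ) (F : (Fin n → ℂ) → ℂ), Differentiable ℂ F → ∀ B,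
        (∀ z, ‖z‖ ≤ r' → ‖eval z G ^ k * F z‖ ≤ B) → ‖F z‖ ≤ C ^ k * B)
      ⟨1, le_rfl, by simp⟩ ?_ ?_ ?_
    · rintro s t hst ⟨C, hC, h⟩
      exact ⟨C, hC, fun z hz => h z (hst hz)⟩
    · rintro s t ⟨C, hC, h⟩ ⟨C', hC', h'⟩
      refine ⟨max C C', le_max_of_le_left hC, fun z hz hzr k F hF B hB => ?_⟩
      have hB0 : 0 ≤ B := (norm_nonneg _).trans (hB 0 (by simp [r']; positivity))
      rcases hz with hz | hz
      · refine (h z hz hzr k F hF B hB).trans ?_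
        gcongr
        exact le_max_left _ _
      · refine (h' z hz hzr k F hF B hB).trans ?_
        gcongr
        exact le_max_right _ _
    · intro z₀ _
      obtain ⟨δ, hδ, hδ1, η, hη, hev⟩ := exists_eventually_le_norm_eval hz₁ z₀
      refine ⟨_, mem_nhdsWithin_of_mem_nhds hev, max 1 η⁻¹, le_max_left _ _,
        fun z hz hzr k F hF B hB => ?_⟩
      have hB0 : 0 ≤ B := (norm_nonneg _).trans (hB 0 (by simp [r']; positivity))
      have h1 : ∀ t ∈ Metric.sphere (0 : ℂ) δ, ‖F (z + t • (z₁ - z))‖ ≤ (max 1 η⁻¹) ^ k * B := by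
        intro t ht
        have h2 : ‖z + t • (z₁ - z)‖ ≤ r' := by
          have h3 : ‖t‖ ≤ 1 := by
            rw [mem_sphere_zero_iff_norm.1 ht]; exact hδ1
          have h5 : ‖t • (z₁ - z)‖ ≤ ‖z₁‖ + ‖z‖ := by
            rw [norm_smul]
            exact (mul_le_of_le_one_left (norm_nonneg _) h3).trans (norm_sub_le _ _)
          have := norm_add_le z (t • (z₁ - z))
          have := le_abs_self r
          simp only [r']
          linarith
        have h4 := hB _ h2
        have h6 := hz t ht
        rw [norm_mul, norm_pow] at h4
        have h7 : η ^ k * ‖F (z + t • (z₁ - z))‖ ≤ B := le_trans (by gcongr) h4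
        have h8 : ‖F (z + t • (z₁ - z))‖ ≤ η⁻¹ ^ k * B := by
          rw [inv_pow, ← div_eq_inv_mul, le_div_iff₀ (by positivity), mul_comm]
          exact h7
        refine h8.trans ?_
        gcongr
        exact le_max_right _ _
      have h9 := Complex.norm_iteratedDeriv_le_of_forall_mem_sphere_norm_le (c := 0) 0 hδ
        (hF.comp (differentiable_line z (z₁ - z))).diffContOnCl h1
      simpa using h9
  obtain ⟨C, hC, h⟩ := key
  refine ⟨r', ?_, C, hC, fun k F hF B hB z hz => h z (by simpa using hz) hz k F hF B hB⟩
  have := le_abs_self r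
  have := abs_nonneg r
  have := norm_nonneg z₁
  simp only [r']
  linarith

/-- Schwarz lemma: an entire function vanishing to high order on suitable finitely many points of
a Zariski dense set is small on bounded sets. -/
theorem exists_schwarz (hn : 0 < n) {S : Set (Fin n → ℂ)}
    (hS : ∀ Q : MvPolynomial (Fin n) ℂ, (∀ w ∈ S, eval w Q = 0) → Q = 0) (c : ℕ) :
    ∃ (N : ℕ) (s : Fin N → Fin n → ℂ) (l : ℕ), 0 < N ∧ (∀ i, s i ∈ S) ∧ 0 < l ∧
      ∀ r : ℝ, ∃ C ≥ (1 : ℝ), ∀ (k : ℕ) (F : (Fin n → ℂ) → ℂ), Differentiable ℂ F →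
        (∀ i ζ, ∀ j < l * k, iteratedDeriv j (fun t : ℂ => F (s i + t • ζ)) 0 = 0) →
        ∀ R ≥ C, ∀ M, 0 ≤ M → (∀ z, ‖z‖ ≤ R → ‖F z‖ ≤ M) → ∀ z, ‖z‖ ≤ r →
          ‖F z‖ ≤ C ^ (k + 1) * M / R ^ (c * l * k) := by
  obtain ⟨N, s, m, u, l, q, G, hN, hsS, hm, hl, hq, hs, hG0, hGdeg, hG⟩ :=
    exists_points_multiplier hn hS c
  refine ⟨N, s, l, hN, hsS, hl, fun r => ?_⟩
  obtain ⟨r', _, C₁, hC₁, hdiv⟩ := exists_norm_le_of_norm_pow_mul_le hG0 r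
  obtain ⟨C₀, hC₀, hSch⟩ := exists_norm_eval_pow_mul_le (by omega) hq hs hG
    (r := max 1 r') (le_max_left _ _)
  have hC₀1 : 1 ≤ C₀ := (le_max_left _ _).trans hC₀
  set g := coeffNorm 1 G
  have hg : 0 ≤ g := coeffNorm_nonneg zero_le_one _
  set D := C₁ * (C₀ ^ (m * l) * g * 4 ^ (c * l))
  have hD : 0 ≤ D := by positivity
  set C := 4 * C₀ + 2 ^ (n + 1) + D
  have h2n : (0 : ℝ) < 2 ^ (n + 1) := by positivity
  refine ⟨C, by simp only [C]; linarith, fun k F hF hFj R hR M hM hFM z hz => ?_⟩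
  have hR4 : C₀ ≤ R / 4 := by simp only [C] at hR; linarith
  have hρ1 : 1 ≤ R / 4 := hC₀1.trans hR4
  set ρ := R / 4
  have hRρ : R = 4 * ρ := by simp only [ρ]; ring
  have h1 := hdiv k F hF _ (fun z hz => hSch k F hF hFj ρ hR4 M hM
    (fun z hz => hFM z (by rw [hRρ]; exact hz)) z (hz.trans (le_max_right _ _))) z hz
  refine h1.trans ?_
  have hGρ : coeffNorm ρ G ≤ ρ ^ ((u + 1) * l) * g := coeffNorm_le_pow_mul hρ1 hGdeg
  have hρ0 : 0 < ρ := by linarith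
  have hGn := coeffNorm_nonneg hρ0.le G
  calc C₁ ^ k * (2 * (C₀ / ρ) ^ (m * (l * k)) * (coeffNorm ρ G ^ k * (2 ^ n * M)))
      ≤ C₁ ^ k * (2 * (C₀ / ρ) ^ (m * (l * k)) *
          ((ρ ^ ((u + 1) * l) * g) ^ k * (2 ^ n * M))) := by gcongr
    _ = 2 ^ (n + 1) * D ^ k * M / R ^ (c * l * k) := by
        have e1 : m * (l * k) = (u + 1) * l * k + c * l * k := by rw [hm]; ring
        have e2 : (C₀ / ρ) ^ (m * (l * k)) =
            (C₀ ^ (m * l)) ^ k / (ρ ^ ((u + 1) * l * k) * ρ ^ (c * l * k)) := by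
          rw [div_pow, ← pow_add, ← e1, ← pow_mul, mul_assoc]
        rw [e2, hRρ]
        simp only [D]
        rw [mul_pow, mul_pow, mul_pow, mul_pow, mul_pow 4 ρ, ← pow_mul ρ, ← pow_mul 4]
        field_simp
        ring
    _ ≤ C ^ (k + 1) * M / R ^ (c * l * k) := by
        have hR0 : 0 < R := by linarith
        rw [pow_succ' C]
        have hC1 : 2 ^ (n + 1) ≤ C := by simp only [C]; linarith
        have hC2 : D ≤ C := by simp only [C]; linarith
        have hC0 : 0 ≤ C := by linarith
        gcongr

end Schwarz

end Bombieri

namespace Bombieri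

open MvPolynomial

section Derivations

variable {n d : ℕ} {K : Type*} [Field K]

/-- The derivation of the polynomial ring sending `X i` to `p ν i`. -/
noncomputable def fieldDer (p : Fin n → Fin d → MvPolynomial (Fin d) K) (ν : Fin n) :
    Derivation K (MvPolynomial (Fin d) K) (MvPolynomial (Fin d) K) :=
  ∑ i, p ν i • pderiv i

/-- The composition of the derivations `fieldDer p ν` along a word. -/
noncomputable def wordDer (p : Fin n → Fin d → MvPolynomial (Fin d) K) (w : List (Fin n)) :
    Module.End K (MvPolynomial (Fin d) K) :=
  (w.map fun ν => (fieldDer p ν : Module.End K (MvPolynomial (Fin d) K))).prod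

variable (p : Fin n → Fin d → MvPolynomial (Fin d) K)

theorem fieldDer_apply (ν : Fin n) (P : MvPolynomial (Fin d) K) :
    fieldDer p ν P = ∑ i, p ν i * pderiv i P := by
  rw [fieldDer, ← Derivation.coeFnAddMonoidHom_apply, map_sum, Finset.sum_apply]
  rfl

@[simp] theorem fieldDer_X (ν : Fin n) (i : Fin d) : fieldDer p ν (X i) = p ν i := by
  classical
  rw [fieldDer_apply, Finset.sum_eq_single i]
  · simp
  · intro j _ hj
    rw [pderiv_X_of_ne hj.symm, mul_zero]
  · simp

@[simp] theorem wordDer_nil (P : MvPolynomial (Fin d) K) : wordDer p [] P = P := rfl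

theorem wordDer_cons (ν : Fin n) (w : List (Fin n)) (P : MvPolynomial (Fin d) K) :
    wordDer p (ν :: w) P = fieldDer p ν (wordDer p w P) := by
  simp [wordDer]

theorem wordDer_concat (ν : Fin n) (w : List (Fin n)) (P : MvPolynomial (Fin d) K) :
    wordDer p (w ++ [ν]) P = wordDer p w (fieldDer p ν P) := by
  simp [wordDer]

variable {p}

theorem wordDer_perm (hcomm : ∀ ν μ P, fieldDer p ν (fieldDer p μ P) =
    fieldDer p μ (fieldDer p ν P)) {w w' : List (Fin n)} (h : w.Perm w') :
    wordDer p w = wordDer p w' := by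
  refine (h.map _).prod_eq' ?_
  rw [List.pairwise_map]
  exact List.pairwise_of_forall fun ν μ => LinearMap.ext fun P => hcomm ν μ P

variable [Algebra K ℂ] {f : Fin d → (Fin n → ℂ) → ℂ}

theorem differentiable_aeval (hf : ∀ i, Differentiable ℂ (f i)) (P : MvPolynomial (Fin d) K) :
    Differentiable ℂ fun z => aeval (fun i => f i z) P := by
  induction P using MvPolynomial.induction_on with
  | C a => simp
  | add p q hp hq => simp only [map_add]; exact hp.add hq
  | mul_X p i hp => simp only [map_mul, aeval_X]; exact hp.mul (hf i)

theorem fderiv_aeval (hf : ∀ i, Differentiable ℂ (f i))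
    (hp : ∀ ν i z, fderiv ℂ (f i) z (Pi.single ν 1) = aeval (fun j => f j z) (p ν i))
    (ν : Fin n) (P : MvPolynomial (Fin d) K) (z : Fin n → ℂ) :
    fderiv ℂ (fun z => aeval (fun i => f i z) P) z (Pi.single ν 1) =
      aeval (fun i => f i z) (fieldDer p ν P) := by
  induction P using MvPolynomial.induction_on with
  | C a => simp [← algebraMap_eq]
  | add P Q hP hQ =>
    simp only [map_add]
    rw [fderiv_fun_add (differentiable_aeval hf P z) (differentiable_aeval hf Q z),
      add_apply, hP, hQ]
  | mul_X P i hP =>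
    simp only [map_mul, aeval_X, Derivation.leibniz, fieldDer_X, map_add, smul_eq_mul]
    rw [fderiv_fun_mul (differentiable_aeval hf P z) (hf i z),
      add_apply, smul_apply,
      smul_apply, hP, hp, smul_eq_mul, smul_eq_mul]

theorem fderiv_aeval_eq_sum (hf : ∀ i, Differentiable ℂ (f i))
    (hp : ∀ ν i z, fderiv ℂ (f i) z (Pi.single ν 1) = aeval (fun j => f j z) (p ν i))
    (P : MvPolynomial (Fin d) K) (z : Fin n → ℂ) :
    fderiv ℂ (fun z => aeval (fun i => f i z) P) z =
      ∑ ν, (aeval (fun i => f i z) (fieldDer p ν P)) •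
        (ContinuousLinearMap.proj ν : (Fin n → ℂ) →L[ℂ] ℂ) := by
  ext ζ
  conv_lhs => rw [pi_eq_sum_univ' ζ, map_sum]
  simp [fderiv_aeval hf hp, mul_comm]

theorem fieldDer_comm (hf : ∀ i, Differentiable ℂ (f i))
    (hp : ∀ ν i z, fderiv ℂ (f i) z (Pi.single ν 1) = aeval (fun j => f j z) (p ν i))
    (hind : ∀ P : MvPolynomial (Fin d) K, (∀ z, aeval (fun i => f i z) P = 0) → P = 0)
    (ν μ : Fin n) (P : MvPolynomial (Fin d) K) :
    fieldDer p ν (fieldDer p μ P) = fieldDer p μ (fieldDer p ν P) := by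
  rw [← sub_eq_zero]
  refine hind _ fun z => ?_
  set F' : (Fin n → ℂ) → (Fin n → ℂ) →L[ℂ] ℂ := fun z =>
    ∑ ν, (aeval (fun i => f i z) (fieldDer p ν P)) •
        (ContinuousLinearMap.proj ν : (Fin n → ℂ) →L[ℂ] ℂ) with hF'
  have hd : ∀ y, HasFDerivAt (fun z => aeval (fun i => f i z) P) (F' y) y := fun y => by
    rw [hF']; beta_reduce
    rw [← fderiv_aeval_eq_sum hf hp]
    exact (differentiable_aeval hf P y).hasFDerivAt
  have hd2 : Differentiable ℂ F' := Differentiable.fun_sum fun ν _ =>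
    (differentiable_aeval hf _).smul_const _
  have hsymm := second_derivative_symmetric hd (hd2 z).hasFDerivAt
  have hval : ∀ ν μ : Fin n, fderiv ℂ F' z (Pi.single ν 1) (Pi.single μ 1) =
      aeval (fun i => f i z) (fieldDer p ν (fieldDer p μ P)) := by
    intro ν μ
    have h1 : HasFDerivAt (fun y => F' y (Pi.single μ 1))
        ((ContinuousLinearMap.apply ℂ ℂ (Pi.single μ 1 : Fin n → ℂ)).comp (fderiv ℂ F' z)) z :=
      (ContinuousLinearMap.apply ℂ ℂ (Pi.single μ 1 : Fin n → ℂ)).hasFDerivAt.comp z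
        (hd2 z).hasFDerivAt
    have h2 : (fun y => F' y (Pi.single μ 1)) =
        fun y => aeval (fun i => f i y) (fieldDer p μ P) := by
      funext y
      rw [← fderiv_aeval hf hp, (hd y).fderiv]
    rw [h2] at h1
    rw [← fderiv_aeval hf hp, h1.fderiv]
    rfl
  rw [map_sub, ← hval, ← hval, hsymm, sub_self]

theorem deriv_aeval_line (hf : ∀ i, Differentiable ℂ (f i))
    (hp : ∀ ν i z, fderiv ℂ (f i) z (Pi.single ν 1) = aeval (fun j => f j z) (p ν i))
    (P : MvPolynomial (Fin d) K) (s ζ : Fin n → ℂ) :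
    deriv (fun t : ℂ => aeval (fun i => f i (s + t • ζ)) P) =
      fun t => ∑ ν, ζ ν * aeval (fun i => f i (s + t • ζ)) (fieldDer p ν P) := by
  funext t
  have h1 : HasDerivAt (fun t : ℂ => s + t • ζ) ζ t := by
    simpa using ((hasDerivAt_id t).smul_const ζ).const_add s
  have h2 := ((differentiable_aeval hf P (s + t • ζ)).hasFDerivAt).comp_hasDerivAt t h1
  rw [fderiv_aeval_eq_sum hf hp] at h2
  have h3 := h2.deriv
  simp only [Function.comp_def] at h3
  rw [h3]
  simp [mul_comm]

/-- Vanishing of the derivatives along words implies vanishing of the jets along lines. -/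
theorem iteratedDeriv_aeval_line_eq_zero (hf : ∀ i, Differentiable ℂ (f i))
    (hp : ∀ ν i z, fderiv ℂ (f i) z (Pi.single ν 1) = aeval (fun j => f j z) (p ν i))
    (s ζ : Fin n → ℂ) (j : ℕ) :
    ∀ P : MvPolynomial (Fin d) K,
      (∀ w : List (Fin n), w.length = j → aeval (fun i => f i s) (wordDer p w P) = 0) →
      iteratedDeriv j (fun t : ℂ => aeval (fun i => f i (s + t • ζ)) P) 0 = 0 := by
  induction j with
  | zero =>
    intro P hP
    simpa using hP [] rfl
  | succ j ih =>
    intro P hP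
    rw [iteratedDeriv_succ', deriv_aeval_line hf hp]
    have hd : ∀ Q : MvPolynomial (Fin d) K,
        ContDiff ℂ j fun t : ℂ => aeval (fun i => f i (s + t • ζ)) Q := fun Q =>
      ((differentiable_aeval hf Q).comp (differentiable_line s ζ)).contDiff
    rw [iteratedDeriv_fun_sum fun ν _ => (contDiff_const.mul (hd _)).contDiffAt]
    refine Finset.sum_eq_zero fun ν _ => ?_
    rw [iteratedDeriv_const_mul (ζ ν) (hd _).contDiffAt, ih, mul_zero]
    intro w hw
    rw [← wordDer_concat]
    exact hP _ (by simp [hw])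

/-- If all derivatives along words vanish at a point, the function vanishes identically. -/
theorem aeval_eq_zero_of_wordDer (hf : ∀ i, Differentiable ℂ (f i))
    (hp : ∀ ν i z, fderiv ℂ (f i) z (Pi.single ν 1) = aeval (fun j => f j z) (p ν i))
    (s : Fin n → ℂ) {P : MvPolynomial (Fin d) K}
    (hP : ∀ w, aeval (fun i => f i s) (wordDer p w P) = 0) (z : Fin n → ℂ) :
    aeval (fun i => f i z) P = 0 := by
  have hd : Differentiable ℂ fun t : ℂ => aeval (fun i => f i (s + t • (z - s))) P :=
    (differentiable_aeval hf P).comp (differentiable_line s (z - s))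
  have h1 := Complex.taylorSeries_eq_of_entire hd 0 1
  simp only [iteratedDeriv_aeval_line_eq_zero hf hp s (z - s) _ P fun w _ => hP w, smul_zero,
    tsum_zero, one_smul, add_sub_cancel] at h1
  exact h1.symm

theorem norm_aeval_wordDer_le (hf : ∀ i, Differentiable ℂ (f i))
    (hp : ∀ ν i z, fderiv ℂ (f i) z (Pi.single ν 1) = aeval (fun j => f j z) (p ν i))
    (P : MvPolynomial (Fin d) K) {h : ℝ} (hh : 0 < h) {M : ℝ} (w : List (Fin n)) :
    ∀ s : Fin n → ℂ, (∀ z, ‖z - s‖ ≤ w.length * h → ‖aeval (fun i => f i z) P‖ ≤ M) →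
      ‖aeval (fun i => f i s) (wordDer p w P)‖ ≤ M / h ^ w.length := by
  induction w with
  | nil =>
    intro s hM
    simpa using hM s (by simp)
  | cons ν w ih =>
    intro s hM
    have hd : Differentiable ℂ fun t : ℂ =>
        aeval (fun i => f i (s + t • (Pi.single ν 1 : Fin n → ℂ))) (wordDer p w P) :=
      (differentiable_aeval hf _).comp (differentiable_line s _)
    have h1 := Complex.norm_iteratedDeriv_le_of_forall_mem_sphere_norm_le (c := 0) 1 hh
      hd.diffContOnCl (C := M / h ^ w.length) fun t ht => by
        refine ih _ fun z hz => hM z ?_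
        have ht' : ‖t • (Pi.single ν 1 : Fin n → ℂ)‖ ≤ h := by
          rw [norm_smul, mem_sphere_zero_iff_norm.1 ht]
          refine mul_le_of_le_one_right hh.le ?_
          simp [Pi.norm_single]
        have h2 : z - s = (z - (s + t • (Pi.single ν 1 : Fin n → ℂ))) +
          t • (Pi.single ν 1 : Fin n → ℂ) := by abel
        rw [h2]
        refine (norm_add_le _ _).trans ?_
        rw [List.length_cons, Nat.cast_succ, add_mul, one_mul]
        exact add_le_add hz ht'
    rw [iteratedDeriv_one, deriv_aeval_line hf hp] at h1
    have h3 : ∑ μ, (Pi.single ν 1 : Fin n → ℂ) μ *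
        aeval (fun i => f i (s + (0 : ℂ) • (Pi.single ν 1 : Fin n → ℂ)))
          (fieldDer p μ (wordDer p w P)) =
        aeval (fun i => f i s) (wordDer p (ν :: w) P) := by
      rw [Finset.sum_eq_single ν]
      · simp [wordDer_cons]
      · intro μ _ hμ
        simp [hμ]
      · simp
    beta_reduce at h1
    rw [h3] at h1
    refine h1.trans (le_of_eq ?_)
    rw [List.length_cons, Nat.factorial_one, Nat.cast_one, one_mul, pow_one, div_div, ← pow_succ]

end Derivations

end Bombieri

namespace Bombieri

open MvPolynomial NumberField

section Estimates

variable {n d : ℕ} {K : Type*} [Field K]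

theorem totalDegree_fieldDer_le {p : Fin n → Fin d → MvPolynomial (Fin d) K} {g : ℕ}
    (hg : ∀ ν i, (p ν i).totalDegree ≤ g) (ν : Fin n) (P : MvPolynomial (Fin d) K) :
    (fieldDer p ν P).totalDegree ≤ P.totalDegree + g := by
  rw [fieldDer_apply]
  refine totalDegree_finsetSum_le fun i _ => (totalDegree_mul _ _).trans ?_
  have := hg ν i
  have := totalDegree_pderiv_le P i
  omega

theorem totalDegree_wordDer_le {p : Fin n → Fin d → MvPolynomial (Fin d) K} {g : ℕ}
    (hg : ∀ ν i, (p ν i).totalDegree ≤ g) (w : List (Fin n)) (P : MvPolynomial (Fin d) K) :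
    (wordDer p w P).totalDegree ≤ P.totalDegree + g * w.length := by
  induction w with
  | nil => simp
  | cons ν w ih =>
    rw [wordDer_cons, List.length_cons, mul_add, mul_one, ← add_assoc]
    exact (totalDegree_fieldDer_le hg ν _).trans (Nat.add_le_add_right ih g)

theorem totalDegree_map_le_of_le {R S : Type*} [CommSemiring R] [CommSemiring S] (φ : R →+* S)
    (P : MvPolynomial (Fin d) R) : (map φ P).totalDegree ≤ P.totalDegree :=
  Finset.sup_mono (support_map_subset φ P)

theorem coeffNorm_map_fieldDer_le {p : Fin n → Fin d → MvPolynomial (Fin d) K} (σ : K →+* ℂ)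
    {A : ℝ} (hA : ∀ ν i, coeffNorm 1 (map σ (p ν i)) ≤ A) (hA0 : 0 ≤ A) (ν : Fin n)
    {P : MvPolynomial (Fin d) K} {D : ℕ} (hD : P.totalDegree ≤ D) :
    coeffNorm 1 (map σ (fieldDer p ν P)) ≤ d * A * D * coeffNorm 1 (map σ P) := by
  rw [fieldDer_apply, map_sum]
  refine (coeffNorm_sum_le zero_le_one _ _).trans ?_
  calc ∑ i, coeffNorm 1 (map σ (p ν i * pderiv i P))
      ≤ ∑ _i : Fin d, A * (D * coeffNorm 1 (map σ P)) := by
        refine Finset.sum_le_sum fun i _ => ?_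
        rw [map_mul, ← pderiv_map]
        refine (coeffNorm_mul_le zero_le_one _ _).trans (mul_le_mul (hA ν i)
          (coeffNorm_pderiv_le ((totalDegree_map_le_of_le σ P).trans hD) i)
          (coeffNorm_nonneg zero_le_one _) hA0)
    _ = _ := by
      rw [Finset.sum_const, Finset.card_univ, Fintype.card_fin, nsmul_eq_mul]; ring

theorem coeffNorm_map_wordDer_le {p : Fin n → Fin d → MvPolynomial (Fin d) K} (σ : K →+* ℂ)
    {A : ℝ} (hA : ∀ ν i, coeffNorm 1 (map σ (p ν i)) ≤ A) (hA0 : 0 ≤ A) {g : ℕ}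
    (hg : ∀ ν i, (p ν i).totalDegree ≤ g) {P : MvPolynomial (Fin d) K} {D : ℕ}
    (w : List (Fin n)) (hD : P.totalDegree + g * w.length ≤ D) :
    coeffNorm 1 (map σ (wordDer p w P)) ≤ (d * A * D) ^ w.length * coeffNorm 1 (map σ P) := by
  induction w with
  | nil => simp
  | cons ν w ih =>
    rw [List.length_cons, mul_add] at hD
    have hD' : (wordDer p w P).totalDegree ≤ D := by
      have := totalDegree_wordDer_le hg w P
      omega
    rw [wordDer_cons, List.length_cons, pow_succ', mul_assoc]
    refine (coeffNorm_map_fieldDer_le σ hA hA0 ν hD').trans ?_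
    exact mul_le_mul_of_nonneg_left (ih (by omega)) (by positivity)

variable (K d) in
/-- Polynomials with algebraic integer coefficients. -/
noncomputable def integerPolynomials : Subring (MvPolynomial (Fin d) K) :=
  (map (σ := Fin d) (algebraMap (𝓞 K) K)).range

theorem mem_integerPolynomials {P : MvPolynomial (Fin d) K} :
    P ∈ integerPolynomials d K ↔ ∀ m, IsIntegral ℤ (coeff m P) := by
  constructor
  · rintro ⟨Q, rfl⟩ m
    rw [coeff_map]
    exact RingOfIntegers.isIntegral_coe _
  · intro h
    rw [P.as_sum]
    refine Subring.sum_mem _ fun m _ => ?_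
    obtain ⟨y, hy⟩ : ∃ y : 𝓞 K, algebraMap (𝓞 K) K y = coeff m P := ⟨⟨coeff m P, h m⟩, rfl⟩
    exact ⟨monomial m y, by rw [map_monomial, hy]⟩

theorem natCast_pow_smul_wordDer_mem {p : Fin n → Fin d → MvPolynomial (Fin d) K} {b : ℕ}
    (hb : ∀ ν i, (b : K) • p ν i ∈ integerPolynomials d K) (w : List (Fin n))
    {P : MvPolynomial (Fin d) K} (hP : P ∈ integerPolynomials d K) :
    (b : K) ^ w.length • wordDer p w P ∈ integerPolynomials d K := by
  induction w with
  | nil => simpa using hP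
  | cons ν w ih =>
    obtain ⟨Q, hQ⟩ := ih
    have h1 : (b : K) ^ (ν :: w).length • wordDer p (ν :: w) P =
        ∑ i, ((b : K) • p ν i) * pderiv i ((b : K) ^ w.length • wordDer p w P) := by
      rw [wordDer_cons, fieldDer_apply, Finset.smul_sum]
      refine Finset.sum_congr rfl fun i _ => ?_
      rw [Derivation.map_smul, smul_mul_smul_comm, List.length_cons, pow_succ']
    rw [h1]
    refine Subring.sum_mem _ fun i _ => Subring.mul_mem _ (hb ν i) ?_
    rw [← hQ]
    exact ⟨pderiv i Q, pderiv_map.symm⟩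

theorem isIntegral_pow_mul_eval {x : Fin d → K} {b : ℕ} (hb : ∀ i, IsIntegral ℤ ((b : K) * x i))
    {Q : MvPolynomial (Fin d) K} (hQ : Q ∈ integerPolynomials d K) {D : ℕ}
    (hD : Q.totalDegree ≤ D) : IsIntegral ℤ ((b : K) ^ D * eval x Q) := by
  rw [eval_eq', Finset.mul_sum]
  refine IsIntegral.sum _ fun m hm => ?_
  have h1 : m.degree ≤ D := le_trans (by
    simpa [Finsupp.degree_apply, Finsupp.sum] using le_totalDegree hm) hD
  have h2 : (b : K) ^ D * (coeff m Q * ∏ i, x i ^ m i) =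
      (b : K) ^ (D - m.degree) * (coeff m Q * ∏ i, ((b : K) * x i) ^ m i) := by
    simp_rw [mul_pow]
    rw [Finset.prod_mul_distrib, Finset.prod_pow_eq_pow_sum, ← Finsupp.degree_eq_sum]
    conv_lhs => rw [← Nat.sub_add_cancel h1, pow_add]
    ring
  rw [h2]
  have hb' : IsIntegral ℤ (b : K) := by
    simpa using isIntegral_algebraMap (R := ℤ) (A := K) (x := (b : ℤ))
  exact (hb'.pow _).mul ((mem_integerPolynomials.1 hQ m).mul (IsIntegral.prod _ fun i _ =>
    (hb i).pow _))

variable [NumberField K]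

theorem exists_nat_mul_isIntegral (s : Finset K) :
    ∃ b : ℕ, 0 < b ∧ ∀ x ∈ s, IsIntegral ℤ ((b : K) * x) := by
  obtain ⟨y, hy, h⟩ := exists_integral_multiples ℤ ℚ s
  refine ⟨y.natAbs, Int.natAbs_pos.2 hy, fun x hx => ?_⟩
  have h1 := h x hx
  rw [zsmul_eq_mul] at h1
  have h2 : ((y.natAbs : ℕ) : K) = ((y.natAbs : ℤ) : K) := (Int.cast_natCast _).symm
  rw [h2]
  rcases Int.natAbs_eq y with h3 | h3
  · rwa [← h3]
  · have h4 : (y.natAbs : ℤ) = -y := by omega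
    rw [h4]
    simpa using h1.neg

theorem exists_one_le_forall_le {ι : Type*} [Finite ι] (u : ι → ℝ) :
    ∃ A : ℝ, 1 ≤ A ∧ ∀ i, u i ≤ A := by
  obtain ⟨A, hA⟩ := (Set.finite_range u).bddAbove
  exact ⟨max 1 A, le_max_left _ _, fun i => (hA ⟨i, rfl⟩).trans (le_max_right _ _)⟩

/-- Size and denominator of the values of derivatives at algebraic points. -/
theorem exists_wordDer_estimates (p : Fin n → Fin d → MvPolynomial (Fin d) K) {N : ℕ}
    (x : Fin N → Fin d → K) :
    ∃ (b : ℕ) (B : ℝ), 0 < b ∧ 1 ≤ B ∧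
      ∀ (i : Fin N) (w : List (Fin n)), ∀ P ∈ integerPolynomials d K, ∀ E : ℕ,
        P.totalDegree + w.length ≤ E →
        IsIntegral ℤ ((b : K) ^ E * eval (x i) (wordDer p w P)) ∧
        ∀ σ : K →+* ℂ, ‖σ (eval (x i) (wordDer p w P))‖ ≤
          B ^ E * (E : ℝ) ^ w.length * coeffNorm 1 (map σ P) := by
  classical
  obtain ⟨b, hb, hbint⟩ := exists_nat_mul_isIntegral
    ((Finset.univ.biUnion fun a : Fin n × Fin d =>
        (p a.1 a.2).support.image fun m => coeff m (p a.1 a.2)) ∪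
      Finset.univ.image fun a : Fin N × Fin d => x a.1 a.2)
  have hbp : ∀ ν i, (b : K) • p ν i ∈ integerPolynomials d K := fun ν i => by
    rw [mem_integerPolynomials]
    intro m
    rw [coeff_smul, smul_eq_mul]
    by_cases hm : m ∈ (p ν i).support
    · refine hbint _ (Finset.mem_union_left _ ?_)
      rw [Finset.mem_biUnion]
      exact ⟨(ν, i), Finset.mem_univ _, Finset.mem_image_of_mem _ hm⟩
    · rw [notMem_support_iff.1 hm, mul_zero]
      exact isIntegral_zero
  have hbx : ∀ i j, IsIntegral ℤ ((b : K) * x i j) := fun i j =>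
    hbint _ (Finset.mem_union_right _ (Finset.mem_image.2 ⟨(i, j), Finset.mem_univ _, rfl⟩))
  obtain ⟨g, hg⟩ : ∃ g, ∀ ν i, (p ν i).totalDegree ≤ g :=
    ⟨∑ ν, ∑ i, (p ν i).totalDegree, fun ν i =>
      (Finset.single_le_sum (f := fun i => (p ν i).totalDegree) (fun _ _ => Nat.zero_le _)
        (Finset.mem_univ i)).trans
      (Finset.single_le_sum (f := fun ν => ∑ i, (p ν i).totalDegree) (fun _ _ => Nat.zero_le _)
        (Finset.mem_univ ν))⟩
  obtain ⟨A, hA1, hA'⟩ := exists_one_le_forall_le fun a : (K →+* ℂ) × Fin n × Fin d =>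
    coeffNorm 1 (map a.1 (p a.2.1 a.2.2))
  have hA0 : 0 ≤ A := zero_le_one.trans hA1
  have hA : ∀ (σ : K →+* ℂ) ν i, coeffNorm 1 (map σ (p ν i)) ≤ A := fun σ ν i => hA' (σ, ν, i)
  obtain ⟨T, hT1, hT'⟩ := exists_one_le_forall_le fun a : (K →+* ℂ) × Fin N × Fin d =>
    ‖a.1 (x a.2.1 a.2.2)‖
  have hT : ∀ (σ : K →+* ℂ) i j, ‖σ (x i j)‖ ≤ T := fun σ i j => hT' (σ, i, j)
  obtain ⟨H, hH1, hH⟩ : ∃ H : ℝ, 1 ≤ H ∧ d * A * (1 + g) ≤ H :=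
    ⟨max 1 (d * A * (1 + g)), le_max_left _ _, le_max_right _ _⟩
  refine ⟨b ^ (1 + g), H * T ^ (1 + g), by positivity,
    one_le_mul_of_one_le_of_one_le hH1 (one_le_pow₀ hT1),
    fun i w P hP E hE => ?_⟩
  have hdeg : P.totalDegree + g * w.length ≤ g * E + P.totalDegree := by
    rw [add_comm]
    gcongr
    omega
  constructor
  · have h1 := isIntegral_pow_mul_eval (hbx i) (natCast_pow_smul_wordDer_mem hbp w hP)
      ((totalDegree_smul_le _ _).trans ((totalDegree_wordDer_le hg w P).trans hdeg))
    rw [smul_eval, ← mul_assoc, ← pow_add] at h1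
    have h2 : (1 + g) * E = (E - (P.totalDegree + w.length)) +
        (g * E + P.totalDegree + w.length) := by
      rw [add_mul, one_mul]; omega
    rw [Nat.cast_pow, ← pow_mul, h2, pow_add, mul_assoc]
    have hb' : IsIntegral ℤ (b : K) := by
      simpa using isIntegral_algebraMap (R := ℤ) (A := K) (x := (b : ℤ))
    exact (hb'.pow _).mul h1
  · intro σ
    have hD : P.totalDegree + g * w.length ≤ (1 + g) * E := hdeg.trans (by
      rw [add_mul, one_mul]; omega)
    have h1 := coeffNorm_map_wordDer_le σ (hA σ) hA0 hg w hD
    have h2 : ‖σ (eval (x i) (wordDer p w P))‖ ≤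
        T ^ ((1 + g) * E) * coeffNorm 1 (map σ (wordDer p w P)) := by
      rw [map_eval]
      refine (norm_eval_le_coeffNorm (hT σ i) _).trans (coeffNorm_le_pow_mul hT1 ?_)
      exact (totalDegree_map_le_of_le σ _).trans ((totalDegree_wordDer_le hg w P).trans hD)
    refine h2.trans ?_
    have hc := coeffNorm_nonneg zero_le_one (map σ P)
    calc T ^ ((1 + g) * E) * coeffNorm 1 (map σ (wordDer p w P))
        ≤ T ^ ((1 + g) * E) * ((d * A * ((1 + g) * E : ℕ)) ^ w.length *
            coeffNorm 1 (map σ P)) := by gcongr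
      _ = T ^ ((1 + g) * E) * ((d * A * (1 + g)) ^ w.length * (E : ℝ) ^ w.length *
            coeffNorm 1 (map σ P)) := by push_cast; rw [← mul_pow]; ring
      _ ≤ T ^ ((1 + g) * E) * (H ^ E * (E : ℝ) ^ w.length * coeffNorm 1 (map σ P)) := by
          have h3 : (d * A * (1 + g)) ^ w.length ≤ H ^ E :=
            (pow_le_pow_left₀ (by positivity) hH _).trans
              (pow_le_pow_right₀ hH1 (by omega))
          gcongr
      _ = _ := by rw [mul_pow, ← pow_mul]; ring

variable (K) in
/-- Siegel's lemma for twice as many unknowns as equations. -/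
theorem exists_siegel : ∃ c : ℝ, 1 ≤ c ∧ ∀ (α : Type) [Fintype α] (q : ℕ), 0 < Fintype.card α →
    q = 2 * Fintype.card α → ∀ (a : Matrix α (Fin q) (𝓞 K)) (A : ℝ), 1 ≤ A →
    (∀ i j, house (a i j : K) ≤ A) →
    ∃ ξ : Fin q → 𝓞 K, ξ ≠ 0 ∧ a.mulVec ξ = 0 ∧ ∀ j, house (ξ j : K) ≤ c * q * A := by
  classical
  obtain ⟨c, hc⟩ : ∃ c : ℝ, ∀ (α : Type) [Fintype α] (q : ℕ), 0 < Fintype.card α →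
      Fintype.card α < q → ∀ (a : Matrix α (Fin q) (𝓞 K)) (A : ℝ), a ≠ 0 →
      (∀ i j, house (a i j : K) ≤ A) →
      ∃ ξ : Fin q → 𝓞 K, ξ ≠ 0 ∧ a.mulVec ξ = 0 ∧ ∀ j, house (ξ j : K) ≤
        c * (c * q * A) ^ ((Fintype.card α : ℝ) / (q - Fintype.card α)) :=
    ⟨_, fun α _ q h0 hq a A ha hA => house.exists_ne_zero_int_vec_house_le K a ha h0 hq
      (Fintype.card_fin q) hA rfl⟩
  refine ⟨max 1 (c * c), le_max_left _ _, fun α _ q h0 hq a A hA1 hA => ?_⟩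
  have hq0 : 0 < q := by omega
  have hq1 : (1 : ℝ) ≤ q := by exact_mod_cast hq0
  by_cases ha : a = 0
  · refine ⟨fun _ => 1, ?_, by rw [ha, Matrix.zero_mulVec], fun j => ?_⟩
    · exact fun h => one_ne_zero (congrFun h ⟨0, hq0⟩)
    · have h1 : house ((1 : 𝓞 K) : K) = 1 := by
        have := house_intCast (K := K) 1
        simpa using this
      rw [h1]
      exact one_le_mul_of_one_le_of_one_le
        (one_le_mul_of_one_le_of_one_le (le_max_left _ _) hq1) hA1
  · obtain ⟨ξ, h1, h2, h3⟩ := hc α q h0 (by omega) a A ha hA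
    refine ⟨ξ, h1, h2, fun j => (h3 j).trans ?_⟩
    have hp : (Fintype.card α : ℝ) ≠ 0 := by exact_mod_cast h0.ne'
    have h4 : (Fintype.card α : ℝ) / (q - Fintype.card α) = 1 := by
      rw [hq]; push_cast
      rw [two_mul, add_sub_cancel_right, div_self hp]
    rw [h4, Real.rpow_one, ← mul_assoc, ← mul_assoc]
    gcongr
    exact le_max_right _ _

end Estimates

end Bombieri

namespace Bombieri

open MvPolynomial NumberField

section Auxiliary

variable {n d : ℕ} {K : Type*} [Field K]

/-- A list containing each letter `ν` exactly `τ ν` times. -/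
noncomputable def sortedWord (τ : Fin n → ℕ) : List (Fin n) :=
  (∑ ν, Multiset.replicate (τ ν) ν).toList

theorem length_sortedWord (τ : Fin n → ℕ) : (sortedWord τ).length = ∑ ν, τ ν := by
  rw [sortedWord, Multiset.length_toList, Multiset.card_sum]
  simp

theorem perm_sortedWord (w : List (Fin n)) : w.Perm (sortedWord fun ν => w.count ν) := by
  rw [← Multiset.coe_eq_coe, sortedWord, Multiset.coe_toList]
  ext ν
  rw [Multiset.count_sum']
  simp [Multiset.count_replicate]

theorem eval_wordDer_eq_zero_of_sortedWord {p : Fin n → Fin d → MvPolynomial (Fin d) K}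
    (hcomm : ∀ ν μ P, fieldDer p ν (fieldDer p μ P) = fieldDer p μ (fieldDer p ν P))
    {k : ℕ} {P : MvPolynomial (Fin d) K} {x : Fin d → K}
    (h : ∀ τ : Fin n → Fin k, eval x (wordDer p (sortedWord fun ν => τ ν) P) = 0)
    (w : List (Fin n)) (hw : w.length < k) : eval x (wordDer p w P) = 0 := by
  rw [wordDer_perm hcomm (perm_sortedWord w)]
  exact h fun ν => ⟨w.count ν, List.count_le_length.trans_lt hw⟩

theorem house_le_of_forall [NumberField K] {y : K} {A : ℝ} (h : ∀ σ : K →+* ℂ, ‖σ y‖ ≤ A) :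
    house y ≤ A := by
  rw [house, pi_norm_le_iff_of_nonneg ((norm_nonneg _).trans (h (Classical.arbitrary _)))]
  exact h

/-- Liouville's inequality. -/
theorem one_le_norm_mul_pow [NumberField K] [Algebra K ℂ] {y : K} (hy : IsIntegral ℤ y)
    (hy0 : y ≠ 0) {H : ℝ} (hH : ∀ σ : K →+* ℂ, ‖σ y‖ ≤ H) :
    1 ≤ ‖algebraMap K ℂ y‖ * H ^ (Module.finrank ℚ K - 1) := by
  have h1 := norm_norm_le_norm_mul_house_pow y (algebraMap K ℂ)
  have h2 : (1 : ℝ) ≤ ‖Algebra.norm ℚ y‖ := by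
    obtain ⟨z, hz⟩ := IsIntegrallyClosed.isIntegral_iff.1 (Algebra.isIntegral_norm ℚ hy)
    rw [← hz]
    have hz0 : z ≠ 0 := by
      rintro rfl
      exact hy0 (Algebra.norm_eq_zero_iff.1 (by rw [← hz, map_zero]))
    have h3 : (1 : ℝ) ≤ |(z : ℝ)| := by exact_mod_cast Int.one_le_abs hz0
    rwa [eq_intCast, ← Rat.norm_cast_real, Rat.cast_intCast, Real.norm_eq_abs]
  refine h2.trans (h1.trans ?_)
  gcongr
  · exact house_nonneg _
  · exact house_le_of_forall hH

theorem exists_injective_finsupp {q L : ℕ} (h : q ≤ L ^ d) :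
    ∃ e : Fin q → Fin d →₀ ℕ, Function.Injective e ∧ ∀ j, (e j).degree ≤ d * L := by
  obtain ⟨g⟩ : Nonempty (Fin q ↪ (Fin d → Fin L)) :=
    Function.Embedding.nonempty_of_card_le (by simpa using h)
  refine ⟨fun j => Finsupp.equivFunOnFinite.symm fun i => (g j i : ℕ), fun j j' hj => ?_,
    fun j => ?_⟩
  · refine g.injective (funext fun i => Fin.ext ?_)
    exact DFunLike.congr_fun hj i
  · rw [Finsupp.degree_eq_sum]
    refine (Finset.sum_le_card_nsmul _ _ L fun i _ => (g j i).isLt.le).trans ?_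
    simp

variable [NumberField K]

/-- Siegel's lemma yields an auxiliary polynomial with vanishing jets at the given points. -/
theorem exists_auxiliary_of_estimates {p : Fin n → Fin d → MvPolynomial (Fin d) K}
    {N : ℕ} {x : Fin N → Fin d → K} (hN : 0 < N)
    {b : ℕ} {B : ℝ} (hb : 0 < b) (hB : 1 ≤ B)
    (hest : ∀ (i : Fin N) (w : List (Fin n)), ∀ P ∈ integerPolynomials d K, ∀ E : ℕ,
        P.totalDegree + w.length ≤ E →
        IsIntegral ℤ ((b : K) ^ E * eval (x i) (wordDer p w P)) ∧
        ∀ σ : K →+* ℂ, ‖σ (eval (x i) (wordDer p w P))‖ ≤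
          B ^ E * (E : ℝ) ^ w.length * coeffNorm 1 (map σ P)) :
    ∃ c : ℝ, 1 ≤ c ∧ ∀ k L : ℕ, 0 < k → 2 * (N * k ^ n) ≤ L ^ d →
      ∃ P ∈ integerPolynomials d K, P ≠ 0 ∧ P.totalDegree ≤ d * L ∧
        (∀ i, ∀ τ : Fin n → Fin k, eval (x i) (wordDer p (sortedWord fun ν => τ ν) P) = 0) ∧
        ∀ σ : K →+* ℂ, coeffNorm 1 (map σ P) ≤ c * (2 * (N * k ^ n)) ^ 2 *
          ((b * B) ^ (d * L + n * k) * (d * L + n * k) ^ (n * k)) := by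
  classical
  obtain ⟨c, hc1, hc⟩ := exists_siegel K
  refine ⟨c, hc1, fun k L hk hL => ?_⟩
  obtain ⟨q, hq⟩ : ∃ q, q = 2 * (N * k ^ n) := ⟨_, rfl⟩
  obtain ⟨E, hE⟩ : ∃ E, E = d * L + n * k := ⟨_, rfl⟩
  obtain ⟨e, hinj, he⟩ := exists_injective_finsupp (hq.trans_le hL)
  have hdegree : ∀ j, (monomial (e j) (1 : K)).totalDegree ≤ d * L := fun j => by
    refine (totalDegree_monomial_le _ _).trans ?_
    simpa [Finsupp.degree_apply, Finsupp.sum] using he j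
  have hmem : ∀ j (ξ : 𝓞 K), monomial (e j) (ξ : K) ∈ integerPolynomials d K := fun j ξ =>
    ⟨monomial (e j) ξ, map_monomial _ _ _⟩
  have hmem1 : ∀ j, monomial (e j) (1 : K) ∈ integerPolynomials d K := fun j => by
    simpa using hmem j 1
  have hlen : ∀ τ : Fin n → Fin k, (sortedWord fun ν => (τ ν : ℕ)).length ≤ n * k := fun τ => by
    rw [length_sortedWord]
    refine (Finset.sum_le_card_nsmul _ _ k fun ν _ => (τ ν).isLt.le).trans ?_
    simp
  have hEle : ∀ (τ : Fin n → Fin k) j, (monomial (e j) (1 : K)).totalDegree +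
      (sortedWord fun ν => (τ ν : ℕ)).length ≤ E := fun τ j => by
    rw [hE]; exact Nat.add_le_add (hdegree j) (hlen τ)
  have hval := fun (i : Fin N) (τ : Fin n → Fin k) (j : Fin q) =>
    hest i (sortedWord fun ν => (τ ν : ℕ)) _ (hmem1 j) E (hEle τ j)
  have hmk : ∀ i (τ : Fin n → Fin k) j, ∃ y : 𝓞 K, (y : K) = (b : K) ^ E *
      eval (x i) (wordDer p (sortedWord fun ν => (τ ν : ℕ)) (monomial (e j) 1)) := fun i τ j =>
    ⟨⟨_, (hval i τ j).1⟩, rfl⟩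
  choose a ha using hmk
  have hb1 : (1 : ℝ) ≤ b := by exact_mod_cast hb
  have hE1 : n * k ≠ 0 → (1 : ℝ) ≤ E := fun h => by
    have : 1 ≤ E := by omega
    exact_mod_cast this
  have hA1 : 1 ≤ (b * B) ^ E * (E : ℝ) ^ (n * k) := by
    refine one_le_mul_of_one_le_of_one_le
      (one_le_pow₀ (one_le_mul_of_one_le_of_one_le hb1 hB)) ?_
    rcases eq_or_ne (n * k) 0 with h | h
    · rw [h, pow_zero]
    · exact one_le_pow₀ (hE1 h)
  obtain ⟨ξ, hξ0, hξ, hξle⟩ := hc (Fin N × (Fin n → Fin k)) q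
    (by simp only [Fintype.card_prod, Fintype.card_fin, Fintype.card_fun]; positivity)
    (by simpa using hq)
    (fun r j => a r.1 r.2 j) ((b * B) ^ E * (E : ℝ) ^ (n * k)) hA1 (by
      rintro ⟨i, τ⟩ j
      refine house_le_of_forall fun σ => ?_
      have h1 := (hval i τ j).2 σ
      rw [map_monomial, map_one σ, coeffNorm_monomial, norm_one] at h1
      rw [ha, map_mul, map_pow, map_natCast, norm_mul, norm_pow, Complex.norm_natCast, mul_pow,
        mul_assoc]
      gcongr
      refine h1.trans ?_
      rw [one_pow, mul_one, mul_one]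
      refine mul_le_mul_of_nonneg_left ?_ (by positivity)
      rcases Nat.eq_zero_or_pos (n * k) with h | h
      · have := hlen τ
        rw [h] at this ⊢
        rw [Nat.le_zero.1 this]
      · exact pow_le_pow_right₀ (hE1 h.ne') (hlen τ))
  refine ⟨∑ j, monomial (e j) (ξ j : K), Subring.sum_mem _ fun j _ => hmem j _, fun h0 => ?_,
    totalDegree_finsetSum_le fun j _ => ?_, fun i τ => ?_, fun σ => ?_⟩
  · refine hξ0 (funext fun j => ?_)
    have h1 := congrArg (coeff (e j)) h0
    rw [coeff_sum, coeff_zero, Finset.sum_eq_single j (fun j' _ hj' => by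
      rw [coeff_monomial, if_neg (hinj.ne hj')]) (by simp), coeff_monomial, if_pos rfl] at h1
    exact RingOfIntegers.ext h1
  · refine (totalDegree_monomial_le _ _).trans ?_
    simpa [Finsupp.degree_apply, Finsupp.sum] using he j
  · have h1 := congrArg (algebraMap (𝓞 K) K) (congrFun hξ (i, τ))
    change algebraMap (𝓞 K) K (∑ j, a i τ j * ξ j) = _ at h1
    rw [map_sum] at h1
    have h2 : (b : K) ^ E * eval (x i) (wordDer p (sortedWord fun ν => (τ ν : ℕ))
        (∑ j, monomial (e j) (ξ j : K))) = 0 := by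
      rw [map_sum, map_sum, Finset.mul_sum]
      refine Eq.trans (Finset.sum_congr rfl fun j _ => ?_) (h1.trans (map_zero _))
      have h3 : monomial (e j) (ξ j : K) = (ξ j : K) • monomial (e j) 1 := by
        rw [smul_monomial, smul_eq_mul, mul_one]
      rw [map_mul, h3, map_smul, smul_eval, mul_left_comm, ← ha, mul_comm]
    exact (mul_eq_zero.1 h2).resolve_left (pow_ne_zero _ (by exact_mod_cast hb.ne'))
  · rw [map_sum]
    refine (coeffNorm_sum_le zero_le_one _ _).trans ?_
    calc ∑ j, coeffNorm 1 (map σ (monomial (e j) (ξ j : K)))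
        ≤ ∑ _j : Fin q, c * q * ((b * B) ^ E * (E : ℝ) ^ (n * k)) := by
          refine Finset.sum_le_sum fun j _ => ?_
          rw [map_monomial, coeffNorm_monomial, one_pow, mul_one]
          exact (norm_embedding_le_house _ σ).trans (hξle j)
      _ = _ := by
          rw [Finset.sum_const, Finset.card_univ, Fintype.card_fin, nsmul_eq_mul, hE, hq]
          push_cast
          ring

end Auxiliary

end Bombieri

namespace Bombieri

open MvPolynomial NumberField

section Parameters

variable {n d : ℕ} {K : Type*} [Field K]

theorem auxiliary_size_le {N k L b : ℕ} {B c : ℝ} (hd : 0 < d) (hN : 0 < N) (hk : 0 < k)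
    (hb : 0 < b) (hB : 1 ≤ B) (hc : 1 ≤ c) (hL : L ≤ 2 * N * k) :
    c * (2 * (N * k ^ n)) ^ 2 * ((b * B) ^ (d * L + n * k) * (d * L + n * k) ^ (n * k)) ≤
      (c * (4 * N ^ 2) * 4 ^ n * (b * B) ^ (2 * d * N + n) * (2 * d * N + n) ^ n) ^ k *
        (k : ℝ) ^ (n * k) := by
  have hb1 : (1 : ℝ) ≤ b := by exact_mod_cast hb
  have hN1 : (1 : ℝ) ≤ N := by exact_mod_cast hN
  have hbB : 1 ≤ b * B := one_le_mul_of_one_le_of_one_le hb1 hB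
  have hc0 : 0 ≤ c := zero_le_one.trans hc
  have hE : d * L + n * k ≤ (2 * d * N + n) * k := by
    calc d * L + n * k ≤ d * (2 * N * k) + n * k := by gcongr
      _ = _ := by ring
  have hE' : (d * L + n * k : ℝ) ≤ (2 * d * N + n) * k := by exact_mod_cast hE
  have h1 : c ≤ c ^ k := le_self_pow₀ hc hk.ne'
  have h2 : (4 * (N : ℝ) ^ 2) ≤ (4 * N ^ 2) ^ k := le_self_pow₀ (by nlinarith) hk.ne'
  have h3 : ((k : ℝ) ^ n) ^ 2 ≤ (4 ^ n) ^ k := by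
    have h4 : (k : ℝ) ≤ 2 ^ k := by exact_mod_cast Nat.lt_two_pow_self.le
    calc ((k : ℝ) ^ n) ^ 2 ≤ ((2 ^ k) ^ n) ^ 2 := by gcongr
      _ = (4 ^ n) ^ k := by
        rw [show (4 : ℝ) = 2 ^ 2 by norm_num, ← pow_mul, ← pow_mul, ← pow_mul, ← pow_mul]
        ring_nf
  have h5 : (b * B) ^ (d * L + n * k) ≤ ((b * B) ^ (2 * d * N + n)) ^ k := by
    rw [← pow_mul]
    exact pow_le_pow_right₀ hbB hE
  calc c * (2 * (N * k ^ n)) ^ 2 * ((b * B) ^ (d * L + n * k) * (d * L + n * k) ^ (n * k))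
      = c * (4 * N ^ 2) * ((k : ℝ) ^ n) ^ 2 *
          ((b * B) ^ (d * L + n * k) * (d * L + n * k) ^ (n * k)) := by ring
    _ ≤ c ^ k * (4 * N ^ 2) ^ k * (4 ^ n) ^ k *
          (((b * B) ^ (2 * d * N + n)) ^ k * ((2 * d * N + n) * k) ^ (n * k)) := by gcongr
    _ = _ := by
      rw [mul_pow (2 * (d : ℝ) * N + n), pow_mul (2 * (d : ℝ) * N + n)]
      simp only [mul_pow]
      ring

variable [NumberField K]

/-- The auxiliary polynomial, with the degree and order of vanishing chosen in terms of `X`. -/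
theorem exists_auxiliary {p : Fin n → Fin d → MvPolynomial (Fin d) K} (hnd : n < d)
    (hcomm : ∀ ν μ P, fieldDer p ν (fieldDer p μ P) = fieldDer p μ (fieldDer p ν P))
    {N : ℕ} {x : Fin N → Fin d → K} (hN : 0 < N)
    {b : ℕ} {B : ℝ} (hb : 0 < b) (hB : 1 ≤ B)
    (hest : ∀ (i : Fin N) (w : List (Fin n)), ∀ P ∈ integerPolynomials d K, ∀ E : ℕ,
        P.totalDegree + w.length ≤ E →
        IsIntegral ℤ ((b : K) ^ E * eval (x i) (wordDer p w P)) ∧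
        ∀ σ : K →+* ℂ, ‖σ (eval (x i) (wordDer p w P))‖ ≤
          B ^ E * (E : ℝ) ^ w.length * coeffNorm 1 (map σ P)) :
    ∃ V : ℝ, 1 ≤ V ∧ ∀ X : ℕ, 0 < X →
      ∃ P ∈ integerPolynomials d K, P ≠ 0 ∧ P.totalDegree ≤ d * (2 * N * X ^ n) ∧
        (∀ i, ∀ w : List (Fin n), w.length < X ^ (n + 1) → eval (x i) (wordDer p w P) = 0) ∧
        ∀ σ : K →+* ℂ, coeffNorm 1 (map σ P) ≤
          V ^ X ^ (n + 1) * ((X ^ (n + 1) : ℕ) : ℝ) ^ (n * X ^ (n + 1)) := by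
  obtain ⟨c, hc1, hc⟩ := exists_auxiliary_of_estimates hN hb hB hest
  have hb1 : (1 : ℝ) ≤ b := by exact_mod_cast hb
  have hN1 : (1 : ℝ) ≤ N := by exact_mod_cast hN
  have hd1 : (1 : ℝ) ≤ d := by exact_mod_cast (by omega : 1 ≤ d)
  refine ⟨c * (4 * N ^ 2) * 4 ^ n * (b * B) ^ (2 * d * N + n) * (2 * d * N + n) ^ n, ?_,
    fun X hX => ?_⟩
  · have h1 : (1 : ℝ) ≤ 4 * N ^ 2 := by nlinarith
    have h2 : (1 : ℝ) ≤ 2 * d * N + n := by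
      have : (0 : ℝ) ≤ n := n.cast_nonneg
      nlinarith
    have h3 := one_le_mul_of_one_le_of_one_le hb1 hB
    exact one_le_mul_of_one_le_of_one_le (one_le_mul_of_one_le_of_one_le
      (one_le_mul_of_one_le_of_one_le (one_le_mul_of_one_le_of_one_le hc1 h1)
        (one_le_pow₀ (by norm_num))) (one_le_pow₀ h3)) (one_le_pow₀ h2)
  · obtain ⟨P, hP, hP0, hdeg, hvan, hnorm⟩ := hc (X ^ (n + 1)) (2 * N * X ^ n) (by positivity) (by
      calc 2 * (N * (X ^ (n + 1)) ^ n) = 2 * N * (X ^ n) ^ (n + 1) := by ring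
        _ ≤ (2 * N) ^ (n + 1) * (X ^ n) ^ (n + 1) := by
          gcongr
          exact Nat.le_self_pow (by omega) _
        _ = (2 * N * X ^ n) ^ (n + 1) := by ring
        _ ≤ (2 * N * X ^ n) ^ d := Nat.pow_le_pow_right (by positivity) hnd)
    refine ⟨P, hP, hP0, hdeg, fun i w hw => eval_wordDer_eq_zero_of_sortedWord hcomm (hvan i) w hw,
      fun σ => (hnorm σ).trans ?_⟩
    exact auxiliary_size_le (by omega) hN (by positivity) hb hB hc1 (by
      gcongr
      omega)

end Parameters

end Bombieri

namespace Bombieri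

open MvPolynomial NumberField

section Contradiction

variable {n d : ℕ} {K : Type*} [Field K] [Algebra K ℂ] {f : Fin d → (Fin n → ℂ) → ℂ}
  {p : Fin n → Fin d → MvPolynomial (Fin d) K}

theorem norm_aeval_le_of_norm_le {P : MvPolynomial (Fin d) K} {D : ℕ} (hD : P.totalDegree ≤ D)
    {H T : ℝ} (hT : 1 ≤ T) (hH : coeffNorm 1 (map (algebraMap K ℂ) P) ≤ H) {y : Fin d → ℂ}
    (hy : ∀ i, ‖y i‖ ≤ T) : ‖aeval y P‖ ≤ T ^ D * H := by
  rw [aeval_def, ← eval_map]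
  refine (norm_eval_le_coeffNorm hy _).trans
    ((coeffNorm_le_pow_mul hT ((totalDegree_map_le_of_le _ P).trans hD)).trans ?_)
  gcongr

/-- A word of minimal length whose derivative does not vanish at all of the given points. -/
theorem exists_minimal_word (hf : ∀ i, Differentiable ℂ (f i))
    (hp : ∀ ν i z, fderiv ℂ (f i) z (Pi.single ν 1) = aeval (fun j => f j z) (p ν i))
    (hind : ∀ P : MvPolynomial (Fin d) K, (∀ z, aeval (fun i => f i z) P = 0) → P = 0)
    {N : ℕ} (hN : 0 < N) (s : Fin N → Fin n → ℂ) {P : MvPolynomial (Fin d) K} (hP : P ≠ 0) :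
    ∃ w i, aeval (fun j => f j (s i)) (wordDer p w P) ≠ 0 ∧
      ∀ i' w', w'.length < w.length → aeval (fun j => f j (s i')) (wordDer p w' P) = 0 := by
  classical
  have hex : ∃ m, ∃ w : List (Fin n), ∃ i, w.length = m ∧
      aeval (fun j => f j (s i)) (wordDer p w P) ≠ 0 := by
    by_contra! h
    exact hP (hind P (aeval_eq_zero_of_wordDer hf hp (s ⟨0, hN⟩) fun w => h _ w _ rfl))
  obtain ⟨w, i, hw, hne⟩ := Nat.find_spec hex
  refine ⟨w, i, hne, fun i' w' hw' => ?_⟩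
  by_contra h
  exact Nat.find_min hex (hw ▸ hw') ⟨w', i', rfl, h⟩

theorem norm_aeval_wordDer_le_of_schwarz (hf : ∀ i, Differentiable ℂ (f i))
    (hp : ∀ ν i z, fderiv ℂ (f i) z (Pi.single ν 1) = aeval (fun j => f j z) (p ν i))
    {N : ℕ} {s : Fin N → Fin n → ℂ} {P : MvPolynomial (Fin d) K} {w : List (Fin n)}
    (hw : 0 < w.length)
    (hvan : ∀ i w', w'.length < w.length → aeval (fun j => f j (s i)) (wordDer p w' P) = 0)
    {c l : ℕ} {r C : ℝ} (hC : 1 ≤ C)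
    (hschwarz : ∀ (k : ℕ) (F : (Fin n → ℂ) → ℂ), Differentiable ℂ F →
      (∀ i ζ, ∀ j < l * k, iteratedDeriv j (fun t : ℂ => F (s i + t • ζ)) 0 = 0) →
      ∀ R ≥ C, ∀ M, 0 ≤ M → (∀ z, ‖z‖ ≤ R → ‖F z‖ ≤ M) →
        ∀ z, ‖z‖ ≤ r → ‖F z‖ ≤ C ^ (k + 1) * M / R ^ (c * l * k))
    {i : Fin N} (hr : ‖s i‖ + 1 ≤ r) {R M : ℝ} (hR : C ≤ R) (hM0 : 0 ≤ M)
    (hM : ∀ z, ‖z‖ ≤ R → ‖aeval (fun j => f j z) P‖ ≤ M) :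
    ‖aeval (fun j => f j (s i)) (wordDer p w P)‖ ≤
      C ^ (2 * w.length) * M / R ^ (c * l * (w.length / l)) * (w.length : ℝ) ^ w.length := by
  have hm : (0 : ℝ) < w.length := by exact_mod_cast hw
  have hR0 : 0 < R := by linarith
  have h1 := norm_aeval_wordDer_le hf hp P (inv_pos.2 hm) w (s i)
    (M := C ^ (2 * w.length) * M / R ^ (c * l * (w.length / l))) fun z hz => by
      rw [mul_inv_cancel₀ hm.ne'] at hz
      have hz' : ‖z‖ ≤ r := by
        have := norm_add_le (z - s i) (s i)
        rw [sub_add_cancel] at this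
        linarith
      refine (hschwarz (w.length / l) (fun z => aeval (fun j => f j z) P)
        (differentiable_aeval hf P) (fun i' ζ j hj => ?_) R hR M hM0 hM z hz').trans ?_
      · refine iteratedDeriv_aeval_line_eq_zero hf hp (s i') ζ j P fun w' hw' => hvan i' w' ?_
        rw [hw']
        exact hj.trans_le (Nat.mul_div_le _ _)
      · have h2 : w.length / l + 1 ≤ 2 * w.length := by
          have := Nat.div_le_self w.length l
          omega
        gcongr
  rwa [inv_pow, div_inv_eq_mul] at h1

theorem le_of_pow_mul_div_le {m l a : ℕ} {W : ℝ} (hm : 0 < m) (hl : 0 < l) (hW : 0 ≤ W)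
    (hlm : (a + 2) * l ≤ m)
    (h : (m : ℝ) ^ ((a + 2) * l * (m / l)) ≤ W ^ m * (m : ℝ) ^ (a * m)) : (m : ℝ) ≤ W := by
  have hm1 : (1 : ℝ) ≤ m := by exact_mod_cast hm
  have h1 : (a + 2) * m ≤ (a + 2) * l * (m / l) + m := by
    have h2 : m ≤ l * (m / l) + l := by
      have := Nat.div_add_mod m l
      have := Nat.mod_lt m hl
      omega
    calc (a + 2) * m ≤ (a + 2) * (l * (m / l) + l) := by gcongr
      _ = (a + 2) * l * (m / l) + (a + 2) * l := by ring
      _ ≤ _ := by gcongr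
  have h3 : (m : ℝ) ^ (a * m + m) * (m : ℝ) ^ m ≤ (m : ℝ) ^ (a * m + m) * W ^ m := by
    calc (m : ℝ) ^ (a * m + m) * (m : ℝ) ^ m = (m : ℝ) ^ ((a + 2) * m) := by ring
      _ ≤ (m : ℝ) ^ ((a + 2) * l * (m / l) + m) := pow_le_pow_right₀ hm1 h1
      _ = (m : ℝ) ^ ((a + 2) * l * (m / l)) * (m : ℝ) ^ m := pow_add _ _ _
      _ ≤ W ^ m * (m : ℝ) ^ (a * m) * (m : ℝ) ^ m := by gcongr
      _ = _ := by ring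
  exact le_of_pow_le_pow_left₀ hm.ne' hW (le_of_mul_le_mul_left h3 (by positivity))

end Contradiction

end Bombieri

namespace Bombieri

open MvPolynomial NumberField

section Main

variable {n d : ℕ} {K : Type*} [Field K] [NumberField K] [Algebra K ℂ]
  {f : Fin d → (Fin n → ℂ) → ℂ} {p : Fin n → Fin d → MvPolynomial (Fin d) K}

theorem exp_pow_le_of_pow_eq {N X m ρ : ℕ} {R : ℝ} (hR : 0 ≤ R) (hX : X ^ (n + 1) ≤ m)
    (hRm : R ^ (ρ * (n + 1)) = m) :
    Real.exp (R ^ ρ) ^ (d * (2 * N * X ^ n)) ≤ Real.exp (2 * d * N) ^ m := by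
  have h1 : (X : ℝ) ≤ R ^ ρ := by
    refine le_of_pow_le_pow_left₀ n.succ_ne_zero (by positivity) ?_
    rw [← pow_mul, hRm]
    exact_mod_cast hX
  rw [← Real.exp_nat_mul, ← Real.exp_nat_mul, Real.exp_le_exp]
  push_cast
  calc (d : ℝ) * (2 * N * X ^ n) * R ^ ρ ≤ d * (2 * N * (R ^ ρ) ^ n) * R ^ ρ := by gcongr
    _ = R ^ (ρ * (n + 1)) * (2 * d * N) := by ring
    _ = _ := by rw [hRm]

/-- Points at which all functions take values in the number field lie on a hypersurface. -/
theorem exists_hypersurface (hn : 0 < n) (hnd : n < d) (hf : ∀ i, Differentiable ℂ (f i))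
    (hp : ∀ ν i z, fderiv ℂ (f i) z (Pi.single ν 1) = aeval (fun j => f j z) (p ν i))
    (hind : ∀ P : MvPolynomial (Fin d) K, (∀ z, aeval (fun i => f i z) P = 0) → P = 0)
    {ρ : ℕ} (hρ : 0 < ρ) {R₀ : ℝ}
    (hgrow : ∀ i R, R₀ ≤ R → ∀ z, ‖z‖ ≤ R → ‖f i z‖ ≤ Real.exp (R ^ ρ)) {S : Set (Fin n → ℂ)}
    (hS : ∀ w ∈ S, ∀ i, ∃ y : K, algebraMap K ℂ y = f i w) :
    ∃ Q : MvPolynomial (Fin n) ℂ, Q ≠ 0 ∧ ∀ w ∈ S, eval w Q = 0 := by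
  by_contra hcon
  have hdense : ∀ Q : MvPolynomial (Fin n) ℂ, (∀ w ∈ S, eval w Q = 0) → Q = 0 := fun Q hQ => by
    by_contra hQ0
    exact hcon ⟨Q, hQ0, hQ⟩
  obtain ⟨δ, hδ⟩ : ∃ δ, Module.finrank ℚ K = δ + 1 :=
    Nat.exists_eq_succ_of_ne_zero Module.finrank_pos.ne'
  obtain ⟨a, ha⟩ : ∃ a, a = (n + 1) * (δ + 1) := ⟨_, rfl⟩
  obtain ⟨N, s, l, hN, hs, hl, hschwarz⟩ := exists_schwarz hn hdense (ρ * (n + 1) * (a + 2))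
  choose x hx using fun i j => hS (s i) (hs i) j
  have hxf : ∀ i Q, aeval (fun j => f j (s i)) Q = algebraMap K ℂ (eval (x i) Q) := fun i Q => by
    rw [show (fun j => f j (s i)) = algebraMap K ℂ ∘ x i from funext fun j => (hx i j).symm,
      aeval_algebraMap_apply, aeval_eq_eval]
  obtain ⟨b, B, hb, hB, hest⟩ := exists_wordDer_estimates p x
  obtain ⟨V, hV1, hV⟩ := exists_auxiliary hnd (fieldDer_comm hf hp hind) hN hb hB hest
  obtain ⟨T, -, hT⟩ := exists_one_le_forall_le fun i => ‖s i‖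
  obtain ⟨C, hC1, hC⟩ := hschwarz (T + 1)
  obtain ⟨e, he⟩ : ∃ e, e = 2 * d * N + 1 := ⟨_, rfl⟩
  obtain ⟨W₁, hW₁⟩ : ∃ W₁ : ℝ, W₁ = (b * B) ^ e * e * V := ⟨_, rfl⟩
  obtain ⟨W, hW⟩ : ∃ W : ℝ, W = b ^ e * C ^ 2 * V * Real.exp (2 * d * N) * W₁ ^ δ := ⟨_, rfl⟩
  have hB0 : 0 ≤ B := zero_le_one.trans hB
  have hV0 : 0 ≤ V := zero_le_one.trans hV1
  have hC0 : 0 ≤ C := zero_le_one.trans hC1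
  have hW₁0 : 0 ≤ W₁ := by rw [hW₁]; positivity
  have hW0 : 0 ≤ W := by rw [hW]; positivity
  obtain ⟨X, hX⟩ := exists_nat_gt (((a + 2) * l : ℕ) + W + max C R₀ ^ (ρ * (n + 1)))
  have hmax : 0 ≤ max C R₀ := hC0.trans (le_max_left _ _)
  have hl0 : (0 : ℝ) ≤ ((a + 2) * l : ℕ) := Nat.cast_nonneg _
  have hmaxpow : 0 ≤ max C R₀ ^ (ρ * (n + 1)) := pow_nonneg hmax _
  have hX0 : 0 < X := by
    have : (0 : ℝ) < X := by linarith
    exact_mod_cast this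
  obtain ⟨P, hP, hP0, hdeg, hvan, hnorm⟩ := hV X hX0
  obtain ⟨w, i, hne, hmin⟩ := exists_minimal_word hf hp hind hN s hP0
  obtain ⟨m, hm⟩ : ∃ m, m = w.length := ⟨_, rfl⟩
  have hkm : X ^ (n + 1) ≤ m := by
    by_contra h
    exact hne (by rw [hxf, hvan i w (by omega), map_zero])
  have hXm : X ≤ m := (Nat.le_self_pow n.succ_ne_zero X).trans hkm
  have hm0 : 0 < m := hX0.trans_le hXm
  have hm1 : (1 : ℝ) ≤ m := by exact_mod_cast hm0
  have hXm' : (X : ℝ) ≤ m := by exact_mod_cast hXm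
  have hcoeff : ∀ σ : K →+* ℂ, coeffNorm 1 (map σ P) ≤ V ^ m * (m : ℝ) ^ (n * m) := fun σ => by
    refine (hnorm σ).trans ?_
    have h1 : ((X ^ (n + 1) : ℕ) : ℝ) ≤ m := by exact_mod_cast hkm
    have h2 : ((X ^ (n + 1) : ℕ) : ℝ) ^ (n * X ^ (n + 1)) ≤ (m : ℝ) ^ (n * m) :=
      (pow_le_pow_left₀ (Nat.cast_nonneg _) h1 _).trans (pow_le_pow_right₀ hm1 (by gcongr))
    gcongr
  -- Liouville's inequality for the first nonvanishing derivative.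
  have hEle : P.totalDegree + w.length ≤ e * m := by
    have h1 : X ^ n ≤ m := (Nat.pow_le_pow_right hX0 n.le_succ).trans hkm
    calc P.totalDegree + w.length ≤ d * (2 * N * m) + m := by
          rw [← hm]
          gcongr
          exact hdeg.trans (by gcongr)
      _ = e * m := by rw [he]; ring
  obtain ⟨hintegral, hsize⟩ := hest i w P hP (e * m) hEle
  have hγ0 : (b : K) ^ (e * m) * eval (x i) (wordDer p w P) ≠ 0 := by
    refine mul_ne_zero (pow_ne_zero _ (by exact_mod_cast hb.ne')) fun h => hne ?_
    rw [hxf, h, map_zero]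
  have hlow := one_le_norm_mul_pow hintegral hγ0 (H := W₁ ^ m * (m : ℝ) ^ ((n + 1) * m)) fun σ => by
    rw [map_mul, map_pow, map_natCast, norm_mul, norm_pow, Complex.norm_natCast]
    calc (b : ℝ) ^ (e * m) * ‖σ (eval (x i) (wordDer p w P))‖
        ≤ (b : ℝ) ^ (e * m) * (B ^ (e * m) * ((e * m : ℕ) : ℝ) ^ w.length *
            (V ^ m * (m : ℝ) ^ (n * m))) := by
          refine mul_le_mul_of_nonneg_left ((hsize σ).trans ?_) (by positivity)
          exact mul_le_mul_of_nonneg_left (hcoeff σ) (by positivity)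
      _ = _ := by
          rw [← hm, hW₁]
          push_cast
          simp only [mul_pow, ← pow_mul]
          ring
  -- The upper bound from the Schwarz lemma.
  obtain ⟨R, hR0, hRm⟩ : ∃ R : ℝ, 0 ≤ R ∧ R ^ (ρ * (n + 1)) = m :=
    ⟨(m : ℝ) ^ (((ρ * (n + 1) : ℕ) : ℝ)⁻¹), by positivity,
      Real.rpow_inv_natCast_pow (by positivity) (by positivity)⟩
  have hR : max C R₀ ≤ R := by
    refine le_of_pow_le_pow_left₀ (n := ρ * (n + 1)) (by positivity) hR0 ?_
    rw [hRm]
    linarith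
  have hup := norm_aeval_wordDer_le_of_schwarz hf hp (hm ▸ hm0) hmin hC1 hC
    (i := i) (by linarith [hT i]) ((le_max_left _ _).trans hR)
    (M := Real.exp (2 * d * N) ^ m * (V ^ m * (m : ℝ) ^ (n * m))) (by positivity) fun z hz => by
      refine (norm_aeval_le_of_norm_le hdeg (Real.one_le_exp (pow_nonneg hR0 ρ)) (hcoeff _)
        fun j => hgrow j R ((le_max_right _ _).trans hR) z hz).trans ?_
      exact mul_le_mul_of_nonneg_right (exp_pow_le_of_pow_eq hR0 hkm hRm) (by positivity)
  rw [← hm, mul_assoc (ρ * (n + 1)), mul_assoc (ρ * (n + 1)), pow_mul R, hRm, hxf] at hup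
  rw [map_mul, norm_mul, map_pow, map_natCast, norm_pow, Complex.norm_natCast, hδ,
    Nat.add_sub_cancel] at hlow
  have hfinal : (m : ℝ) ^ ((a + 2) * l * (m / l)) ≤ W ^ m * (m : ℝ) ^ (a * m) := by
    have h1 : (1 : ℝ) ≤ (b : ℝ) ^ (e * m) * (C ^ (2 * m) * (Real.exp (2 * d * N) ^ m *
        (V ^ m * (m : ℝ) ^ (n * m))) / (m : ℝ) ^ ((a + 2) * l * (m / l)) * (m : ℝ) ^ m) *
        (W₁ ^ m * (m : ℝ) ^ ((n + 1) * m)) ^ δ := hlow.trans (by gcongr)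
    have h2 : (0 : ℝ) < (m : ℝ) ^ ((a + 2) * l * (m / l)) := by positivity
    calc (m : ℝ) ^ ((a + 2) * l * (m / l))
        ≤ (m : ℝ) ^ ((a + 2) * l * (m / l)) * _ := le_mul_of_one_le_right h2.le h1
      _ = (b : ℝ) ^ (e * m) * (C ^ (2 * m) * (Real.exp (2 * d * N) ^ m *
            (V ^ m * (m : ℝ) ^ (n * m))) * (m : ℝ) ^ m) *
            (W₁ ^ m * (m : ℝ) ^ ((n + 1) * m)) ^ δ := by field_simp
      _ = _ := by
          rw [hW, ha]
          simp only [mul_pow, ← pow_mul]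
          ring
  have hle := le_of_pow_mul_div_le hm0 hl hW0 (by
    have : (((a + 2) * l : ℕ) : ℝ) ≤ m := by linarith
    exact_mod_cast this) hfinal
  linarith

end Main

end Bombieri

namespace Bombieri

open MvPolynomial

/-- A common growth exponent for finitely many functions of finite order. -/
theorem exists_growth {n d : ℕ} {f : Fin d → (Fin n → ℂ) → ℂ}
    (hf : ∀ i, Continuous (f i)) (horder : ∀ i, HasFiniteOrderGrowthN n (f i)) :
    ∃ ρ : ℕ, 0 < ρ ∧ ∃ R₀ : ℝ, ∀ i R, R₀ ≤ R → ∀ z, ‖z‖ ≤ R →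
      ‖f i z‖ ≤ Real.exp (R ^ ρ) := by
  choose ρ _ hR using horder
  choose R₀ hR₀ using fun i => hR i 1 one_pos
  obtain ⟨A, -, hA⟩ := exists_one_le_forall_le ρ
  obtain ⟨T, hT1, hT⟩ := exists_one_le_forall_le R₀
  obtain ⟨σ, hσ⟩ := exists_nat_gt (A + 1)
  refine ⟨σ + 1, σ.succ_pos, T, fun i R hTR z hz => ?_⟩
  have hR1 : 1 ≤ R := hT1.trans hTR
  have hset : {z : Fin n → ℂ | ∀ i, ‖z i‖ ≤ R} = Metric.closedBall 0 R := by
    ext y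
    rw [mem_closedBall_zero_iff, pi_norm_le_iff_of_nonneg (zero_le_one.trans hR1)]
    rfl
  have hbdd : BddAbove ((fun z => ‖f i z‖) '' {z : Fin n → ℂ | ∀ i, ‖z i‖ ≤ R}) := by
    rw [hset]
    exact ((isCompact_closedBall 0 R).image (hf i).norm).bddAbove
  have h1 : ‖f i z‖ ≤ PolydiscSup n (f i) R :=
    le_csSup hbdd ⟨z, fun j => (norm_le_pi_norm z j).trans hz, rfl⟩
  refine h1.trans ((hR₀ i R ((hT i).trans hTR)).trans (Real.exp_le_exp.2 ?_))
  rw [← Real.rpow_natCast]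
  refine Real.rpow_le_rpow_of_exponent_le hR1 ?_
  push_cast
  linarith [hA i]

theorem exists_map_subtype_eq {d : ℕ} {K : Subfield ℂ} {P : MvPolynomial (Fin d) ℂ}
    (hP : ∀ m, coeff m P ∈ K) : ∃ Q : MvPolynomial (Fin d) K, map (algebraMap K ℂ) Q = P := by
  refine ⟨∑ m ∈ P.support, monomial m ⟨coeff m P, hP m⟩, ?_⟩
  rw [map_sum]
  conv_rhs => rw [P.as_sum]
  exact Finset.sum_congr rfl fun m _ => map_monomial _ _ _

end Bombieri

/-- **Bombieri's Theorem.** Let `d > n ≥ 1`, `K ⊆ ℂ` a number field, and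
`f₁, …, f_d` algebraically independent entire functions on `ℂ^n` of finite order
of growth whose partial derivatives `(∂/∂z_ν) f_i` belong to `K[f₁, …, f_d]`.
Then the set of points `w ∈ ℂ^n` where all `f_i(w) ∈ K` is contained in an
algebraic hypersurface `Q = 0` with `Q ≠ 0`. -/
theorem bombieri_hypersurface
    (n d : ℕ) (hn : 1 ≤ n) (hnd : n < d)
    (K : Subfield ℂ) (hK : FiniteDimensional ℚ K)
    (f : Fin d → (Fin n → ℂ) → ℂ)
    (hent : ∀ i, Differentiable ℂ (f i))
    (horder : ∀ i, HasFiniteOrderGrowthN n (f i))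
    (halgind : ∀ P : MvPolynomial (Fin d) ℂ, (∀ m, MvPolynomial.coeff m P ∈ K) →
      (∀ z : Fin n → ℂ, MvPolynomial.eval (fun i => f i z) P = 0) → P = 0)
    (hdiff : ∀ (ν : Fin n) (i : Fin d), ∃ P : MvPolynomial (Fin d) ℂ,
      (∀ m, MvPolynomial.coeff m P ∈ K) ∧
      ∀ z : Fin n → ℂ, fderiv ℂ (f i) z (Pi.single ν 1) =
        MvPolynomial.eval (fun j => f j z) P) :
    ∃ Q : MvPolynomial (Fin n) ℂ, Q ≠ 0 ∧
      ∀ w : Fin n → ℂ, (∀ i, f i w ∈ K) → MvPolynomial.eval w Q = 0 := by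
  have : NumberField K := ⟨⟩
  choose p' hp'K hp' using hdiff
  choose p hp using fun ν i => Bombieri.exists_map_subtype_eq (hp'K ν i)
  obtain ⟨ρ, hρ, R₀, hgrow⟩ := Bombieri.exists_growth (fun i => (hent i).continuous) horder
  refine Bombieri.exists_hypersurface (K := K) (p := p) hn hnd hent (fun ν i z => ?_)
    (fun P hP => ?_) hρ hgrow (S := {w | ∀ i, f i w ∈ K}) fun w hw i => ⟨⟨f i w, hw i⟩, rfl⟩
  · rw [hp', ← hp, MvPolynomial.eval_map, MvPolynomial.aeval_def]
  · refine (MvPolynomial.map_injective _ (algebraMap K ℂ).injective) ?_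
    rw [map_zero]
    refine halgind _ (fun m => ?_) fun z => ?_
    · rw [MvPolynomial.coeff_map]
      exact (MvPolynomial.coeff m P).2
    · rw [MvPolynomial.eval_map, ← MvPolynomial.aeval_def, hP z]
end

section
/- Let L be a positive integer, let φ_1, …, φ_L be entire functions, let ζ_1, …, ζ_L be complex numbers, let σ_1, …, σ_L be nonnegative integers, and let r, R be real numbers with 0 < r ≤ R and |ζ_μ| ≤ r for 1 ≤ μ ≤ L. Let Δ be the determinant of the L × L matrix whose (λ, μ) entry is the σ_μ-th derivative of φ_λ evaluated at ζ_μ. Then |Δ| ≤ (R/r)^{−L(L−1)/2 + σ_1 + ⋯ + σ_L} · L! · ∏_{λ=1}^{L} max_{1 ≤ μ ≤ L} sup_{|z| = R} |(d/dz)^{σ_μ} φ_λ(z)|. -/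
/-- `sup_{|z| = R} |(d/dz)^σ φ(z)|`. -/
noncomputable def SupDerivOnCircle (σ : ℕ) (φ : ℂ → ℂ) (R : ℝ) : ℝ :=
  sSup ((fun z => ‖iteratedDeriv σ φ z‖) '' {z : ℂ | ‖z‖ = R})

open Finset

/-- Distinct natural numbers indexed by `Fin L` add up to at least `0 + 1 + ⋯ + (L - 1)`. -/
lemma sum_range_le_sum_of_injective {L : ℕ} {f : Fin L → ℕ} (hf : Function.Injective f) :
    ∑ i ∈ range L, i ≤ ∑ i, f i := by
  have hg : Function.Injective fun i => (f i : ℤ) := Nat.cast_injective.comp hf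
  have h := Finset.sum_range_le_sum (s := univ.image fun i => (f i : ℤ)) (c := 0) (by simp)
  rw [card_image_of_injective _ hg, sum_image hg.injOn] at h
  simp only [card_univ, Fintype.card_fin, zero_add] at h
  rw [← Nat.cast_sum, ← Nat.cast_sum] at h
  exact Nat.cast_le.1 h

/-- Taylor expansion of an entire function at `0`, with an entire remainder. -/
lemma Differentiable.exists_eq_sum_add_pow_mul {φ : ℂ → ℂ} (hφ : Differentiable ℂ φ) (M : ℕ) :
    ∃ (a : ℕ → ℂ) (h : ℂ → ℂ), Differentiable ℂ h ∧
      ∀ z, φ z = ∑ n ∈ range M, a n * z ^ n + z ^ M * h z := by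
  induction M with
  | zero => exact ⟨0, φ, hφ, by simp⟩
  | succ M ih =>
    obtain ⟨a, h, hh, e⟩ := ih
    refine ⟨fun n => if n = M then h 0 else a n, dslope h 0, ?_, fun z => ?_⟩
    · rw [← differentiableOn_univ] at hh ⊢
      exact (Complex.differentiableOn_dslope Filter.univ_mem).2 hh
    · have hz : z * dslope h 0 z = h z - h 0 := by simpa using sub_smul_dslope h 0 z
      rw [sum_range_succ, e z, sum_congr rfl fun n hn =>
        show (if n = M then h 0 else a n) * z ^ n = a n * z ^ n by
          rw [if_neg (mem_range.1 hn).ne]]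
      simp only [if_true]
      linear_combination (-z ^ M) * hz

/-- Each differentiation lowers the order of vanishing at `0` by at most one. -/
lemma exists_iteratedDeriv_pow_mul {h : ℂ → ℂ} (hh : Differentiable ℂ h)
    (M s : ℕ) : ∃ k : ℂ → ℂ, Differentiable ℂ k ∧
      iteratedDeriv s (fun z => z ^ M * h z) = fun z => z ^ (M - s) * k z := by
  induction s with
  | zero => exact ⟨h, hh, by simp⟩
  | succ s ih =>
    obtain ⟨k, hk, e⟩ := ih
    have hk' := hk.deriv
    rw [iteratedDeriv_succ, e]
    have hd (z : ℂ) : deriv (fun z => z ^ (M - s) * k z) z =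
        (M - s : ℕ) * z ^ (M - s - 1) * k z + z ^ (M - s) * deriv k z :=
      ((hasDerivAt_pow (M - s) z).mul (hk z).hasDerivAt).deriv
    rcases Nat.eq_zero_or_pos (M - s) with h0 | h0
    · refine ⟨deriv k, hk', ?_⟩
      have h1 : M - (s + 1) = 0 := by omega
      funext z
      simp [h0, h1]
    · refine ⟨fun z => (M - s : ℕ) * k z + z * deriv k z, by fun_prop, ?_⟩
      funext z
      obtain ⟨m, hm⟩ : ∃ m, M - s = m + 1 := ⟨M - s - 1, by omega⟩
      have h1 : M - (s + 1) = m := by omega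
      rw [hd, hm, h1, Nat.add_sub_cancel]
      ring

/-- Taylor expansion at `z = 0` of `z ^ s * φ⁽ˢ⁾ (z * c)`: its coefficients factor into a part
depending on `φ` and a part depending on `(s, c)`. -/
lemma exists_pow_mul_iteratedDeriv_eq {φ h : ℂ → ℂ} {a : ℕ → ℂ} {M : ℕ}
    (hh : Differentiable ℂ h) (e : ∀ z, φ z = ∑ n ∈ range M, a n * z ^ n + z ^ M * h z)
    (s : ℕ) (c : ℂ) : ∃ H : ℂ → ℂ, Differentiable ℂ H ∧ ∀ z,
      z ^ s * iteratedDeriv s φ (z * c) =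
        ∑ n ∈ range M, z ^ n * (a n * (n.descFactorial s * c ^ (n - s))) + z ^ M * H z := by
  obtain ⟨k, hk, ek⟩ := exists_iteratedDeriv_pow_mul hh M s
  refine ⟨fun z => z ^ (s + (M - s) - M) * c ^ (M - s) * k (z * c), by fun_prop, fun z => ?_⟩
  have hp (n : ℕ) : Differentiable ℂ fun w : ℂ => a n * w ^ n := by fun_prop
  have hsum : Differentiable ℂ fun w : ℂ => ∑ n ∈ range M, a n * w ^ n := by fun_prop
  have hrem : Differentiable ℂ fun w : ℂ => w ^ M * h w := by fun_prop
  rw [funext e, iteratedDeriv_fun_add hsum.contDiff.contDiffAt hrem.contDiff.contDiffAt,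
    iteratedDeriv_fun_sum fun n _ => (hp n).contDiff.contDiffAt, ek, mul_add, mul_sum]
  congr 1
  · refine sum_congr rfl fun n _ => ?_
    rw [iteratedDeriv_const_mul_field, iteratedDeriv_pow]
    rcases lt_or_ge n s with hn | hn
    · simp [Nat.descFactorial_eq_zero_iff_lt.2 hn]
    · rw [← pow_mul_pow_sub z hn, mul_pow]
      ring
  · have : z ^ s * z ^ (M - s) = z ^ M * z ^ (s + (M - s) - M) := by
      rw [← pow_add, ← pow_add]
      congr 1
      omega
    simp only [mul_pow]
    linear_combination (c ^ (M - s) * k (z * c)) * this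

lemma Differentiable.matrix_det {L : ℕ} {A : ℂ → Matrix (Fin L) (Fin L) ℂ}
    (hA : ∀ i j, Differentiable ℂ fun z => A z i j) : Differentiable ℂ fun z => (A z).det := by
  simp only [Matrix.det_apply']
  fun_prop

/-- If the `n`-th Taylor coefficients of all the rows are proportional to one vector `w n`, then the
determinant vanishes at `0` to order at least `0 + 1 + ⋯ + (L - 1)`. -/
lemma exists_det_eq_pow_mul {L : ℕ} (G : ℂ → Matrix (Fin L) (Fin L) ℂ) (a : Fin L → ℕ → ℂ)
    (w : ℕ → Fin L → ℂ) (H : Fin L → Fin L → ℂ → ℂ) (hH : ∀ i j, Differentiable ℂ (H i j))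
    {M : ℕ} (hM : M = ∑ i ∈ range L, i)
    (hG : ∀ z i j, G z i j = ∑ n ∈ range M, z ^ n * (a i n * w n j) + z ^ M * H i j z) :
    ∃ K : ℂ → ℂ, Differentiable ℂ K ∧ ∀ z, (G z).det = z ^ M * K z := by
  let v : ℂ → Fin L → ℕ → Fin L → ℂ := fun z i n j => if n < M then a i n * w n j else H i j z
  have hv (i n j) : Differentiable ℂ fun z => v z i n j := by
    by_cases hn : n < M
    · simp [v, hn]
    · simpa [v, hn] using hH i j
  have hrow (z) : G z = fun i => ∑ n ∈ range (M + 1), z ^ n • v z i n := by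
    funext i j
    rw [hG, sum_range_succ, Pi.add_apply, Finset.sum_apply]
    congr 1
    · exact sum_congr rfl fun n hn => by simp [v, mem_range.1 hn]
    · simp [v]
  have hdet (z) : (G z).det = ∑ f ∈ Fintype.piFinset fun _ : Fin L => range (M + 1),
      z ^ (∑ i, f i) * (Matrix.of fun i => v z i (f i)).det := by
    rw [hrow]
    refine (MultilinearMap.map_sum_finset (Matrix.detRowAlternating (R := ℂ)).toMultilinearMap
      (fun i n => z ^ n • v z i n) fun _ => range (M + 1)).trans (sum_congr rfl fun f _ => ?_)
    rw [MultilinearMap.map_smul_univ, prod_pow_eq_pow_sum]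
    rfl
  have hterm (f : Fin L → ℕ) (z) : z ^ (∑ i, f i) * (Matrix.of fun i => v z i (f i)).det =
      z ^ M * (z ^ (∑ i, f i - M) * (Matrix.of fun i => v z i (f i)).det) := by
    by_cases hf : M ≤ ∑ i, f i
    · rw [← mul_assoc, pow_mul_pow_sub z hf]
    · suffices h0 : (Matrix.of fun i => v z i (f i)).det = 0 by simp [h0]
      have hlt (i) : f i < M := (single_le_sum (fun _ _ => zero_le) (mem_univ i)).trans_lt
        (not_le.1 hf)
      have hinj : ¬ Function.Injective f := fun h =>
        hf (hM ▸ sum_range_le_sum_of_injective h)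
      simp only [Function.Injective, not_forall] at hinj
      obtain ⟨i, j, hij, hne⟩ := hinj
      have hfac : (Matrix.of fun i => v z i (f i)) =
          Matrix.of fun i j => a i (f i) * (Matrix.of fun i => w (f i)) i j := by
        ext i j
        simp [v, hlt]
      rw [hfac, Matrix.det_mul_column, Matrix.det_zero_of_row_eq hne, mul_zero]
      funext k
      simp [hij]
  refine ⟨fun z => ∑ f ∈ Fintype.piFinset fun _ : Fin L => range (M + 1),
    z ^ (∑ i, f i - M) * (Matrix.of fun i => v z i (f i)).det, ?_, fun z => ?_⟩
  · have hd (f : Fin L → ℕ) : Differentiable ℂ fun z => (Matrix.of fun i => v z i (f i)).det :=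
      Differentiable.matrix_det fun i j => hv i (f i) j
    fun_prop
  · rw [hdet, mul_sum]
    exact sum_congr rfl fun f _ => hterm f z

/-- The maximum modulus principle on a closed disc centred at `0`. -/
lemma Differentiable.norm_le_of_norm_le_on_circle {f : ℂ → ℂ} (hf : Differentiable ℂ f) {R C : ℝ}
    (hR : 0 < R) (hC : ∀ z, ‖z‖ = R → ‖f z‖ ≤ C) {z : ℂ} (hz : ‖z‖ ≤ R) : ‖f z‖ ≤ C := by
  refine Complex.norm_le_of_forall_mem_frontier_norm_le (U := Metric.ball 0 R)
    Metric.isBounded_ball hf.diffContOnCl (fun w hw => hC w ?_) ?_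
  · simpa [frontier_ball _ hR.ne'] using hw
  · simpa [closure_ball _ hR.ne'] using hz

lemma Differentiable.iteratedDeriv {f : ℂ → ℂ} (hf : Differentiable ℂ f) (n : ℕ) :
    Differentiable ℂ (iteratedDeriv n f) :=
  hf.contDiff.differentiable_iteratedDeriv n (WithTop.coe_lt_top _)

lemma norm_iteratedDeriv_le_supDerivOnCircle {f : ℂ → ℂ} (hf : Differentiable ℂ f) (s : ℕ)
    {R : ℝ} (hR : 0 < R) {z : ℂ} (hz : ‖z‖ ≤ R) :
    ‖iteratedDeriv s f z‖ ≤ SupDerivOnCircle s f R := by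
  refine (hf.iteratedDeriv s).norm_le_of_norm_le_on_circle hR (fun w hw => ?_) hz
  refine le_csSup ?_ ⟨w, hw, rfl⟩
  have hc : IsCompact {z : ℂ | ‖z‖ = R} := by
    simpa [Metric.sphere] using isCompact_sphere (0 : ℂ) R
  exact (hc.image (hf.iteratedDeriv s).continuous.norm).bddAbove

lemma norm_det_le_factorial_mul_prod {L : ℕ} {A : Matrix (Fin L) (Fin L) ℂ} {b : Fin L → ℝ}
    (hA : ∀ i j, ‖A i j‖ ≤ b i) : ‖A.det‖ ≤ L.factorial * ∏ i, b i := by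
  rw [← Matrix.det_transpose, Matrix.det_apply]
  refine (norm_sum_le _ _).trans ?_
  refine (sum_le_sum (g := fun _ => ∏ i, b i) fun τ _ => ?_).trans_eq ?_
  · have : ‖Equiv.Perm.sign τ • ∏ i, A.transpose (τ i) i‖ = ∏ i, ‖A i (τ i)‖ := by
      rcases Int.units_eq_one_or (Equiv.Perm.sign τ) with h | h <;> simp [h]
    rw [this]
    exact prod_le_prod (fun _ _ => norm_nonneg _) fun i _ => hA i _
  · simp [Fintype.card_perm]

/-- **Upper bound for interpolation determinants.** Let `φ₁, …, φ_L` be entire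
functions, `ζ₁, …, ζ_L` complex numbers with `|ζ_μ| ≤ r`, `σ₁, …, σ_L`
nonnegative integers, and `0 < r ≤ R`. Then the determinant
`Δ = det((d/dz)^{σ_μ} φ_λ (ζ_μ))` satisfies
`|Δ| ≤ (R/r)^{-L(L-1)/2 + σ₁+⋯+σ_L} · L! · ∏_λ max_μ sup_{|z|=R} |(d/dz)^{σ_μ} φ_λ(z)|`. -/
theorem interpolation_determinant_bound
    (L : ℕ) (hL : 0 < L)
    (φ : Fin L → ℂ → ℂ) (hφ : ∀ lam, Differentiable ℂ (φ lam))
    (ζ : Fin L → ℂ) (σ : Fin L → ℕ)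
    (r R : ℝ) (hr : 0 < r) (hrR : r ≤ R)
    (hζ : ∀ μ, ‖ζ μ‖ ≤ r) :
    ‖Matrix.det (Matrix.of fun lam μ : Fin L =>
        iteratedDeriv (σ μ) (φ lam) (ζ μ))‖ ≤
      (R / r) ^ (-(L : ℝ) * ((L : ℝ) - 1) / 2 + ∑ μ, (σ μ : ℝ)) *
        (Nat.factorial L) *
        ∏ lam, (Finset.univ.sup'
          (⟨⟨0, hL⟩, Finset.mem_univ _⟩ : (Finset.univ : Finset (Fin L)).Nonempty)
          fun μ => SupDerivOnCircle (σ μ) (φ lam) R) := by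
  set B : ℝ := ∏ lam, (univ.sup'
    (⟨⟨0, hL⟩, mem_univ _⟩ : (univ : Finset (Fin L)).Nonempty)
    fun μ => SupDerivOnCircle (σ μ) (φ lam) R)
  obtain ⟨M, hM⟩ : ∃ M, M = ∑ i ∈ range L, i := ⟨_, rfl⟩
  choose a h hh e using fun lam => (hφ lam).exists_eq_sum_add_pow_mul M
  choose H hH hexp using fun lam μ =>
    exists_pow_mul_iteratedDeriv_eq (hh lam) (e lam) (σ μ) (ζ μ)
  let A : ℂ → Matrix (Fin L) (Fin L) ℂ := fun z =>
    Matrix.of fun lam μ => iteratedDeriv (σ μ) (φ lam) (z * ζ μ)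
  obtain ⟨K, hK, hdet⟩ := exists_det_eq_pow_mul
    (fun z => Matrix.of fun lam μ => z ^ σ μ * A z lam μ) a
    (fun n μ => n.descFactorial (σ μ) * ζ μ ^ (n - σ μ)) H hH hM fun z lam μ => hexp lam μ z
  have hAK (z) : z ^ (∑ μ, σ μ) * (A z).det = z ^ M * K z := by
    rw [← hdet, Matrix.det_mul_row, prod_pow_eq_pow_sum]
  have hR : 0 < R := hr.trans_le hrR
  have hρ : 0 < R / r := div_pos hR hr
  have hA (z : ℂ) (hz : ‖z‖ = R / r) : ‖(A z).det‖ ≤ L.factorial * B := by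
    refine norm_det_le_factorial_mul_prod fun lam μ => ?_
    refine (norm_iteratedDeriv_le_supDerivOnCircle (hφ lam) (σ μ) hR ?_).trans
      (le_sup' (fun μ => SupDerivOnCircle (σ μ) (φ lam) R) (mem_univ μ))
    rw [norm_mul, hz]
    calc R / r * ‖ζ μ‖ ≤ R / r * r := by gcongr; exact hζ μ
      _ = R := div_mul_cancel₀ R hr.ne'
  have hMreal : -(L : ℝ) * ((L : ℝ) - 1) / 2 = -(M : ℝ) := by
    have h2 : (M : ℝ) * 2 = L * ((L : ℝ) - 1) := by
      rw [← Nat.cast_pred hL, hM]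
      exact_mod_cast sum_range_id_mul_two L
    linarith
  have hpow : (R / r) ^ (-(L : ℝ) * ((L : ℝ) - 1) / 2 + ∑ μ, (σ μ : ℝ)) =
      (R / r) ^ (∑ μ, σ μ) / (R / r) ^ M := by
    rw [hMreal, ← Nat.cast_sum, neg_add_eq_sub, Real.rpow_sub hρ, Real.rpow_natCast,
      Real.rpow_natCast]
  have hbound (z : ℂ) (hz : ‖z‖ = R / r) :
      ‖K z‖ ≤ (R / r) ^ (∑ μ, σ μ) / (R / r) ^ M * L.factorial * B := by
    have hn := congrArg norm (hAK z)
    rw [norm_mul, norm_mul, norm_pow, norm_pow, hz] at hn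
    rw [mul_assoc, div_mul_eq_mul_div, le_div_iff₀ (pow_pos hρ M), mul_comm, ← hn]
    gcongr
    exact hA z hz
  have h1 := hAK 1
  simp only [one_pow, one_mul, A] at h1
  rw [hpow, h1]
  exact hK.norm_le_of_norm_le_on_circle hρ hbound (by simpa using (one_le_div hr).2 hrR)
end
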